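/- arXiv:1907.13398 — 3 statements merged into one kernel-verified Lean document; each statement's English description precedes it below -/
import Mathlib

section
/- Multiplicative Sewing Lemma in a Banach algebra: Let (A, |·|) be a unital Banach algebra with unit 𝟙, let p be a norm on A, and assume that (A, |·|, d_p) is a submultiplicative monoid for the metric d_p(a,b) = p(a − b) (with multiplication of A as the monoid operation). Let μ : Δ₂ → (A, p) be continuous with μ_{t,t} = 𝟙 for all t ∈ [0,T], and assume there exist controls ω̄ and ω, a constant C₀ > 0 and z > 1 such that |μ_{t,s}| ≤ exp(ω̄(t,s)) for all (t,s) ∈ Δ₂ and p(μ_{t,s} − μ_{t,u} μ_{u,s}) ≤ C₀ ω(t,s)^z for all (t,u,s) ∈ Δ₃. Then there exists a unique multiplicative and continuous map φ : Δ₂ → (A, p) such that, for every (t,s) ∈ Δ₂, |φ_{t,s}| ≤ exp(ω̄(t,s)) and p(φ_{t,s} − μ_{t,s}) ≤ C ω(t,s)^z, where C depends only on z, T, C₀ and ω̄. -/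
/-!
The map `φ` is the limit of the products of `μ` along the dyadic grids of `[0,T]`, clamped to
`[s,t]` (`grid`, `gridProd`).

The main estimate is `maximal`: for every partition of `[s,t]` the product of `μ` along it is within
`C₁ * exp (ωb t s) * ω t s ^ z` of `μ t s`. It is proved by induction on the number of intervals.
Some interval of the partition contains a midpoint of `[s,t]` for `ω`, so `ω` is at most halved on
the two remaining pieces; replacing their products by `μ` costs `2 * (1/2)^z * C₁` and merging the
three resulting factors costs `2 * C₀`. As `2 * (1/2)^z < 1`, a constant `C₁` depending only on `z`
and `C₀` closes the induction, and `C = C₁ * exp (ωb T 0)` is the constant of the theorem. The norms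
of the other factors are absorbed in `exp (ωb t s)` because `ωb` is superadditive.

Applying this on each interval of a coarse grid and telescoping, two grid products differ by a
constant times `∑ ω ^ z ≤ (max ω) ^ (z - 1) * ω T 0`, which tends to zero with the mesh, uniformly in
`(t,s)` (`gridProd_cauchy`). Completeness of norm balls gives `φ` with its norm bound, and uniform
convergence gives continuity. Grid products are multiplicative up to the defect of the single
interval containing the intermediate point (`gridProd_split`), so `φ` is multiplicative. The same
telescoping estimate (`pathProd_diff`), applied to two multiplicative maps close to `μ`, gives
uniqueness.
-/

/- Basic notions: two- and three-parameter simplices over `[a,b]`, partitions,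
   controls, products of two-parameter functions along partitions, growth rates. -/

namespace MultSewing

/-- `Mem2 a b s t` : `(t,s)` belongs to the simplex `Δ₂` over `[a,b]`, i.e. `a ≤ s ≤ t ≤ b`. -/
def Mem2 (a b s t : ℝ) : Prop := a ≤ s ∧ s ≤ t ∧ t ≤ b

/-- `Mem3 a b s u t` : `(t,u,s)` belongs to the simplex `Δ₃` over `[a,b]`. -/
def Mem3 (a b s u t : ℝ) : Prop := a ≤ s ∧ s ≤ u ∧ u ≤ t ∧ t ≤ b

/-- A partition `s = p 0 < p 1 < ⋯ < p k = t` of `[s,t]`. -/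
structure IsPartition (s t : ℝ) (k : ℕ) (p : ℕ → ℝ) : Prop where
  pos : 0 < k
  first : p 0 = s
  last : p k = t
  mono : ∀ i < k, p i < p (i + 1)

/-- The mesh of the partition is at most `δ`. -/
def MeshLE (k : ℕ) (p : ℕ → ℝ) (δ : ℝ) : Prop := ∀ i < k, p (i + 1) - p i ≤ δ

/-- A control function on the simplex over `[a,b]` (arguments: `ω t s` with `s ≤ t`). -/
structure IsControl (a b : ℝ) (ω : ℝ → ℝ → ℝ) : Prop where
  nonneg : ∀ t s, 0 ≤ ω t s
  cont : ContinuousOn (fun q : ℝ × ℝ => ω q.1 q.2) {q : ℝ × ℝ | Mem2 a b q.2 q.1}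
  diag : ∀ s, a ≤ s → s ≤ b → ω s s = 0
  superadd : ∀ s r t, a ≤ s → s ≤ r → r ≤ t → t ≤ b → ω t r + ω r s ≤ ω t s

/-- The product `μ_{p k, p (k-1)} ∘ ⋯ ∘ μ_{p 1, p 0}` (later intervals on the left). -/
def partProd {M : Type*} [Monoid M] (μ : ℝ → ℝ → M) (p : ℕ → ℝ) : ℕ → M
  | 0 => 1
  | k + 1 => μ (p (k + 1)) (p k) * partProd μ p k

/-- Admissible growth rate: continuous, nonnegative, increasing in the first argument and
decreasing in the second. -/
structure IsGrowthRate (a b : ℝ) (ε : ℝ → ℝ → ℝ) : Prop where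
  nonneg : ∀ t s, 0 ≤ ε t s
  cont : ContinuousOn (fun q : ℝ × ℝ => ε q.1 q.2) {q : ℝ × ℝ | Mem2 a b q.2 q.1}
  mono_fst : ∀ s t t', Mem2 a b s t → t ≤ t' → t' ≤ b → ε t s ≤ ε t' s
  anti_snd : ∀ s s' t, Mem2 a b s t → s ≤ s' → s' ≤ t → ε t s' ≤ ε t s

/-- `μ` has moderate growth with growth rate `ε`: `|μ^π_{t,s}| ≤ ε t s` for
every `(t,s) ∈ Δ₂` and every partition `π` of `[s,t]`. -/
def ModerateGrowth {M : Type*} [Monoid M] (a b : ℝ) (nm : M → ℝ)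
    (μ : ℝ → ℝ → M) (ε : ℝ → ℝ → ℝ) : Prop :=
  ∀ s t k p, Mem2 a b s t → IsPartition s t k p → nm (partProd μ p k) ≤ ε t s

/-- The Riemann zeta value `ζ(z) = Σ_{k ≥ 1} k^{-z}` (as a real series). -/
noncomputable def zetaSum (z : ℝ) : ℝ := ∑' n : ℕ, ((n : ℝ) + 1) ^ (-z)

end MultSewing

namespace MultSewing

/-- Continuity on the simplex `Δ₂` over `[0,T]` with respect to the metric induced
by the norm `p`. -/
def PContOn {A : Type*} [AddCommGroup A] (T : ℝ) (p : A → ℝ) (μ : ℝ → ℝ → A) : Prop :=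
  ∀ s t, Mem2 0 T s t → ∀ ε > (0:ℝ), ∃ δ > (0:ℝ), ∀ s' t', Mem2 0 T s' t' →
    |s' - s| < δ → |t' - t| < δ → p (μ t' s' - μ t s) < ε

/-! ### Ordered products -/

/-- The ordered product `a (k-1) * ⋯ * a 1 * a 0`. -/
def seqProd {A : Type*} [Monoid A] (a : ℕ → A) : ℕ → A
  | 0 => 1
  | k + 1 => a k * seqProd a k

/-- The product of `f` along the points `q 0, …, q k`, later intervals on the left. -/
def pathProd {A : Type*} [Monoid A] (f : ℝ → ℝ → A) (q : ℕ → ℝ) (k : ℕ) : A :=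
  seqProd (fun i => f (q (i + 1)) (q i)) k

/-- The properties of the auxiliary norm `p` used in the estimates: a symmetric subadditive
functional satisfying the two submultiplicativity inequalities with respect to `‖·‖`. -/
structure SubNorm {A : Type*} [NormedRing A] (p : A → ℝ) : Prop where
  nonneg : ∀ x, 0 ≤ p x
  zero : p 0 = 0
  symm : ∀ x y, p (x - y) = p (y - x)
  add : ∀ x y, p (x + y) ≤ p x + p y
  mul_right : ∀ x c, p (x * c) ≤ p x * ‖c‖
  mul_left : ∀ c x, p (c * x) ≤ ‖c‖ * p x

lemma SubNorm.tri {A : Type*} [NormedRing A] {p : A → ℝ} (hp : SubNorm p) (x y z : A) :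
    p (x - z) ≤ p (x - y) + p (y - z) := by
  have := hp.add (x - y) (y - z)
  rwa [sub_add_sub_cancel] at this

lemma SubNorm.mul_sub_mul {A : Type*} [NormedRing A] {p : A → ℝ} (hp : SubNorm p)
    (a b a' b' : A) : p (a * b - a' * b') ≤ p (a - a') * ‖b‖ + ‖a'‖ * p (b - b') := by
  have h : a * b - a' * b' = (a - a') * b + a' * (b - b') := by noncomm_ring
  rw [h]
  exact (hp.add _ _).trans (add_le_add (hp.mul_right _ _) (hp.mul_left _ _))

section seqProd

variable {A : Type*} [NormedRing A]

lemma seqProd_add (a : ℕ → A) (m n : ℕ) :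
    seqProd a (m + n) = seqProd (fun i => a (m + i)) n * seqProd a m := by
  induction n with
  | zero => simp [seqProd]
  | succ n ih => rw [← add_assoc, seqProd, seqProd, ih, mul_assoc]

lemma seqProd_mul (a : ℕ → A) (N M : ℕ) :
    seqProd a (N * M) = seqProd (fun j => seqProd (fun i => a (j * M + i)) M) N := by
  induction N with
  | zero => simp [seqProd]
  | succ N ih => rw [Nat.succ_mul, seqProd_add, ih, seqProd]

lemma norm_seqProd_le [NormOneClass A] (a : ℕ → A) (w : ℕ → ℝ) (k : ℕ) (h : ∀ i < k, ‖a i‖ ≤ Real.exp (w i)) :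
    ‖seqProd a k‖ ≤ Real.exp (∑ i ∈ Finset.range k, w i) := by
  induction k with
  | zero => simp [seqProd]
  | succ k ih =>
    rw [seqProd, Finset.sum_range_succ, add_comm, Real.exp_add]
    refine (norm_mul_le _ _).trans ?_
    exact mul_le_mul (h k (by omega)) (ih fun i hi => h i (by omega)) (norm_nonneg _)
      (Real.exp_pos _).le

/-- Telescoping: replacing the factors one at a time, the `p`-distance of two ordered products
is controlled by the sum of the `p`-distances of their factors. -/
lemma seqProd_diff [NormOneClass A] {p : A → ℝ} (hp : SubNorm p) (a b : ℕ → A) (w : ℕ → ℝ) (k : ℕ)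
    (hw : ∀ i, 0 ≤ w i)
    (ha : ∀ i < k, ‖a i‖ ≤ Real.exp (w i)) (hb : ∀ i < k, ‖b i‖ ≤ Real.exp (w i)) :
    p (seqProd a k - seqProd b k) ≤
      Real.exp (∑ i ∈ Finset.range k, w i) * ∑ i ∈ Finset.range k, p (a i - b i) := by
  induction k with
  | zero => simp [seqProd, hp.zero]
  | succ k ih =>
    have ih' := ih (fun i hi => ha i (by omega)) (fun i hi => hb i (by omega))
    rw [seqProd, seqProd, Finset.sum_range_succ, Finset.sum_range_succ, Real.exp_add]
    set S := Real.exp (∑ i ∈ Finset.range k, w i) with hS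
    set D := ∑ i ∈ Finset.range k, p (a i - b i)
    have hSpos : 0 < S := Real.exp_pos _
    have hA : ‖seqProd a k‖ ≤ S := norm_seqProd_le a w k fun i hi => ha i (by omega)
    have hwk : 1 ≤ Real.exp (w k) := Real.one_le_exp (hw k)
    have h1 : p (a k - b k) * ‖seqProd a k‖ ≤ S * Real.exp (w k) * p (a k - b k) := by
      have : p (a k - b k) * ‖seqProd a k‖ ≤ p (a k - b k) * S :=
        mul_le_mul_of_nonneg_left hA (hp.nonneg _)
      nlinarith [mul_nonneg (mul_nonneg hSpos.le (hp.nonneg (a k - b k))) (sub_nonneg.2 hwk)]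
    have h2 : ‖b k‖ * p (seqProd a k - seqProd b k) ≤ Real.exp (w k) * (S * D) :=
      mul_le_mul (hb k (by omega)) ih' (hp.nonneg _) (Real.exp_pos _).le
    have := hp.mul_sub_mul (a k) (seqProd a k) (b k) (seqProd b k)
    linarith

end seqProd

/-! ### Controls along monotone paths -/

/-- A monotone sequence of points of `[0,T]`; repeated points are allowed. -/
structure IsPath (T : ℝ) (q : ℕ → ℝ) : Prop where
  mono : Monotone q
  lower : ∀ i, 0 ≤ q i
  upper : ∀ i, q i ≤ T

lemma IsPath.mem2 {T : ℝ} {q : ℕ → ℝ} (hq : IsPath T q) {i j : ℕ} (h : i ≤ j) :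
    Mem2 0 T (q i) (q j) := ⟨hq.lower i, hq.mono h, hq.upper j⟩

lemma IsPath.comp {T : ℝ} {q : ℕ → ℝ} (hq : IsPath T q) {e : ℕ → ℕ} (he : Monotone e) :
    IsPath T (fun i => q (e i)) :=
  ⟨hq.mono.comp he, fun _ => hq.lower _, fun _ => hq.upper _⟩

lemma IsControl.superadd_path {T : ℝ} {ω : ℝ → ℝ → ℝ} (hω : IsControl 0 T ω) {q : ℕ → ℝ}
    (hq : IsPath T q) {i j k : ℕ} (hij : i ≤ j) (hjk : j ≤ k) :
    ω (q k) (q j) + ω (q j) (q i) ≤ ω (q k) (q i) :=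
  hω.superadd _ _ _ (hq.lower i) (hq.mono hij) (hq.mono hjk) (hq.upper k)

lemma IsControl.sum_le {T : ℝ} {ω : ℝ → ℝ → ℝ} (hω : IsControl 0 T ω) {q : ℕ → ℝ}
    (hq : IsPath T q) (k : ℕ) :
    ∑ i ∈ Finset.range k, ω (q (i + 1)) (q i) ≤ ω (q k) (q 0) := by
  induction k with
  | zero => simp [hω.diag _ (hq.lower 0) (hq.upper 0)]
  | succ k ih =>
    rw [Finset.sum_range_succ]
    have := hω.superadd_path hq (Nat.zero_le k) (Nat.le_succ k)
    simp only [Nat.succ_eq_add_one] at this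
    linarith

lemma IsControl.le_total {T : ℝ} {ω : ℝ → ℝ → ℝ} (hω : IsControl 0 T ω) {s t : ℝ}
    (h : Mem2 0 T s t) : ω t s ≤ ω T 0 := by
  obtain ⟨h0, h1, h2⟩ := h
  have a := hω.superadd 0 s t le_rfl h0 h1 h2
  have b := hω.superadd 0 t T le_rfl (h0.trans h1) h2 le_rfl
  linarith [hω.nonneg s 0, hω.nonneg T t]

/-- Since `z > 1`, the sum of the `ω ^ z` over a partition is small as soon as `ω` is small on
each of its intervals. -/
lemma IsControl.sum_rpow_le {T : ℝ} {ω : ℝ → ℝ → ℝ} (hω : IsControl 0 T ω) {q : ℕ → ℝ}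
    (hq : IsPath T q) (k : ℕ) {z η : ℝ} (hz : 1 < z) (hη : 0 ≤ η)
    (h : ∀ i < k, ω (q (i + 1)) (q i) ≤ η) :
    ∑ i ∈ Finset.range k, ω (q (i + 1)) (q i) ^ z ≤ η ^ (z - 1) * ω T 0 := by
  have h1 : ∑ i ∈ Finset.range k, ω (q (i + 1)) (q i) ^ z ≤
      ∑ i ∈ Finset.range k, η ^ (z - 1) * ω (q (i + 1)) (q i) := by
    refine Finset.sum_le_sum fun i hi => ?_
    have hx := hω.nonneg (q (i + 1)) (q i)
    have e : ω (q (i + 1)) (q i) ^ z =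
        ω (q (i + 1)) (q i) ^ (z - 1) * ω (q (i + 1)) (q i) := by
      conv_lhs => rw [show z = (z - 1) + 1 by ring]
      rw [Real.rpow_add_one' hx (by linarith)]
    rw [e]
    exact mul_le_mul_of_nonneg_right
      (Real.rpow_le_rpow hx (h i (Finset.mem_range.1 hi)) (by linarith)) hx
  refine h1.trans ?_
  rw [← Finset.mul_sum]
  refine mul_le_mul_of_nonneg_left ?_ (Real.rpow_nonneg hη _)
  exact (hω.sum_le hq k).trans (hω.le_total (hq.mem2 (Nat.zero_le k)))

/-- By uniform continuity a control is uniformly small on short intervals. -/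
lemma IsControl.small {T : ℝ} {ω : ℝ → ℝ → ℝ} (hω : IsControl 0 T ω) {η : ℝ} (hη : 0 < η) :
    ∃ δ > 0, ∀ s t, Mem2 0 T s t → t - s < δ → ω t s ≤ η := by
  have hcl : IsClosed {q : ℝ × ℝ | Mem2 0 T q.2 q.1} := by
    simp only [Mem2]
    exact (isClosed_le continuous_const continuous_snd).inter
      ((isClosed_le continuous_snd continuous_fst).inter
        (isClosed_le continuous_fst continuous_const))
  have hcpt : IsCompact {q : ℝ × ℝ | Mem2 0 T q.2 q.1} := by
    refine IsCompact.of_isClosed_subset (isCompact_Icc (a := ((0 : ℝ), (0 : ℝ))) (b := (T, T)))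
      hcl ?_
    rintro ⟨t, s⟩ ⟨h0, h1, h2⟩
    simp only at h0 h1 h2
    exact ⟨⟨h0.trans h1, h0⟩, ⟨h2, h1.trans h2⟩⟩
  have huc := Metric.uniformContinuousOn_iff.1
    (hcpt.uniformContinuousOn_of_continuous hω.cont) η hη
  obtain ⟨δ, hδ, H⟩ := huc
  refine ⟨δ, hδ, fun s t h hts => ?_⟩
  have hs : Mem2 0 T s s := ⟨h.1, le_rfl, h.2.1.trans h.2.2⟩
  have := H (t, s) h (s, s) hs (by
    simp only [Prod.dist_eq, dist_self, Real.dist_eq]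
    rw [abs_of_nonneg (sub_nonneg.2 h.2.1)]
    simpa using ⟨hts, hδ⟩)
  simp only [Real.dist_eq, hω.diag s h.1 hs.2.2, sub_zero] at this
  exact (le_abs_self _).trans this.le

/-! ### The maximal inequality -/

section Estimates

variable {A : Type*} [NormedRing A]

lemma norm_pathProd_le [NormOneClass A] {T : ℝ} {ωb : ℝ → ℝ → ℝ} (hωb : IsControl 0 T ωb) {f : ℝ → ℝ → A}
    (hf : ∀ s t, Mem2 0 T s t → ‖f t s‖ ≤ Real.exp (ωb t s)) {q : ℕ → ℝ} (hq : IsPath T q)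
    (k : ℕ) : ‖pathProd f q k‖ ≤ Real.exp (ωb (q k) (q 0)) :=
  (norm_seqProd_le _ (fun i => ωb (q (i + 1)) (q i)) k
    fun i _ => hf _ _ (hq.mem2 (Nat.le_succ i))).trans (Real.exp_le_exp.2 (hωb.sum_le hq k))

/-- In a partition with at least one interval, some interval `[q i, q (i+1)]` contains a midpoint
of `[q 0, q k]` for the control, so that `ω` is at most halved on both sides of it. -/
lemma exists_mid {T : ℝ} {ω : ℝ → ℝ → ℝ} (hω : IsControl 0 T ω) {q : ℕ → ℝ} (hq : IsPath T q)
    {k : ℕ} (hk : 0 < k) : ∃ i < k, ω (q i) (q 0) ≤ ω (q k) (q 0) / 2 ∧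
      ω (q k) (q (i + 1)) ≤ ω (q k) (q 0) / 2 := by
  classical
  have hW := hω.nonneg (q k) (q 0)
  have hex : ∃ j, j + 1 ≥ k ∨ ω (q k) (q 0) / 2 < ω (q (j + 1)) (q 0) := ⟨k, Or.inl (by omega)⟩
  have hle : Nat.find hex ≤ k - 1 := Nat.find_min' hex (Or.inl (by omega))
  refine ⟨Nat.find hex, by omega, ?_, ?_⟩
  · rcases Nat.eq_zero_or_pos (Nat.find hex) with h0 | h0
    · rw [h0, hω.diag _ (hq.lower 0) (hq.upper 0)]
      linarith
    · have := Nat.find_min hex (m := Nat.find hex - 1) (by omega)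
      push Not at this
      have h2 := this.2
      rwa [Nat.sub_add_cancel h0] at h2
  · rcases Nat.find_spec hex with h | h
    · have : Nat.find hex + 1 = k := by omega
      rw [this, hω.diag _ (hq.lower k) (hq.upper k)]
      linarith
    · have := hω.superadd_path hq (Nat.zero_le (Nat.find hex + 1))
        (show Nat.find hex + 1 ≤ k by omega)
      linarith

/-- Maximal inequality, uniform over all partitions. The weight `exp (ωb)` on the right-hand side
absorbs the norms of the neighbouring factors, which makes the induction close with the constant
solving `C₁ = 2 * (1/2)^z * C₁ + 2 * C₀`. -/
lemma maximal [NormOneClass A] {p : A → ℝ} (hp : SubNorm p) {T : ℝ} {ωb ω : ℝ → ℝ → ℝ} (hωb : IsControl 0 T ωb)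
    (hω : IsControl 0 T ω) {μ : ℝ → ℝ → A} {C₀ C₁ z : ℝ} (hC₀ : 0 ≤ C₀) (hC₁ : 0 ≤ C₁)
    (hz : 0 < z)
    (hC : C₁ = 2 * (1 / 2) ^ z * C₁ + 2 * C₀)
    (h1 : ∀ t, 0 ≤ t → t ≤ T → μ t t = 1)
    (hμ : ∀ s t, Mem2 0 T s t → ‖μ t s‖ ≤ Real.exp (ωb t s))
    (hδ : ∀ s u t, Mem3 0 T s u t → p (μ t s - μ t u * μ u s) ≤ C₀ * ω t s ^ z) (k : ℕ) :
    ∀ q, IsPath T q → p (pathProd μ q k - μ (q k) (q 0)) ≤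
      C₁ * Real.exp (ωb (q k) (q 0)) * ω (q k) (q 0) ^ z := by
  induction k using Nat.strong_induction_on with
  | _ k ih =>
  intro q hq
  rcases Nat.eq_zero_or_pos k with rfl | hk
  · simp only [pathProd, seqProd, h1 _ (hq.lower 0) (hq.upper 0), sub_self, hp.zero]
    exact mul_nonneg (mul_nonneg hC₁ (Real.exp_pos _).le) (Real.rpow_nonneg (hω.nonneg _ _) _)
  obtain ⟨i, hik, hi1, hi2⟩ := exists_mid hω hq hk
  obtain ⟨l, rfl⟩ : ∃ l, k = (i + 1) + l := ⟨k - (i + 1), by omega⟩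
  have hq' : IsPath T (fun j => q (i + 1 + j)) := hq.comp fun a b h => by simpa using h
  have ihZ := ih i (by omega) q hq
  have ihX := ih l (by omega) _ hq'
  have hsplit : pathProd μ q (i + 1 + l) =
      pathProd μ (fun j => q (i + 1 + j)) l * (μ (q (i + 1)) (q i) * pathProd μ q i) := by
    simp only [pathProd]
    rw [seqProd_add]
    rfl
  have hnX := norm_pathProd_le hωb hμ hq i
  simp only [add_zero] at ihX
  have m1 := hq.mem2 (show i + 1 ≤ i + 1 + l by omega)
  have m2 := hq.mem2 (show i ≤ i + 1 by omega)
  have m3 := hq.mem2 (show 0 ≤ i by omega)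
  have hx := hμ _ _ m1
  have hy := hμ _ _ m2
  have d1 := hδ (q 0) (q i) (q (i + 1)) ⟨hq.lower 0, hq.mono (by omega), hq.mono (by omega),
    hq.upper _⟩
  have d2 := hδ (q 0) (q (i + 1)) (q (i + 1 + l)) ⟨hq.lower 0, hq.mono (by omega),
    hq.mono (by omega), hq.upper _⟩
  rw [hp.symm] at d1 d2
  have sb1 := hωb.superadd_path hq (show 0 ≤ i by omega) (show i ≤ i + 1 by omega)
  have sb2 := hωb.superadd_path hq (show 0 ≤ i + 1 by omega) (show i + 1 ≤ i + 1 + l by omega)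
  have so := hω.superadd_path hq (show 0 ≤ i + 1 by omega) (show i + 1 ≤ i + 1 + l by omega)
  have hW := hω.nonneg (q (i + 1 + l)) (q 0)
  have halfpow : (ω (q (i + 1 + l)) (q 0) / 2) ^ z =
      (1 / 2) ^ z * ω (q (i + 1 + l)) (q 0) ^ z := by
    rw [← Real.mul_rpow (by norm_num) hW]
    congr 1
    ring
  have r1 : ω (q (i + 1 + l)) (q (i + 1)) ^ z ≤ (1 / 2) ^ z * ω (q (i + 1 + l)) (q 0) ^ z := by
    rw [← halfpow]
    exact Real.rpow_le_rpow (hω.nonneg _ _) hi2 hz.le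
  have r2 : ω (q i) (q 0) ^ z ≤ (1 / 2) ^ z * ω (q (i + 1 + l)) (q 0) ^ z := by
    rw [← halfpow]
    exact Real.rpow_le_rpow (hω.nonneg _ _) hi1 hz.le
  have r3 : ω (q (i + 1)) (q 0) ^ z ≤ ω (q (i + 1 + l)) (q 0) ^ z :=
    Real.rpow_le_rpow (hω.nonneg _ _)
      (by linarith [hω.nonneg (q (i + 1 + l)) (q (i + 1))]) hz.le
  have nb0 := hωb.nonneg (q i) (q 0)
  have nb1 := hωb.nonneg (q (i + 1)) (q i)
  have nb2 := hωb.nonneg (q (i + 1 + l)) (q (i + 1))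
  rw [hsplit]
  set X := pathProd μ (fun j => q (i + 1 + j)) l
  set Z := pathProd μ q i
  set x := μ (q (i + 1 + l)) (q (i + 1))
  set y := μ (q (i + 1)) (q i)
  set v := μ (q i) (q 0)
  set w := μ (q (i + 1)) (q 0)
  set m := μ (q (i + 1 + l)) (q 0)
  set α := ωb (q (i + 1 + l)) (q (i + 1))
  set β := ωb (q (i + 1)) (q i)
  set γ := ωb (q i) (q 0)
  set Ω := ωb (q (i + 1 + l)) (q 0)
  set V := ω (q (i + 1 + l)) (q 0) ^ z
  have hV : 0 ≤ V := Real.rpow_nonneg hW _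
  have hh : (0 : ℝ) ≤ (1 / 2) ^ z := by positivity
  have expand : X * (y * Z) - m =
      (X - x) * (y * Z) + (x * (y * (Z - v)) + (x * (y * v - w) + (x * w - m))) := by
    noncomm_ring
  have b1 : p ((X - x) * (y * Z)) ≤ C₁ * Real.exp Ω * ((1 / 2) ^ z * V) := by
    calc p ((X - x) * (y * Z)) ≤ p (X - x) * (‖y‖ * ‖Z‖) :=
          (hp.mul_right _ _).trans (mul_le_mul_of_nonneg_left (norm_mul_le _ _) (hp.nonneg _))
      _ ≤ (C₁ * Real.exp α * ((1 / 2) ^ z * V)) * (Real.exp β * Real.exp γ) := by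
          have : p (X - x) ≤ C₁ * Real.exp α * ((1 / 2) ^ z * V) :=
            ihX.trans (mul_le_mul_of_nonneg_left r1 (by positivity))
          gcongr
      _ = C₁ * Real.exp (α + β + γ) * ((1 / 2) ^ z * V) := by
          rw [Real.exp_add, Real.exp_add]; ring
      _ ≤ _ := by gcongr; linarith
  have b2 : p (x * (y * (Z - v))) ≤ C₁ * Real.exp Ω * ((1 / 2) ^ z * V) := by
    calc p (x * (y * (Z - v))) ≤ ‖x‖ * (‖y‖ * p (Z - v)) :=
          (hp.mul_left _ _).trans (mul_le_mul_of_nonneg_left (hp.mul_left _ _) (norm_nonneg _))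
      _ ≤ Real.exp α * (Real.exp β * (C₁ * Real.exp γ * ((1 / 2) ^ z * V))) := by
          have : p (Z - v) ≤ C₁ * Real.exp γ * ((1 / 2) ^ z * V) :=
            ihZ.trans (mul_le_mul_of_nonneg_left r2 (by positivity))
          have := hp.nonneg (Z - v)
          gcongr
      _ = C₁ * Real.exp (α + β + γ) * ((1 / 2) ^ z * V) := by
          rw [Real.exp_add, Real.exp_add]; ring
      _ ≤ _ := by gcongr; linarith
  have b3 : p (x * (y * v - w)) ≤ C₀ * Real.exp Ω * V := by
    calc p (x * (y * v - w)) ≤ ‖x‖ * p (y * v - w) := hp.mul_left _ _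
      _ ≤ Real.exp α * (C₀ * V) := by
          have : p (y * v - w) ≤ C₀ * V := d1.trans (mul_le_mul_of_nonneg_left r3 hC₀)
          have := hp.nonneg (y * v - w)
          gcongr
      _ = C₀ * Real.exp α * V := by ring
      _ ≤ _ := by gcongr; linarith
  have b4 : p (x * w - m) ≤ C₀ * Real.exp Ω * V := by
    refine d2.trans ?_
    have : 1 ≤ Real.exp Ω := Real.one_le_exp (by linarith)
    have hcv : 0 ≤ C₀ * V := by positivity
    nlinarith
  have total := hp.add ((X - x) * (y * Z)) (x * (y * (Z - v)) + (x * (y * v - w) + (x * w - m)))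
  have total2 := hp.add (x * (y * (Z - v))) (x * (y * v - w) + (x * w - m))
  have total3 := hp.add (x * (y * v - w)) (x * w - m)
  rw [expand]
  have fin : C₁ * Real.exp Ω * V = C₁ * Real.exp Ω * ((1 / 2) ^ z * V) +
      (C₁ * Real.exp Ω * ((1 / 2) ^ z * V) + (C₀ * Real.exp Ω * V + C₀ * Real.exp Ω * V)) := by
    linear_combination (Real.exp Ω * V) * hC
  rw [fin]
  linarith

/-- Ordered products whose factors are `ω ^ z`-close on the intervals of a partition are close when
`ω` is at most `η` on each interval; the error is a multiple of `η ^ (z - 1)`. -/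
lemma pathProd_diff [NormOneClass A] {p : A → ℝ} (hp : SubNorm p) {T : ℝ} {ωb ω : ℝ → ℝ → ℝ}
    (hωb : IsControl 0 T ωb) (hω : IsControl 0 T ω) {z η E : ℝ} (hz : 1 < z) (hη : 0 ≤ η)
    (hE : 0 ≤ E) {q : ℕ → ℝ} (hq : IsPath T q) (k : ℕ)
    (hsmall : ∀ i < k, ω (q (i + 1)) (q i) ≤ η) {a b : ℕ → A}
    (ha : ∀ i < k, ‖a i‖ ≤ Real.exp (ωb (q (i + 1)) (q i)))
    (hb : ∀ i < k, ‖b i‖ ≤ Real.exp (ωb (q (i + 1)) (q i)))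
    (hab : ∀ i < k, p (a i - b i) ≤ E * ω (q (i + 1)) (q i) ^ z) :
    p (seqProd a k - seqProd b k) ≤ Real.exp (ωb T 0) * (E * (η ^ (z - 1) * ω T 0)) := by
  refine (seqProd_diff hp a b (fun i => ωb (q (i + 1)) (q i)) k (fun i => hωb.nonneg _ _)
    ha hb).trans ?_
  refine mul_le_mul (Real.exp_le_exp.2 ((hωb.sum_le hq k).trans
    (hωb.le_total (hq.mem2 (Nat.zero_le k))))) ?_
    (Finset.sum_nonneg fun i _ => hp.nonneg _) (Real.exp_pos _).le
  refine (Finset.sum_le_sum fun i hi => hab i (Finset.mem_range.1 hi)).trans ?_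
  rw [← Finset.mul_sum]
  exact mul_le_mul_of_nonneg_left (hω.sum_rpow_le hq k hz hη hsmall) hE

/-! ### Dyadic grids clamped to an interval -/

/-- The `j`-th point of the dyadic grid of `[0,T]` with step `T / 2 ^ n`, clamped to `[s,t]`. For
`j ≤ 2 ^ n` these points form a partition of `[s,t]` with possibly repeated points. -/
noncomputable def grid (T : ℝ) (n : ℕ) (s t : ℝ) (j : ℕ) : ℝ :=
  max s (min t (j * (T / 2 ^ n)))

lemma grid_isPath {T : ℝ} (hT : 0 < T) (n : ℕ) {s t : ℝ} (h : Mem2 0 T s t) :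
    IsPath T (grid T n s t) := by
  obtain ⟨h0, h1, h2⟩ := h
  refine ⟨fun i j hij => ?_, fun i => h0.trans (le_max_left _ _), fun i =>
    max_le (h1.trans h2) ((min_le_left _ _).trans h2)⟩
  unfold grid
  gcongr

lemma grid_zero {T : ℝ} (n : ℕ) {s t : ℝ} (h : Mem2 0 T s t) : grid T n s t 0 = s := by
  simp [grid, h.1]

lemma grid_last {T : ℝ} (n : ℕ) {s t : ℝ} (h : Mem2 0 T s t) :
    grid T n s t (2 ^ n) = t := by
  have : ((2 ^ n : ℕ) : ℝ) * (T / 2 ^ n) = T := by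
    push_cast
    field_simp
  rw [grid, this, min_eq_left h.2.2, max_eq_right h.2.1]

lemma grid_refine (T : ℝ) (n d : ℕ) (s t : ℝ) (j : ℕ) :
    grid T (n + d) s t (j * 2 ^ d) = grid T n s t j := by
  unfold grid
  congr 2
  push_cast
  rw [pow_add]
  field_simp

lemma grid_step {T : ℝ} (hT : 0 < T) (n : ℕ) (s t : ℝ) (j : ℕ) :
    grid T n s t (j + 1) - grid T n s t j ≤ T / 2 ^ n := by
  have h : 0 < T / 2 ^ n := by positivity
  unfold grid
  push_cast
  rw [add_mul, one_mul]
  set x := (j : ℝ) * (T / 2 ^ n)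
  have : max s (min t (x + T / 2 ^ n)) ≤ max s (min t x) + T / 2 ^ n := by
    refine max_le (by linarith [le_max_left s (min t x)]) ?_
    refine le_trans ?_ (add_le_add_left (le_max_right s (min t x)) _)
    rcases le_total t x with h' | h'
    · rw [min_eq_left h']; exact (min_le_left _ _).trans (by linarith)
    · rw [min_eq_right h']; exact min_le_right _ _
  linarith

lemma grid_abs_sub {T : ℝ} (n : ℕ) {s t s' t' δ : ℝ} (j : ℕ) (hs : |s' - s| < δ)
    (ht : |t' - t| < δ) : |grid T n s' t' j - grid T n s t j| < δ := by
  unfold grid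
  refine (abs_max_sub_max_le_max _ _ _ _).trans_lt (max_lt hs ?_)
  refine (abs_min_sub_min_le_max _ _ _ _).trans_lt (max_lt ht ?_)
  simpa using (abs_nonneg _).trans_lt hs

lemma grid_small {T : ℝ} (hT : 0 < T) {ω : ℝ → ℝ → ℝ} (hω : IsControl 0 T ω) {η : ℝ}
    (hη : 0 < η) : ∃ N, ∀ n ≥ N, ∀ s t, Mem2 0 T s t → ∀ j,
      ω (grid T n s t (j + 1)) (grid T n s t j) ≤ η := by
  obtain ⟨δ, hδ, H⟩ := hω.small hη
  obtain ⟨N, hN⟩ := exists_pow_lt_of_lt_one (show 0 < δ / T by positivity)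
    (show (1 / 2 : ℝ) < 1 by norm_num)
  refine ⟨N, fun n hn s t h j => H _ _ ((grid_isPath hT n h).mem2 (Nat.le_succ j)) ?_⟩
  refine (grid_step hT n s t j).trans_lt ?_
  have h1 : (1 / 2 : ℝ) ^ n ≤ (1 / 2) ^ N :=
    pow_le_pow_of_le_one (by norm_num) (by norm_num) hn
  have h2 : (1 / 2 : ℝ) ^ n < δ / T := h1.trans_lt hN
  rw [lt_div_iff₀ hT] at h2
  calc T / 2 ^ n = (1 / 2) ^ n * T := by rw [one_div, inv_pow]; ring
    _ < δ := h2

/-- The grid points of `[s,t]` left of `u` are those of `[s,u]`. -/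
lemma grid_left {T : ℝ} {n j : ℕ} {s u t : ℝ} (hut : u ≤ t)
    (h : j * (T / 2 ^ n) ≤ u) : grid T n s u j = grid T n s t j := by
  rw [grid, grid, min_eq_right h, min_eq_right (h.trans hut)]

lemma grid_left' {T : ℝ} {n j : ℕ} {u t : ℝ}
    (h : j * (T / 2 ^ n) ≤ u) : grid T n u t j = u := by
  rw [grid, max_eq_left ((min_le_right _ _).trans h)]

lemma grid_right {T : ℝ} {n j : ℕ} {s u t : ℝ} (hsu : s ≤ u) (hut : u ≤ t)
    (h : u ≤ j * (T / 2 ^ n)) : grid T n u t j = grid T n s t j := by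
  rw [grid, grid, max_eq_right (le_min hut h), max_eq_right (hsu.trans (le_min hut h))]

lemma grid_right' {T : ℝ} {n j : ℕ} {s u : ℝ} (hsu : s ≤ u)
    (h : u ≤ j * (T / 2 ^ n)) : grid T n s u j = u := by
  rw [grid, min_eq_left h, max_eq_right hsu]

/-- The product of `f` along the dyadic grid of level `n` on `[s,t]`. -/
noncomputable def gridProd (T : ℝ) (f : ℝ → ℝ → A) (n : ℕ) (t s : ℝ) : A :=
  pathProd f (grid T n s t) (2 ^ n)

lemma norm_gridProd_le [NormOneClass A] {T : ℝ} (hT : 0 < T) {ωb : ℝ → ℝ → ℝ} (hωb : IsControl 0 T ωb)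
    {f : ℝ → ℝ → A} (hf : ∀ s t, Mem2 0 T s t → ‖f t s‖ ≤ Real.exp (ωb t s)) (n : ℕ) {s t : ℝ}
    (h : Mem2 0 T s t) : ‖gridProd T f n t s‖ ≤ Real.exp (ωb t s) := by
  have := norm_pathProd_le hωb hf (grid_isPath hT n h) (2 ^ n)
  rwa [grid_zero n h, grid_last n h] at this

/-- A multiplicative map is its own product along any path. -/
lemma pathProd_of_mul {T : ℝ} {f : ℝ → ℝ → A}
    (hf : ∀ s u t, Mem3 0 T s u t → f t s = f t u * f u s)
    (h1 : ∀ t, 0 ≤ t → t ≤ T → f t t = 1) {q : ℕ → ℝ} (hq : IsPath T q) (k : ℕ) :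
    pathProd f q k = f (q k) (q 0) := by
  induction k with
  | zero => simp [pathProd, seqProd, h1 _ (hq.lower 0) (hq.upper 0)]
  | succ k ih =>
    rw [pathProd, seqProd, hf (q 0) (q k) (q (k + 1)) ⟨hq.lower 0, hq.mono (Nat.zero_le k),
      hq.mono (Nat.le_succ k), hq.upper _⟩, ← ih]
    rfl

/-- The grid products form a Cauchy sequence, uniformly over the simplex: each interval of the
coarse grid is compared with its subdivision by the maximal inequality. -/
lemma gridProd_cauchy [NormOneClass A] {p : A → ℝ} (hp : SubNorm p) {T : ℝ} (hT : 0 < T) {ωb ω : ℝ → ℝ → ℝ}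
    (hωb : IsControl 0 T ωb) (hω : IsControl 0 T ω) {z C : ℝ} (hz : 1 < z) (hC : 0 ≤ C)
    {μ : ℝ → ℝ → A} (hμ : ∀ s t, Mem2 0 T s t → ‖μ t s‖ ≤ Real.exp (ωb t s))
    (hmax : ∀ k q, IsPath T q → p (pathProd μ q k - μ (q k) (q 0)) ≤ C * ω (q k) (q 0) ^ z)
    {η : ℝ} (hη : 0 ≤ η) {n : ℕ} {s t : ℝ} (h : Mem2 0 T s t)
    (hsmall : ∀ j, ω (grid T n s t (j + 1)) (grid T n s t j) ≤ η) (d : ℕ) :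
    p (gridProd T μ (n + d) t s - gridProd T μ n t s) ≤
      Real.exp (ωb T 0) * (C * (η ^ (z - 1) * ω T 0)) := by
  have hfine := grid_isPath hT (n + d) h
  have hsub : ∀ j, IsPath T (fun i => grid T (n + d) s t (j * 2 ^ d + i)) := fun j =>
    hfine.comp fun a b h => by simpa using h
  have e0 : ∀ j, grid T (n + d) s t (j * 2 ^ d + 0) = grid T n s t j := fun j => by
    rw [add_zero, grid_refine]
  have e1 : ∀ j, grid T (n + d) s t (j * 2 ^ d + 2 ^ d) = grid T n s t (j + 1) := fun j => by
    rw [← Nat.succ_mul, grid_refine]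
  have heq : gridProd T μ (n + d) t s = seqProd (fun j =>
      pathProd μ (fun i => grid T (n + d) s t (j * 2 ^ d + i)) (2 ^ d)) (2 ^ n) := by
    rw [gridProd, pathProd, pow_add, seqProd_mul]
    rfl
  rw [heq, gridProd, pathProd]
  refine pathProd_diff hp hωb hω hz hη hC (grid_isPath hT n h) _ (fun i _ => hsmall i)
    (fun j _ => ?_) (fun j _ => hμ _ _ ((grid_isPath hT n h).mem2 (Nat.le_succ j)))
    (fun j _ => ?_)
  · have := norm_pathProd_le hωb hμ (hsub j) (2 ^ d)
    simpa only [e0, e1] using this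
  · have := hmax (2 ^ d) _ (hsub j)
    simpa only [e0, e1] using this

/-- Inserting the point `u` into the grid of `[s,t]` splits a single interval, so the grid
products are multiplicative up to one defect term. -/
lemma gridProd_split [NormOneClass A] {p : A → ℝ} (hp : SubNorm p) {T : ℝ} (hT : 0 < T) {ωb ω : ℝ → ℝ → ℝ}
    (hωb : IsControl 0 T ωb) {z C₀ : ℝ} (hz : 1 < z) (hC₀ : 0 ≤ C₀)
    (hω : IsControl 0 T ω) {μ : ℝ → ℝ → A}
    (h1 : ∀ t, 0 ≤ t → t ≤ T → μ t t = 1)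
    (hμ : ∀ s t, Mem2 0 T s t → ‖μ t s‖ ≤ Real.exp (ωb t s))
    (hδ : ∀ s u t, Mem3 0 T s u t → p (μ t s - μ t u * μ u s) ≤ C₀ * ω t s ^ z)
    {η : ℝ} (hη : 0 ≤ η) {n : ℕ} {s u t : ℝ} (h : Mem3 0 T s u t)
    (hsmall : ∀ j, ω (grid T n s t (j + 1)) (grid T n s t j) ≤ η) :
    p (gridProd T μ n t s - gridProd T μ n t u * gridProd T μ n u s) ≤
      Real.exp (ωb T 0) * (C₀ * η ^ z) := by
  obtain ⟨h0, hsu, hut, htT⟩ := h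
  have hst : Mem2 0 T s t := ⟨h0, hsu.trans hut, htT⟩
  have hq := grid_isPath hT n hst
  have hEnn : 0 ≤ C₀ * η ^ z := mul_nonneg hC₀ (Real.rpow_nonneg hη _)
  have huu : μ u u = 1 := h1 u (h0.trans hsu) (hut.trans htT)
  have hmono : ∀ k : ℕ, (k : ℝ) * (T / 2 ^ n) ≤ ((k + 1 : ℕ) : ℝ) * (T / 2 ^ n) := fun k => by
    gcongr
    omega
  have key : ∀ k : ℕ,
      ((k : ℝ) * (T / 2 ^ n) ≤ u → pathProd μ (grid T n u t) k = 1 ∧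
        pathProd μ (grid T n s t) k = pathProd μ (grid T n s u) k) ∧
      p (pathProd μ (grid T n s t) k -
        pathProd μ (grid T n u t) k * pathProd μ (grid T n s u) k) ≤
        Real.exp (ωb (grid T n s t k) (grid T n s t 0)) * (C₀ * η ^ z) := by
    intro k
    induction k with
    | zero =>
      refine ⟨fun _ => ⟨rfl, rfl⟩, ?_⟩
      simp only [pathProd, seqProd, mul_one, sub_self, hp.zero]
      positivity
    | succ k ih =>
      obtain ⟨ih1, ih2⟩ := ih
      have st : ∀ a b, pathProd μ (grid T n a b) (k + 1) =
        μ (grid T n a b (k + 1)) (grid T n a b k) * pathProd μ (grid T n a b) k := fun _ _ => rfl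
      rcases le_total (((k + 1 : ℕ) : ℝ) * (T / 2 ^ n)) u with hc | hc
      · have hk := (hmono k).trans hc
        obtain ⟨i1, i2⟩ := ih1 hk
        have A1 : pathProd μ (grid T n u t) (k + 1) = 1 := by
          rw [st, grid_left' hc, grid_left' hk, huu, i1, one_mul]
        have A2 : pathProd μ (grid T n s t) (k + 1) = pathProd μ (grid T n s u) (k + 1) := by
          rw [st, st, grid_left hut hc, grid_left hut hk, i2]
        refine ⟨fun _ => ⟨A1, A2⟩, ?_⟩
        rw [A1, A2, one_mul, sub_self, hp.zero]
        positivity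
      refine ⟨fun hc' => ?_, ?_⟩
      -- here the grid point of index `k + 1` is exactly `u`
      · have hk := (hmono k).trans hc'
        obtain ⟨i1, i2⟩ := ih1 hk
        refine ⟨?_, ?_⟩
        · rw [st, grid_left' hc', grid_left' hk, huu, i1, one_mul]
        · rw [st, st, grid_left hut hc', grid_left hut hk, i2]
      · have hb := hμ _ _ (hq.mem2 (Nat.le_succ k))
        rcases le_total ((k : ℝ) * (T / 2 ^ n)) u with hk | hk
        · obtain ⟨i1, i2⟩ := ih1 hk
          rw [st, st, st, i1, i2, mul_one, ← mul_assoc, ← sub_mul, grid_right hsu hut hc,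
            grid_left' hk, grid_right' hsu hc, grid_left hut hk, ← i2]
          have hle : grid T n s t k ≤ u := by
            rw [← grid_left hut hk]
            exact max_le hsu (min_le_left _ _)
          have hle' : u ≤ grid T n s t (k + 1) := by
            rw [← grid_right hsu hut hc]
            exact le_max_left _ _
          refine (hp.mul_right _ _).trans ?_
          rw [mul_comm]
          have hd := hδ _ u _ ⟨hq.lower k, hle, hle', hq.upper (k + 1)⟩
          refine mul_le_mul ((norm_pathProd_le hωb hμ hq k).trans (Real.exp_le_exp.2 ?_))
            (hd.trans ?_) (hp.nonneg _) (Real.exp_pos _).le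
          · have := hωb.superadd_path hq (Nat.zero_le k) (Nat.le_succ k)
            simp only [Nat.succ_eq_add_one] at this
            linarith [hωb.nonneg (grid T n s t (k + 1)) (grid T n s t k)]
          · exact mul_le_mul_of_nonneg_left
              (Real.rpow_le_rpow (hω.nonneg _ _) (hsmall k) (by linarith)) hC₀
        · have hkk := hk.trans (hmono k)
          rw [st, st, st, grid_right hsu hut hkk, grid_right hsu hut hk, grid_right' hsu hkk,
            grid_right' hsu hk, huu, one_mul, mul_assoc, ← mul_sub]
          refine (hp.mul_left _ _).trans ?_
          refine (mul_le_mul hb ih2 (hp.nonneg _) (Real.exp_pos _).le).trans ?_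
          rw [← mul_assoc, ← Real.exp_add]
          exact mul_le_mul_of_nonneg_right
            (Real.exp_le_exp.2 (hωb.superadd_path hq (Nat.zero_le k) (Nat.le_succ k))) hEnn
  refine (key (2 ^ n)).2.trans (mul_le_mul_of_nonneg_right ?_ hEnn)
  exact Real.exp_le_exp.2 (hωb.le_total (hq.mem2 (Nat.zero_le _)))

/-! ### Continuity -/

lemma PContOn.mul {p : A → ℝ} (hp : SubNorm p) {T K : ℝ} {f g : ℝ → ℝ → A}
    (hf : PContOn T p f) (hg : PContOn T p g) (hfK : ∀ s t, Mem2 0 T s t → ‖f t s‖ ≤ K)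
    (hgK : ∀ s t, Mem2 0 T s t → ‖g t s‖ ≤ K) : PContOn T p (fun t s => f t s * g t s) := by
  intro s t h ε hε
  have hK : 0 ≤ K := (norm_nonneg _).trans (hfK s t h)
  have hpos : 0 < ε / (2 * (K + 1)) := by positivity
  obtain ⟨δ₁, hδ₁, H₁⟩ := hf s t h _ hpos
  obtain ⟨δ₂, hδ₂, H₂⟩ := hg s t h _ hpos
  refine ⟨min δ₁ δ₂, lt_min hδ₁ hδ₂, fun s' t' h' hs ht => ?_⟩
  have a1 := H₁ s' t' h' (hs.trans_le (min_le_left _ _)) (ht.trans_le (min_le_left _ _))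
  have a2 := H₂ s' t' h' (hs.trans_le (min_le_right _ _)) (ht.trans_le (min_le_right _ _))
  have b := hp.mul_sub_mul (f t' s') (g t' s') (f t s) (g t s)
  have c1 : p (f t' s' - f t s) * ‖g t' s'‖ ≤ ε / (2 * (K + 1)) * K :=
    mul_le_mul a1.le (hgK _ _ h') (norm_nonneg _) hpos.le
  have c2 : ‖f t s‖ * p (g t' s' - g t s) ≤ K * (ε / (2 * (K + 1))) :=
    mul_le_mul (hfK _ _ h) a2.le (hp.nonneg _) hK
  have e : ε / (2 * (K + 1)) * (2 * (K + 1)) = ε := by field_simp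
  show p (f t' s' * g t' s' - f t s * g t s) < ε
  nlinarith

lemma gridProd_cont [NormOneClass A] {p : A → ℝ} (hp : SubNorm p) {T : ℝ} (hT : 0 < T) {ωb : ℝ → ℝ → ℝ}
    (hωb : IsControl 0 T ωb) {μ : ℝ → ℝ → A} (hc : PContOn T p μ)
    (hμ : ∀ s t, Mem2 0 T s t → ‖μ t s‖ ≤ Real.exp (ωb t s)) (n : ℕ) :
    PContOn T p (gridProd T μ n) := by
  have key : ∀ k, PContOn T p (fun t s => pathProd μ (grid T n s t) k) := by
    intro k
    induction k with
    | zero =>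
      intro s t h ε hε
      refine ⟨1, one_pos, fun s' t' _ _ _ => ?_⟩
      simpa [pathProd, seqProd, hp.zero] using hε
    | succ k ih =>
      refine PContOn.mul (K := Real.exp (ωb T 0)) hp
        (f := fun t s => μ (grid T n s t (k + 1)) (grid T n s t k)) ?_ ih ?_ ?_
      · intro s t h ε hε
        obtain ⟨δ, hδ, H⟩ := hc _ _ ((grid_isPath hT n h).mem2 (Nat.le_succ k)) ε hε
        exact ⟨δ, hδ, fun s' t' h' hs ht => H _ _ ((grid_isPath hT n h').mem2 (Nat.le_succ k))
          (grid_abs_sub n k hs ht) (grid_abs_sub n (k + 1) hs ht)⟩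
      · intro s t h
        have m := (grid_isPath hT n h).mem2 (Nat.le_succ k)
        exact (hμ _ _ m).trans (Real.exp_le_exp.2 (hωb.le_total m))
      · intro s t h
        have hq := grid_isPath hT n h
        exact (norm_pathProd_le hωb hμ hq k).trans
          (Real.exp_le_exp.2 (hωb.le_total (hq.mem2 (Nat.zero_le k))))
  exact key (2 ^ n)

/-- A uniform limit of continuous maps is continuous. -/
lemma PContOn.of_uniform {p : A → ℝ} (hp : SubNorm p) {T : ℝ} {φ : ℝ → ℝ → A}
    (H : ∀ ε > 0, ∃ g : ℝ → ℝ → A, PContOn T p g ∧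
      ∀ s t, Mem2 0 T s t → p (g t s - φ t s) ≤ ε) : PContOn T p φ := by
  intro s t h ε hε
  obtain ⟨g, hg, hgφ⟩ := H (ε / 4) (by positivity)
  obtain ⟨δ, hδ, hd⟩ := hg s t h (ε / 4) (by positivity)
  refine ⟨δ, hδ, fun s' t' h' hs ht => ?_⟩
  have a := hgφ s' t' h'
  have b := hgφ s t h
  have c := hd s' t' h' hs ht
  rw [hp.symm] at a
  have d := hp.tri (φ t' s') (g t' s') (φ t s)
  have e := hp.tri (g t' s') (g t s) (φ t s)
  linarith

lemma exists_eta {r : ℝ} (hr : 0 < r) (B : ℝ) {ε : ℝ} (hε : 0 < ε) :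
    ∃ η > 0, B * η ^ r < ε := by
  have h : Filter.Tendsto (fun η : ℝ => B * η ^ r) (nhdsWithin 0 (Set.Ioi 0)) (nhds 0) := by
    have : ContinuousAt (fun η : ℝ => B * η ^ r) 0 :=
      continuousAt_const.mul (Real.continuousAt_rpow_const _ _ (Or.inr hr.le))
    have h2 := this.tendsto
    simp only [Real.zero_rpow hr.ne', mul_zero] at h2
    exact h2.mono_left nhdsWithin_le_nhds
  obtain ⟨η, h1, h2⟩ := ((h.eventually (gt_mem_nhds hε)).and self_mem_nhdsWithin).exists
  exact ⟨η, h2, h1⟩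

end Estimates

/-- **Multiplicative Sewing Lemma in a Banach algebra** (Corollary 3.8).
Here `(A, ‖·‖)` is a unital Banach algebra, `p` is a (possibly different) norm on `A` turning
`(A, ‖·‖, d_p)` into a submultiplicative monoid, and `μ : Δ₂ → (A,p)` is continuous with
`μ_{t,t} = 1`, `‖μ_{t,s}‖ ≤ exp ω̄(t,s)` and `p(μ_{t,s} - μ_{t,u} μ_{u,s}) ≤ C₀ ω(t,s)^z`.
Then there is a unique multiplicative continuous `φ : Δ₂ → (A,p)` with
`‖φ_{t,s}‖ ≤ exp ω̄(t,s)` and `p(φ_{t,s} - μ_{t,s}) ≤ C ω(t,s)^z`, where the constant `C`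
depends only on `z, T, C₀` and `ω̄`. -/
theorem multiplicative_sewing_banach_algebra
    {A : Type*} [NormedRing A] [NormOneClass A] [CompleteSpace A] [NormedAlgebra ℝ A]
    (p : A → ℝ)
    (hp_nonneg : ∀ x : A, 0 ≤ p x)
    (hp_def : ∀ x : A, p x = 0 → x = 0)
    (hp_add : ∀ x y : A, p (x + y) ≤ p x + p y)
    (hp_smul : ∀ (r : ℝ) (x : A), p (r • x) = |r| * p x)
    (hp_sub_right : ∀ x c : A, p (x * c) ≤ p x * ‖c‖)
    (hp_sub_left : ∀ c x : A, p (c * x) ≤ ‖c‖ * p x)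
    -- the `‖·‖`-balls are complete with respect to the metric induced by `p`
    (hballs : ∀ C : ℝ, 0 ≤ C → ∀ u : ℕ → A, (∀ n, ‖u n‖ ≤ C) →
      (∀ ε > (0:ℝ), ∃ N, ∀ m ≥ N, ∀ n ≥ N, p (u m - u n) < ε) →
      ∃ x : A, ‖x‖ ≤ C ∧ Filter.Tendsto (fun n => p (u n - x)) Filter.atTop (nhds 0))
    (T : ℝ) (hT : 0 < T)
    (ωb : ℝ → ℝ → ℝ) (hωb : IsControl 0 T ωb)
    (C₀ : ℝ) (hC₀ : 0 < C₀) (z : ℝ) (hz : 1 < z) :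
    -- the constant `C` depends only on `z`, `T`, `C₀` and `ω̄`
    ∃ C : ℝ, ∀ (μ : ℝ → ℝ → A) (ω : ℝ → ℝ → ℝ),
      PContOn T p μ →
      (∀ t, 0 ≤ t → t ≤ T → μ t t = 1) →
      (∀ s t, Mem2 0 T s t → ‖μ t s‖ ≤ Real.exp (ωb t s)) →
      IsControl 0 T ω →
      (∀ s u t, Mem3 0 T s u t → p (μ t s - μ t u * μ u s) ≤ C₀ * ω t s ^ z) →
      ∃ φ : ℝ → ℝ → A,
        (∀ s u t, Mem3 0 T s u t → φ t s = φ t u * φ u s) ∧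
        PContOn T p φ ∧
        (∀ s t, Mem2 0 T s t → ‖φ t s‖ ≤ Real.exp (ωb t s)) ∧
        (∀ s t, Mem2 0 T s t → p (φ t s - μ t s) ≤ C * ω t s ^ z) ∧
        -- uniqueness in the class of multiplicative continuous maps satisfying the two bounds
        (∀ (ψ : ℝ → ℝ → A) (C' : ℝ),
          (∀ s u t, Mem3 0 T s u t → ψ t s = ψ t u * ψ u s) →
          PContOn T p ψ →
          (∀ s t, Mem2 0 T s t → ‖ψ t s‖ ≤ Real.exp (ωb t s)) →
          (∀ s t, Mem2 0 T s t → p (ψ t s - μ t s) ≤ C' * ω t s ^ z) →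
          ∀ s t, Mem2 0 T s t → ψ t s = φ t s) := by
  have hp : SubNorm p := by
    refine ⟨hp_nonneg, ?_, ?_, hp_add, hp_sub_right, hp_sub_left⟩
    · simpa using hp_smul 0 0
    · intro x y
      have := hp_smul (-1) (x - y)
      simpa using this.symm
  have hhalf : 2 * (1 / 2 : ℝ) ^ z < 1 := by
    have := Real.rpow_lt_rpow_of_exponent_gt (show (0 : ℝ) < 1 / 2 by norm_num)
      (by norm_num) hz
    rw [Real.rpow_one] at this
    linarith
  set K := Real.exp (ωb T 0) with hKdef
  have hK : 0 < K := Real.exp_pos _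
  set C₁ : ℝ := 2 * C₀ / (1 - 2 * (1 / 2) ^ z) with hC₁def
  have hC₁ : 0 ≤ C₁ := div_nonneg (by linarith) (by linarith)
  have hC₁eq : C₁ = 2 * (1 / 2) ^ z * C₁ + 2 * C₀ := by
    have hne : 1 - 2 * (1 / 2 : ℝ) ^ z ≠ 0 := by linarith
    have : C₁ * (1 - 2 * (1 / 2) ^ z) = 2 * C₀ := div_mul_cancel₀ _ hne
    linarith
  refine ⟨C₁ * K, fun μ ω hcont hone hμ hω hδ => ?_⟩
  have hCK : 0 ≤ C₁ * K := by positivity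
  have hW : 0 ≤ ω T 0 := hω.nonneg _ _
  have hmax : ∀ k q, IsPath T q → p (pathProd μ q k - μ (q k) (q 0)) ≤
      C₁ * K * ω (q k) (q 0) ^ z := by
    intro k q hq
    refine (maximal hp hωb hω hC₀.le hC₁ (by linarith) hC₁eq hone hμ hδ k q hq).trans ?_
    have := hω.nonneg (q k) (q 0)
    have := Real.exp_le_exp.2 (hωb.le_total (hq.mem2 (Nat.zero_le k)))
    gcongr
  have hcauchy : ∀ ε > 0, ∃ N, ∀ n ≥ N, ∀ d s t, Mem2 0 T s t →
      p (gridProd T μ (n + d) t s - gridProd T μ n t s) < ε := by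
    intro ε hε
    obtain ⟨η, hη, hlt⟩ := exists_eta (show 0 < z - 1 by linarith) (K * (C₁ * K * ω T 0)) hε
    obtain ⟨N, hN⟩ := grid_small hT hω hη
    refine ⟨N, fun n hn d s t h => ?_⟩
    refine (gridProd_cauchy hp hT hωb hω hz hCK hμ hmax hη.le h (hN n hn s t h) d).trans_lt ?_
    refine lt_of_eq_of_lt ?_ hlt
    ring
  have hlim : ∀ t s, ∃ x : A, Mem2 0 T s t → ‖x‖ ≤ Real.exp (ωb t s) ∧
      Filter.Tendsto (fun n => p (gridProd T μ n t s - x)) Filter.atTop (nhds 0) := by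
    intro t s
    by_cases h : Mem2 0 T s t
    · obtain ⟨x, hx⟩ := hballs (Real.exp (ωb t s)) (Real.exp_pos _).le
        (fun n => gridProd T μ n t s) (fun n => norm_gridProd_le hT hωb hμ n h) (by
          intro ε hε
          obtain ⟨N, hN⟩ := hcauchy (ε / 2) (by positivity)
          refine ⟨N, fun m hm n hn => ?_⟩
          obtain ⟨a, rfl⟩ := Nat.exists_eq_add_of_le hm
          obtain ⟨b, rfl⟩ := Nat.exists_eq_add_of_le hn
          have e1 := hN N le_rfl a s t h
          have e2 := hN N le_rfl b s t h
          rw [hp.symm] at e2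
          have := hp.tri (gridProd T μ (N + a) t s) (gridProd T μ N t s)
            (gridProd T μ (N + b) t s)
          linarith)
      exact ⟨x, fun _ => hx⟩
    · exact ⟨0, fun h' => absurd h' h⟩
  choose φ hφ using hlim
  have hφnorm : ∀ s t, Mem2 0 T s t → ‖φ t s‖ ≤ Real.exp (ωb t s) := fun s t h => (hφ t s h).1
  have hunif : ∀ ε > 0, ∃ N, ∀ n ≥ N, ∀ s t, Mem2 0 T s t →
      p (gridProd T μ n t s - φ t s) ≤ ε := by
    intro ε hε
    obtain ⟨N, hN⟩ := hcauchy ε hε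
    refine ⟨N, fun n hn s t h => le_of_forall_pos_le_add fun ε' hε' => ?_⟩
    obtain ⟨m, hm, hmn⟩ := (((hφ t s h).2.eventually (gt_mem_nhds hε')).and
      (Filter.eventually_ge_atTop n)).exists
    obtain ⟨d, rfl⟩ := Nat.exists_eq_add_of_le hmn
    have e1 := hN n hn d s t h
    rw [hp.symm] at e1
    have := hp.tri (gridProd T μ n t s) (gridProd T μ (n + d) t s) (φ t s)
    linarith
  have hφμ : ∀ s t, Mem2 0 T s t → p (φ t s - μ t s) ≤ C₁ * K * ω t s ^ z := by
    intro s t h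
    refine le_of_forall_pos_le_add fun ε hε => ?_
    obtain ⟨N, hN⟩ := hunif ε hε
    have a := hN N le_rfl s t h
    rw [hp.symm] at a
    have b := hmax (2 ^ N) _ (grid_isPath hT N h)
    rw [grid_zero N h, grid_last N h] at b
    have c := hp.tri (φ t s) (gridProd T μ N t s) (μ t s)
    rw [gridProd] at a c
    linarith
  have hz0 : z ≠ 0 := by linarith
  -- on the diagonal the bound forces any competitor to be `1`
  have hdiag : ∀ (ψ : ℝ → ℝ → A) (C' : ℝ),
      (∀ s t, Mem2 0 T s t → p (ψ t s - μ t s) ≤ C' * ω t s ^ z) →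
      ∀ t, 0 ≤ t → t ≤ T → ψ t t = 1 := by
    intro ψ C' hψ t h0 h1
    have := hψ t t ⟨h0, le_rfl, h1⟩
    rw [hω.diag t h0 h1, Real.zero_rpow hz0, mul_zero, hone t h0 h1] at this
    exact sub_eq_zero.1 (hp_def _ (le_antisymm this (hp_nonneg _)))
  have hφmul : ∀ s u t, Mem3 0 T s u t → φ t s = φ t u * φ u s := by
    intro s u t h
    have hst : Mem2 0 T s t := ⟨h.1, h.2.1.trans h.2.2.1, h.2.2.2⟩
    have hut : Mem2 0 T u t := ⟨h.1.trans h.2.1, h.2.2.1, h.2.2.2⟩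
    have hsu : Mem2 0 T s u := ⟨h.1, h.2.1, h.2.2.1.trans h.2.2.2⟩
    refine sub_eq_zero.1 (hp_def _ (le_antisymm ?_ (hp_nonneg _)))
    refine le_of_forall_pos_le_add fun ε hε => ?_
    obtain ⟨η, hη, hlt⟩ := exists_eta (show 0 < z by linarith) (K * C₀)
      (show 0 < ε / 2 by positivity)
    obtain ⟨N₁, hN₁⟩ := grid_small hT hω hη
    have hε' : 0 < ε / 2 / (1 + 2 * K) := by positivity
    obtain ⟨N₂, hN₂⟩ := hunif _ hε'
    set n := max N₁ N₂
    have a := gridProd_split hp hT hωb hz hC₀.le hω hone hμ hδ hη.le h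
      (hN₁ n (le_max_left _ _) s t hst)
    have b1 := hN₂ n (le_max_right _ _) s t hst
    have b2 := hN₂ n (le_max_right _ _) u t hut
    have b3 := hN₂ n (le_max_right _ _) s u hsu
    rw [hp.symm] at b1
    have c := hp.mul_sub_mul (gridProd T μ n t u) (gridProd T μ n u s) (φ t u) (φ u s)
    have n1 : ‖gridProd T μ n u s‖ ≤ K := (norm_gridProd_le hT hωb hμ n hsu).trans
      (Real.exp_le_exp.2 (hωb.le_total hsu))
    have n2 : ‖φ t u‖ ≤ K := (hφnorm u t hut).trans (Real.exp_le_exp.2 (hωb.le_total hut))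
    set τ := ε / 2 / (1 + 2 * K) with hτ
    have c1 : p (gridProd T μ n t u - φ t u) * ‖gridProd T μ n u s‖ ≤ τ * K :=
      mul_le_mul b2 n1 (norm_nonneg _) hε'.le
    have c2 : ‖φ t u‖ * p (gridProd T μ n u s - φ u s) ≤ K * τ :=
      mul_le_mul n2 b3 (hp_nonneg _) hK.le
    have d1 := hp.tri (φ t s) (gridProd T μ n t s) (φ t u * φ u s)
    have d2 := hp.tri (gridProd T μ n t s) (gridProd T μ n t u * gridProd T μ n u s)
      (φ t u * φ u s)
    have e : τ * (1 + 2 * K) = ε / 2 := by rw [hτ]; field_simp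
    nlinarith
  refine ⟨φ, hφmul, ?_, hφnorm, hφμ, ?_⟩
  · refine PContOn.of_uniform hp fun ε hε => ?_
    obtain ⟨N, hN⟩ := hunif ε hε
    exact ⟨_, gridProd_cont hp hT hωb hcont hμ N, hN N le_rfl⟩
  · intro ψ C' hψmul _ hψnorm hψμ s t h
    refine sub_eq_zero.1 (hp_def _ (le_antisymm ?_ (hp_nonneg _)))
    refine le_of_forall_pos_le_add fun ε hε => ?_
    set E := |C' + C₁ * K|
    obtain ⟨η, hη, hlt⟩ := exists_eta (show 0 < z - 1 by linarith) (K * (E * ω T 0)) hε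
    obtain ⟨N, hN⟩ := grid_small hT hω hη
    have hq := grid_isPath hT N h
    have a := pathProd_diff (a := fun i => ψ (grid T N s t (i + 1)) (grid T N s t i))
      (b := fun i => φ (grid T N s t (i + 1)) (grid T N s t i)) hp hωb hω hz hη.le
      (abs_nonneg (C' + C₁ * K)) hq (2 ^ N) (fun i _ => hN N le_rfl s t h i)
      (fun i _ => hψnorm _ _ (hq.mem2 (Nat.le_succ i)))
      (fun i _ => hφnorm _ _ (hq.mem2 (Nat.le_succ i))) (fun i _ => by
        have m := hq.mem2 (Nat.le_succ i)
        have x1 := hψμ _ _ m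
        have x2 := hφμ _ _ m
        rw [hp.symm] at x2
        have x3 := hp.tri (ψ (grid T N s t (i + 1)) (grid T N s t i))
          (μ (grid T N s t (i + 1)) (grid T N s t i))
          (φ (grid T N s t (i + 1)) (grid T N s t i))
        have x4 : (C' + C₁ * K) * ω (grid T N s t (i + 1)) (grid T N s t i) ^ z ≤
            |C' + C₁ * K| * ω (grid T N s t (i + 1)) (grid T N s t i) ^ z :=
          mul_le_mul_of_nonneg_right (le_abs_self _) (Real.rpow_nonneg (hω.nonneg _ _) _)
        simp only [Nat.succ_eq_add_one] at x1 x2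
        linarith)
    have e1 := pathProd_of_mul hψmul (hdiag ψ C' hψμ) hq (2 ^ N)
    have e2 := pathProd_of_mul hφmul (hdiag φ _ hφμ) hq (2 ^ N)
    rw [grid_zero N h, grid_last N h] at e1 e2
    rw [pathProd] at e1 e2
    rw [e1, e2] at a
    have : K * (E * (η ^ (z - 1) * ω T 0)) = K * (E * ω T 0) * η ^ (z - 1) := by ring
    linarith

end MultSewing
end

section
/- Let (X, |·|_X) and (Y, |·|_Y) be reflexive Banach spaces with X a dense subspace of Y such that |x|_Y ≤ |x|_X for all x ∈ X. Let A = L(X) ∩ L(Y) be the set of linear maps that restrict to bounded operators on both X and Y, equipped with |a|_A = max(|a|_{L(X)}, |a|_{L(Y)}) and p(a) = |a|_{L(X,Y)}, the operator norm of a viewed as a map from X to Y. Then (A, |·|_A, d_p), with d_p(a,b) = p(a − b) and composition of operators as multiplication, is a submultiplicative monoid: p(ab) ≤ |a|_A p(b) and p(ab) ≤ p(a)|b|_A for all a, b ∈ A, and for every C ≥ 0 the set B_C = {a ∈ A : |a|_A ≤ C} is complete with respect to the metric d_p. -/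
/-!
Submultiplicativity is the operator-norm inequality, with `a₁ ∘ b₁ ∘ J` rewritten as
`(a₁ ∘ J) ∘ b₀` for the second bound; definiteness follows from density of the range of `J` and its injectivity.

For completeness of `B_C`, let `(a₀ n, a₁ n)` be Cauchy for `d_p`. The operators `a₁ n` are
uniformly bounded and converge pointwise on the dense range of `J`, hence pointwise on `Y`
(`exists_tendsto_of_denseRange`), and the limit `b₁` has norm at most `C`. Given `x`, the vectors
`a₀ n x` stay in the ball of radius `C * ‖x‖` of `X` and their images converge to `b₁ (J x)`.
Reflexivity of `X` makes the `J`-image of that ball closed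
(`exists_preimage_of_tendsto_of_reflexive`), so `b₁ (J x) = J z` with `‖z‖ ≤ C * ‖x‖`;
as `J` is injective, `x ↦ z` is the required operator `b₀`.
-/

open Filter Topology

/-- The image under `J` of a closed ball of a reflexive space is sequentially closed. The point
`z` is a weak limit of `x n` along a nonprincipal ultrafilter: the functional
`f ↦ lim f (x n)` on the dual of `X` is bounded by `R`, hence is evaluation at some `z`. -/
lemma exists_preimage_of_tendsto_of_reflexive {X Y : Type*}
    [NormedAddCommGroup X] [NormedSpace ℝ X]
    [NormedAddCommGroup Y] [NormedSpace ℝ Y]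
    (hX : Function.Surjective (NormedSpace.inclusionInDoubleDual ℝ X))
    (J : X →L[ℝ] Y) {x : ℕ → X} {R : ℝ} (hx : ∀ n, ‖x n‖ ≤ R) {y : Y}
    (hy : Tendsto (fun n => J (x n)) atTop (𝓝 y)) :
    ∃ z : X, ‖z‖ ≤ R ∧ J z = y := by
  have hR : 0 ≤ R := (norm_nonneg _).trans (hx 0)
  have hbound : ∀ (f : StrongDual ℝ X) (n : ℕ), ‖f (x n)‖ ≤ R * ‖f‖ := fun f n => by
    rw [mul_comm]
    exact (f.le_opNorm _).trans (mul_le_mul_of_nonneg_left (hx n) (norm_nonneg f))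
  have hlim : ∀ f : StrongDual ℝ X, ∃ l : ℝ, ‖l‖ ≤ R * ‖f‖ ∧
      Tendsto (fun n => f (x n)) (hyperfilter ℕ : Filter ℕ) (𝓝 l) := fun f => by
    have hc := (isCompact_closedBall (0 : ℝ) (R * ‖f‖)).ultrafilter_le_nhds
      ((hyperfilter ℕ).map fun n => f (x n)) (by
        rw [le_principal_iff, Ultrafilter.mem_coe, Ultrafilter.mem_map]
        exact univ_mem' fun n => by simpa using hbound f n)
    obtain ⟨l, hl, hle⟩ := hc
    exact ⟨l, by simpa using hl, hle⟩
  choose φ hφ hφlim using hlim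
  let Φ : StrongDual ℝ (StrongDual ℝ X) := LinearMap.mkContinuous
    { toFun := φ
      map_add' := fun f g => tendsto_nhds_unique (hφlim (f + g)) ((hφlim f).add (hφlim g))
      map_smul' := fun c f => tendsto_nhds_unique (hφlim (c • f)) ((hφlim f).const_mul c) }
    R hφ
  obtain ⟨z, hz⟩ := hX Φ
  have hzf : ∀ f : StrongDual ℝ X, f z = φ f := fun f => by
    rw [← NormedSpace.dual_def ℝ X z f, hz]; rfl
  refine ⟨z, NormedSpace.norm_le_dual_bound ℝ z hR fun f => by rw [hzf]; exact hφ f, ?_⟩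
  refine (SeparatingDual.eq_iff_forall_dual_eq (R := ℝ)).2 fun g => ?_
  have h₁ : Tendsto (fun n => g (J (x n))) (hyperfilter ℕ : Filter ℕ) (𝓝 (g y)) :=
    ((g.continuous.tendsto y).comp hy).mono_left Nat.hyperfilter_le_atTop
  exact (hzf (g.comp J)).trans (tendsto_nhds_unique (hφlim (g.comp J)) h₁)

/-- Uniformly bounded operators that are pointwise Cauchy on a dense range converge pointwise. -/
lemma exists_tendsto_of_denseRange {X Y : Type*}
    [NormedAddCommGroup Y] [NormedSpace ℝ Y] [CompleteSpace Y]
    {J : X → Y} (hJ : DenseRange J) {a : ℕ → Y →L[ℝ] Y} {C : ℝ} (ha : ∀ n, ‖a n‖ ≤ C)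
    (hc : ∀ x, CauchySeq fun n => a n (J x)) (y : Y) :
    ∃ l, Tendsto (fun n => a n y) atTop (𝓝 l) := by
  have hC : 0 ≤ C := (norm_nonneg _).trans (ha 0)
  refine cauchySeq_tendsto_of_complete (Metric.cauchySeq_iff.2 fun ε hε => ?_)
  obtain ⟨x, hx⟩ := hJ.exists_dist_lt y (show 0 < ε / (3 * (C + 1)) by positivity)
  have hclose : ∀ n, dist (a n y) (a n (J x)) < ε / 3 := fun n => by
    rw [dist_eq_norm, ← map_sub]
    rw [dist_eq_norm] at hx
    calc ‖a n (y - J x)‖ ≤ ‖a n‖ * ‖y - J x‖ := (a n).le_opNorm _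
      _ ≤ (C + 1) * ‖y - J x‖ := by gcongr; linarith [ha n]
      _ < (C + 1) * (ε / (3 * (C + 1))) := by gcongr
      _ = ε / 3 := by field_simp
  obtain ⟨N, hN⟩ := Metric.cauchySeq_iff.1 (hc x) (ε / 3) (by positivity)
  refine ⟨N, fun m hm n hn => ?_⟩
  have h₁ := dist_triangle4 (a m y) (a m (J x)) (a n (J x)) (a n y)
  have h₂ := hclose n
  rw [dist_comm] at h₂
  linarith [hclose m, hN m hm n hn]

/-- **Lemma 3.10**: Let `X ⊆ Y` (via a dense continuous injection `J` with `‖Jx‖ ≤ ‖x‖`)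
be reflexive Banach spaces.  On the algebra `A = L(X) ∩ L(Y)` — modelled as compatible pairs
`(a₀, a₁)` with `a₁ ∘ J = J ∘ a₀` — equipped with `|a|_A = max ‖a₀‖ ‖a₁‖` and
`p(a) = ‖a‖_{L(X,Y)} = ‖a₁ ∘ J‖`, one has a submultiplicative monoid:
(i) `p(ab) ≤ |a|_A p(b)` and `p(ab) ≤ p(a) |b|_A`;
(ii) `d_p` is a metric (`p` is definite on compatible pairs);
(iii) for every `C ≥ 0` the ball `B_C = {a : |a|_A ≤ C}` is complete for `d_p`. -/
theorem operator_pairs_submultiplicative_monoid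
    {X Y : Type*}
    [NormedAddCommGroup X] [NormedSpace ℝ X] [CompleteSpace X]
    [NormedAddCommGroup Y] [NormedSpace ℝ Y] [CompleteSpace Y]
    -- reflexivity of `X` and `Y`
    (hXrefl : Function.Surjective (NormedSpace.inclusionInDoubleDual ℝ X))
    (hYrefl : Function.Surjective (NormedSpace.inclusionInDoubleDual ℝ Y))
    -- `X` is a dense subspace of `Y` with `‖x‖_Y ≤ ‖x‖_X`
    (J : X →L[ℝ] Y) (hJinj : Function.Injective J) (hJdense : DenseRange J)
    (hJle : ∀ x : X, ‖J x‖ ≤ ‖x‖) :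
    -- (i) submultiplicativity of `p` with respect to `|·|_A`
    (∀ (a₀ b₀ : X →L[ℝ] X) (a₁ b₁ : Y →L[ℝ] Y),
      a₁.comp J = J.comp a₀ → b₁.comp J = J.comp b₀ →
      ‖(a₁.comp b₁).comp J‖ ≤ max ‖a₀‖ ‖a₁‖ * ‖b₁.comp J‖ ∧
      ‖(a₁.comp b₁).comp J‖ ≤ ‖a₁.comp J‖ * max ‖b₀‖ ‖b₁‖) ∧
    -- (ii) `p` is definite on compatible pairs, so `d_p(a,b) = p(a-b)` is a metric
    (∀ (a₀ : X →L[ℝ] X) (a₁ : Y →L[ℝ] Y),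
      a₁.comp J = J.comp a₀ → a₁.comp J = 0 → a₀ = 0 ∧ a₁ = 0) ∧
    -- (iii) completeness of the balls `B_C` with respect to `d_p`
    (∀ C : ℝ, 0 ≤ C → ∀ (a₀ : ℕ → X →L[ℝ] X) (a₁ : ℕ → Y →L[ℝ] Y),
      (∀ n, (a₁ n).comp J = J.comp (a₀ n)) →
      (∀ n, max ‖a₀ n‖ ‖a₁ n‖ ≤ C) →
      (∀ ε > (0:ℝ), ∃ N, ∀ m ≥ N, ∀ n ≥ N, ‖(a₁ m).comp J - (a₁ n).comp J‖ < ε) →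
      ∃ (b₀ : X →L[ℝ] X) (b₁ : Y →L[ℝ] Y),
        b₁.comp J = J.comp b₀ ∧ max ‖b₀‖ ‖b₁‖ ≤ C ∧
        Filter.Tendsto (fun n => ‖(a₁ n).comp J - b₁.comp J‖) Filter.atTop (nhds 0)) := by
  refine ⟨?_, ?_, ?_⟩
  · intro a₀ b₀ a₁ b₁ _ hb
    constructor
    · rw [ContinuousLinearMap.comp_assoc]
      exact (ContinuousLinearMap.opNorm_comp_le _ _).trans
        (mul_le_mul_of_nonneg_right (le_max_right _ _) (norm_nonneg _))
    · rw [ContinuousLinearMap.comp_assoc, hb, ← ContinuousLinearMap.comp_assoc]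
      exact (ContinuousLinearMap.opNorm_comp_le _ _).trans
        (mul_le_mul_of_nonneg_left (le_max_left _ _) (norm_nonneg _))
  · intro a₀ a₁ ha h0
    constructor
    · ext x
      apply hJinj
      have h := DFunLike.congr_fun (ha.symm.trans h0) x
      simpa using h
    · have h : (a₁ : Y → Y) = (0 : Y →L[ℝ] Y) :=
        hJdense.equalizer a₁.continuous (0 : Y →L[ℝ] Y).continuous
          (funext fun x => DFunLike.congr_fun h0 x)
      exact DFunLike.coe_injective h
  · intro C hC a₀ a₁ hcomm hbd hcau
    have hcs : CauchySeq fun n => (a₁ n).comp J := Metric.cauchySeq_iff.2 fun ε hε => by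
      simpa only [dist_eq_norm] using hcau ε hε
    obtain ⟨T, hT⟩ := cauchySeq_tendsto_of_complete hcs
    have hTx : ∀ x, Tendsto (fun n => a₁ n (J x)) atTop (𝓝 (T x)) := fun x =>
      ((ContinuousLinearMap.apply ℝ Y x).continuous.tendsto T).comp hT
    have ha₀ : ∀ n, ‖a₀ n‖ ≤ C := fun n => (le_max_left _ _).trans (hbd n)
    have ha₁ : ∀ n, ‖a₁ n‖ ≤ C := fun n => (le_max_right _ _).trans (hbd n)
    choose β hβ using exists_tendsto_of_denseRange hJdense ha₁ fun x => (hTx x).cauchySeq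
    let b₁ : Y →L[ℝ] Y := LinearMap.mkContinuous
      { toFun := β
        map_add' := fun u v => tendsto_nhds_unique (hβ (u + v))
          (by simpa only [map_add] using (hβ u).add (hβ v))
        map_smul' := fun c u => tendsto_nhds_unique (hβ (c • u))
          (by simpa only [map_smul, RingHom.id_apply] using (hβ u).const_smul c) }
      C fun y => le_of_tendsto (hβ y).norm
        (Eventually.of_forall fun n => (a₁ n).le_of_opNorm_le (ha₁ n) y)
    have hb₁ : ‖b₁‖ ≤ C := LinearMap.mkContinuous_norm_le _ hC _
    have hb₁T : b₁.comp J = T :=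
      ContinuousLinearMap.ext fun x => tendsto_nhds_unique (hβ (J x)) (hTx x)
    have hpre : ∀ x, ∃ z, ‖z‖ ≤ C * ‖x‖ ∧ J z = T x := fun x =>
      exists_preimage_of_tendsto_of_reflexive hXrefl J
        (fun n => (a₀ n).le_of_opNorm_le (ha₀ n) x)
        ((hTx x).congr fun n => DFunLike.congr_fun (hcomm n) x)
    choose γ hγ hγJ using hpre
    let b₀ : X →L[ℝ] X := LinearMap.mkContinuous
      { toFun := γ
        map_add' := fun u v => hJinj (by simp only [map_add, hγJ])
        map_smul' := fun c u => hJinj (by simp only [map_smul, hγJ, RingHom.id_apply]) }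
      C hγ
    refine ⟨b₀, b₁, ?_, max_le (LinearMap.mkContinuous_norm_le _ hC _) hb₁, ?_⟩
    · rw [hb₁T]
      exact ContinuousLinearMap.ext fun x => (hγJ x).symm
    · rw [hb₁T]
      exact tendsto_iff_norm_sub_tendsto_zero.1 hT
end

section
/- Tanabe/Sobolevskii construction of propagators: Let X₁ ⊆ X₀ be reflexive Banach spaces with X₁ continuously and densely embedded in X₀ and |x|₀ ≤ |x|₁ for x ∈ X₁. Let (L_t)_{t∈[0,T]} ⊆ L(X₁, X₀), and for each s ∈ [0,T] let (e^{τL_s})_{τ≥0} ⊆ L(X₀) ∩ L(X₁) be a strongly continuous semigroup on X₀ and on X₁ with e^{0·L_s} = id whose generator restricts to L_s on X₁, i.e. for x ∈ X₁, e^{τL_s}x ∈ X₁ and τ ↦ e^{τL_s}x is differentiable in X₀ with derivative L_s e^{τL_s}x. Assume there are constants λ ∈ ℝ, C > 0, ρ ∈ (0,1] and a control ω such that for all s, u ∈ [0,T] and τ > 0: (i) |e^{τL_s}|_{L(X₀)} ≤ e^{λτ} and |e^{τL_s}|_{L(X₁)} ≤ e^{λτ}; (ii) |e^{τL_s} − id|_{L(X₁,X₀)}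 ≤ Cτ and |e^{τL_s}|_{L(X₀,X₁)} ≤ Cτ^{−1}; (iii) |L_t − L_s|_{L(X₁,X₀)} ≤ ω(t,s)^ρ for (t,s) ∈ Δ₂; (iv) |e^{τL_s} − e^{τL_u}|_{L(X₁,X₀)} ≤ Cτ ω(u,s)^ρ for s ≤ u. Then there exists a map S : Δ₂ → L(X₀) ∩ L(X₁) such that: (P1) (t,s) ↦ S_{t,s}x is continuous into X₀ for each x ∈ X₀, and |S_{t,s}|_{L(X₀)} ≤ e^{λ(t−s)} and |S_{t,s}|_{L(X₁)} ≤ e^{λ(t−s)}; (P2) S_{t,t} = id and S_{t,s} = S_{t,u}S_{u,s} for (t,u,s) ∈ Δ₃; (P3) there is C_T with |S_{t,s} − id|_{L(X₁,X₀)} ≤ C_T|t−s|; (P4) for x ∈ X₁, t ↦ S_{t,s}x and s ↦ S_{t,s}x are differentiable in X₀ with d/dt S_{t,s}x = L_t S_{t,s}x and d/ds S_{t,s}x = −S_{t,s}L_s x; and (P0) there is C' with |S_{t,s} − e^{(t−s)L_s}|_{L(X₁,X₀)} ≤ C'|t−s| ω(t,s)^ρ for all (t,s) ∈ Δ₂.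 Moreover, S is the unique map satisfying (P1), (P2) and (P0). Finally, if in addition ∫_s^t ω(r,s)^ρ (r−s)^{−1} dr < ∞ for all (t,s) ∈ Δ₂, then S_{t,s}X₀ ⊆ X₁ for s < t and there is N_T with |S_{t,s}|_{L(X₀,X₁)} ≤ N_T |t−s|^{−1}. -/
namespace MultSewing


open Filter Topology

/-! ### Limits and factorizations through a reflexive space -/

/-- In a reflexive space `X₁`, a bounded sequence whose image under `J` converges in `X₀` has its
limit in the range of `J`, with the same norm bound: the bidual ball is weak-* compact, and a weak
limit along an ultrafilter is the required preimage. -/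
lemma exists_preimage_of_tendsto {X₀ X₁ : Type*}
    [NormedAddCommGroup X₀] [NormedSpace ℝ X₀]
    [NormedAddCommGroup X₁] [NormedSpace ℝ X₁]
    (hrefl₁ : Function.Surjective (NormedSpace.inclusionInDoubleDual ℝ X₁))
    (J : X₁ →L[ℝ] X₀) (y : ℕ → X₁) (c : ℝ) (hy : ∀ n, ‖y n‖ ≤ c) (z : X₀)
    (hz : Tendsto (fun n => J (y n)) atTop (𝓝 z)) : ∃ y', J y' = z ∧ ‖y'‖ ≤ c := by
  let f : ℕ → WeakDual ℝ (StrongDual ℝ X₁) := fun n =>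
    StrongDual.toWeakDual (NormedSpace.inclusionInDoubleDual ℝ X₁ (y n))
  have hcomp := WeakDual.isCompact_closedBall (𝕜 := ℝ) (E := StrongDual ℝ X₁) 0 c
  have hmem : ∀ n, f n ∈ WeakDual.toStrongDual ⁻¹'
      Metric.closedBall (0 : StrongDual ℝ (StrongDual ℝ X₁)) c := by
    intro n
    refine (mem_closedBall_zero_iff (E := StrongDual ℝ (StrongDual ℝ X₁))).2 ?_
    exact (NormedSpace.double_dual_bound ℝ X₁ (y n)).trans (hy n)
  obtain ⟨a, ha, hle⟩ := hcomp.ultrafilter_le_nhds ((hyperfilter ℕ).map f) (by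
    rw [le_principal_iff]
    exact Filter.mem_map.2 (Filter.univ_mem' hmem))
  obtain ⟨y', hy'⟩ := hrefl₁ (WeakDual.toStrongDual a)
  have hlim : ∀ φ : StrongDual ℝ X₁,
      Tendsto (fun n => φ (y n)) (hyperfilter ℕ : Filter ℕ) (𝓝 (φ y')) := by
    intro φ
    have h1 : Tendsto f (hyperfilter ℕ : Filter ℕ) (𝓝 a) := hle
    have h2 := ((WeakDual.eval_continuous (𝕜 := ℝ) φ).tendsto a).comp h1
    have h3 : a φ = φ y' := by
      rw [← NormedSpace.dual_def ℝ X₁ y' φ, hy']; rfl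
    rw [h3] at h2
    exact h2
  refine ⟨y', ?_, ?_⟩
  · refine (SeparatingDual.eq_iff_forall_dual_eq (R := ℝ)).2 fun ψ => ?_
    have h1 := hlim (ψ.comp J)
    have h2 := (ψ.continuous.tendsto z).comp (hz.mono_left Nat.hyperfilter_le_atTop)
    exact tendsto_nhds_unique h1 h2
  · have : ‖NormedSpace.inclusionInDoubleDual ℝ X₁ y'‖ ≤ c := by
      rw [hy']; simpa using ha
    rwa [show ‖NormedSpace.inclusionInDoubleDual ℝ X₁ y'‖ = ‖y'‖ from
      (NormedSpace.inclusionInDoubleDualLi ℝ).norm_map y'] at this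

/-- A bounded operator into `X₀` whose values lie in `X₁`, with a bound on their `X₁`-norms,
is a bounded operator into `X₁`. -/
lemma exists_lift {E X₀ X₁ : Type*}
    [NormedAddCommGroup E] [NormedSpace ℝ E]
    [NormedAddCommGroup X₀] [NormedSpace ℝ X₀]
    [NormedAddCommGroup X₁] [NormedSpace ℝ X₁]
    (J : X₁ →L[ℝ] X₀) (hJinj : Function.Injective J) (A : E →L[ℝ] X₀) (c : ℝ) (hc : 0 ≤ c)
    (h : ∀ x, ∃ y, J y = A x ∧ ‖y‖ ≤ c * ‖x‖) :
    ∃ R : E →L[ℝ] X₁, J.comp R = A ∧ ‖R‖ ≤ c := by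
  choose f hf hfb using h
  let R₀ : E →ₗ[ℝ] X₁ :=
    { toFun := f
      map_add' := fun x y => hJinj (by simp [hf])
      map_smul' := fun r x => hJinj (by simp [hf]) }
  refine ⟨R₀.mkContinuous c hfb, ?_, LinearMap.mkContinuous_norm_le _ hc _⟩
  ext x
  exact hf x

/-- A continuous function whose local growth rate to the right is at most `c`. -/
lemma le_of_local_growth (g : ℝ → ℝ) (a b c : ℝ) (hab : a ≤ b) (hg : ContinuousOn g (Set.Icc a b))
    (h : ∀ r ∈ Set.Ico a b, ∀ᶠ z in 𝓝[>] r, g z - g r ≤ c * (z - r)) :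
    g b ≤ g a + c * (b - a) := by
  refine image_le_of_liminf_slope_right_le_deriv_boundary (f := g)
    (B := fun x => g a + c * (x - a)) (B' := fun _ => c) hg (by simp) (by fun_prop) ?_ ?_
    (Set.right_mem_Icc.2 hab)
  · intro x _
    have := ((hasDerivAt_id x).sub_const a).const_mul c |>.const_add (g a)
    simpa using this.hasDerivWithinAt
  · intro x hx r hr
    refine Eventually.frequently ?_
    filter_upwards [h x hx, self_mem_nhdsWithin] with z hz hxz
    have hxz' : 0 < z - x := sub_pos.2 hxz
    rw [slope_def_field, div_lt_iff₀ hxz']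
    nlinarith

/-! ### Evolution families and their comparison -/

section Evo

variable {X₀ X₁ : Type*} [NormedAddCommGroup X₀] [NormedSpace ℝ X₀]
  [NormedAddCommGroup X₁] [NormedSpace ℝ X₁]

/-- An evolution family on `X₀` restricting to `X₁`, bounded by `M` on both spaces and Lipschitz
(with constant `K`) from `X₁` to `X₀`. -/
structure IsEvo (J : X₁ →L[ℝ] X₀) (T M K : ℝ) (S : ℝ → ℝ → X₀ →L[ℝ] X₀)
    (S₁ : ℝ → ℝ → X₁ →L[ℝ] X₁) : Prop where
  inter : ∀ s t, Mem2 0 T s t → ∀ x, S t s (J x) = J (S₁ t s x)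
  bd : ∀ s t, Mem2 0 T s t → ∀ x, ‖S t s x‖ ≤ M * ‖x‖
  bd₁ : ∀ s t, Mem2 0 T s t → ∀ x, ‖S₁ t s x‖ ≤ M * ‖x‖
  one : ∀ t, 0 ≤ t → t ≤ T → ∀ x, S t t x = x
  mul : ∀ s u t, Mem3 0 T s u t → ∀ x, S t s x = S t u (S u s x)
  lip : ∀ s t, Mem2 0 T s t → ∀ x, ‖S t s (J x) - J x‖ ≤ K * (t - s) * ‖x‖

/-- Duhamel-type comparison: two evolution families that locally differ by at most `κ h` from `X₁`
to `X₀` differ globally by at most `M² κ (t - s)`. One follows `r ↦ U t r (V r s x)`,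
which interpolates between `U t s x` and `V t s x`. -/
lemma IsEvo.compare {J : X₁ →L[ℝ] X₀} {T M K κ : ℝ} {U V : ℝ → ℝ → X₀ →L[ℝ] X₀}
    {U₁ V₁ : ℝ → ℝ → X₁ →L[ℝ] X₁} (hM : 0 ≤ M) (hK : 0 ≤ K) (hκ : 0 ≤ κ)
    (hU : IsEvo J T M K U U₁) (hV : IsEvo J T M K V V₁) {s t : ℝ} (hst : Mem2 0 T s t)
    (hloc : ∀ r ∈ Set.Ico s t, ∀ᶠ z in 𝓝[>] r, ∀ y : X₁,
      ‖V z r (J y) - U z r (J y)‖ ≤ κ * (z - r) * ‖y‖) (x : X₁) :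
    ‖V t s (J x) - U t s (J x)‖ ≤ M ^ 2 * κ * (t - s) * ‖x‖ := by
  obtain ⟨hs, hst', ht⟩ := hst
  have key : ∀ c : ℝ, ∀ r z, s ≤ r → r ≤ z → z ≤ t → 0 ≤ c →
      (∀ y : X₁, ‖V z r (J y) - U z r (J y)‖ ≤ c * (z - r) * ‖y‖) →
      ‖U t z (V z s (J x)) - U t r (V r s (J x))‖ ≤ M ^ 2 * c * ‖x‖ * (z - r) := by
    intro c r z hr hrz hz hc h
    rw [hU.mul r z t ⟨by linarith, hrz, hz, ht⟩, hV.mul s r z ⟨hs, hr, hrz, by linarith⟩,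
      ← map_sub, hV.inter s r ⟨hs, hr, by linarith⟩]
    refine (hU.bd z t ⟨by linarith, hz, ht⟩ _).trans ?_
    have h1 := hV.bd₁ s r ⟨hs, hr, by linarith⟩ x
    have h2 : 0 ≤ c * (z - r) := mul_nonneg hc (by linarith)
    calc M * _ ≤ M * (c * (z - r) * (M * ‖x‖)) := by
          gcongr
          exact (h _).trans (by gcongr)
      _ = _ := by ring
  set f : ℝ → X₀ := fun r => U t r (V r s (J x)) with hf
  have hLip : LipschitzOnWith (Real.toNNReal (M ^ 2 * (2 * K) * ‖x‖)) f (Set.Icc s t) := by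
    have aux : ∀ r z, r ∈ Set.Icc s t → z ∈ Set.Icc s t → r ≤ z →
        ‖f z - f r‖ ≤ M ^ 2 * (2 * K) * ‖x‖ * |z - r| := by
      intro r z hr hz hrz
      rw [abs_of_nonneg (by linarith)]
      refine key (2 * K) r z hr.1 hrz hz.2 (by positivity) fun y => ?_
      have m : Mem2 0 T r z := ⟨by linarith [hr.1], hrz, by linarith [hz.2]⟩
      calc _ = ‖(V z r (J y) - J y) - (U z r (J y) - J y)‖ := by congr 1; abel
        _ ≤ _ := norm_sub_le _ _
        _ ≤ K * (z - r) * ‖y‖ + K * (z - r) * ‖y‖ := add_le_add (hV.lip _ _ m y) (hU.lip _ _ m y)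
        _ = _ := by ring
    refine LipschitzOnWith.of_dist_le_mul fun z hz r hr => ?_
    rw [Real.coe_toNNReal _ (by positivity), dist_eq_norm, Real.dist_eq]
    rcases le_total r z with h | h
    · exact aux r z hr hz h
    · rw [norm_sub_rev, abs_sub_comm]
      exact aux z r hz hr h
  have hfin := le_of_local_growth (fun r => ‖f r - f s‖) s t (M ^ 2 * κ * ‖x‖) hst'
    ((hLip.continuousOn.sub continuousOn_const).norm) (by
      intro r hr
      filter_upwards [hloc r hr, Ioc_mem_nhdsGT hr.2] with z hz hz'
      have h1 := key κ r z hr.1 hz'.1.le hz'.2 hκ hz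
      have h2 : ‖f z - f s‖ ≤ ‖f z - f r‖ + ‖f r - f s‖ := by
        have := norm_add_le (f z - f r) (f r - f s)
        simpa using this
      have h3 : ‖f z - f r‖ ≤ M ^ 2 * κ * ‖x‖ * (z - r) := h1
      linarith)
  simp only [hf, sub_self, norm_zero, zero_add] at hfin
  rw [hU.one t (by linarith) ht, hV.one s hs (by linarith)] at hfin
  refine hfin.trans (le_of_eq (by ring))

end Evo

/-! ### Piecewise frozen products -/

section Froz

variable {E : Type*} [NormedAddCommGroup E] [NormedSpace ℝ E]

/-- The point `t` clamped to the `k`-th cell `[p k, p (k+1)]`. -/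
def cell (p : ℕ → ℝ) (k : ℕ) (t : ℝ) : ℝ := max (p k) (min t (p (k + 1)))

/-- The propagator from `s` to `t` of the piecewise frozen problem with nodes `p 0, …, p k`:
on the `i`-th cell the semigroup `P (p i)` acts for the time `[s,t]` spends in that cell. -/
def froz (P : ℝ → ℝ → E →L[ℝ] E) (p : ℕ → ℝ) : ℕ → ℝ → ℝ → E →L[ℝ] E
  | 0, _, _ => ContinuousLinearMap.id ℝ E
  | k + 1, t, s => (P (p k) (cell p k t - cell p k s)).comp (froz P p k t s)

lemma cell_mono (p : ℕ → ℝ) (k : ℕ) {s t : ℝ} (h : s ≤ t) : cell p k s ≤ cell p k t := by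
  unfold cell; gcongr

lemma cell_le {p : ℕ → ℝ} {k : ℕ} {t : ℝ} (h : t ≤ p k) : cell p k t = p k := by
  unfold cell; exact max_eq_left ((min_le_left _ _).trans h)

lemma le_cell {p : ℕ → ℝ} (hp : Monotone p) {k : ℕ} {t : ℝ} (h : p (k + 1) ≤ t) :
    cell p k t = p (k + 1) := by
  unfold cell; rw [min_eq_right h]; exact max_eq_right (hp (Nat.le_succ k))

lemma cell_mid {p : ℕ → ℝ} {k : ℕ} {t : ℝ} (h : p k ≤ t) (h' : t ≤ p (k + 1)) :
    cell p k t = t := by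
  unfold cell; rw [min_eq_left h']; exact max_eq_right h

/-- `t` clamped to `[p 0, p k]`; its increments are the total times spent in the first `k` cells. -/
def tot (p : ℕ → ℝ) (k : ℕ) (t : ℝ) : ℝ := max (p 0) (min t (p k))

lemma tot_succ {p : ℕ → ℝ} (hp : Monotone p) (k : ℕ) (t : ℝ) :
    tot p (k + 1) t = tot p k t + (cell p k t - p k) := by
  have h0 := hp (Nat.zero_le k)
  have h1 := hp (Nat.le_succ k)
  simp only [Nat.succ_eq_add_one] at h1
  unfold tot cell
  rcases le_total t (p k) with h | h
  · rw [min_eq_left (h.trans h1), min_eq_left h, max_eq_left h]; ring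
  · rw [min_eq_right h, max_eq_right h0]
    have h2 : p k ≤ min t (p (k + 1)) := le_min h h1
    rw [max_eq_right h2, max_eq_right (h0.trans h2)]; ring

lemma tot_mono (p : ℕ → ℝ) (k : ℕ) {s t : ℝ} (h : s ≤ t) : tot p k s ≤ tot p k t := by
  unfold tot; gcongr

lemma froz_norm_le {P : ℝ → ℝ → E →L[ℝ] E} {p : ℕ → ℝ} {T lam : ℝ} (hp : Monotone p)
    {s t : ℝ} (hst : s ≤ t)
    (hP : ∀ a, 0 ≤ a → a ≤ T → ∀ τ, 0 ≤ τ → ‖P a τ‖ ≤ Real.exp (lam * τ)) :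
    ∀ k, (∀ i < k, 0 ≤ p i ∧ p i ≤ T) →
      ‖froz P p k t s‖ ≤ Real.exp (lam * (tot p k t - tot p k s)) := by
  intro k
  induction k with
  | zero =>
    intro _
    have : tot p 0 t - tot p 0 s = 0 := by simp [tot]
    rw [this, mul_zero, Real.exp_zero]
    exact ContinuousLinearMap.norm_id_le
  | succ k ih =>
    intro hk
    obtain ⟨h0, h1⟩ := hk k (Nat.lt_succ_self k)
    refine (ContinuousLinearMap.opNorm_comp_le _ _).trans ?_
    have h2 := hP (p k) h0 h1 _ (sub_nonneg.2 (cell_mono p k hst))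
    calc _ ≤ Real.exp (lam * (cell p k t - cell p k s)) *
          Real.exp (lam * (tot p k t - tot p k s)) := by
            gcongr
            exact ih fun i hi => hk i (by omega)
      _ = _ := by
        rw [← Real.exp_add, tot_succ hp, tot_succ hp]; ring_nf

lemma froz_eq_id {P : ℝ → ℝ → E →L[ℝ] E} {p : ℕ → ℝ} {T : ℝ}
    (hP : ∀ a, 0 ≤ a → a ≤ T → P a 0 = ContinuousLinearMap.id ℝ E) {s t : ℝ} :
    ∀ k, (∀ i < k, 0 ≤ p i ∧ p i ≤ T) → (∀ i < k, cell p i t = cell p i s) →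
      froz P p k t s = ContinuousLinearMap.id ℝ E := by
  intro k
  induction k with
  | zero => intro _ _; rfl
  | succ k ih =>
    intro hk hc
    have := hk k (Nat.lt_succ_self k)
    rw [froz, hc k (Nat.lt_succ_self k), sub_self, hP _ this.1 this.2,
      ih (fun i hi => hk i (by omega)) (fun i hi => hc i (by omega))]
    rfl

lemma froz_mul {P : ℝ → ℝ → E →L[ℝ] E} {p : ℕ → ℝ} {T : ℝ} (hp : Monotone p)
    (hP0 : ∀ a, 0 ≤ a → a ≤ T → P a 0 = ContinuousLinearMap.id ℝ E)
    (hPsg : ∀ a, 0 ≤ a → a ≤ T → ∀ τ σ, 0 ≤ τ → 0 ≤ σ → P a (τ + σ) = (P a τ).comp (P a σ))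
    {s u t : ℝ} (hsu : s ≤ u) (hut : u ≤ t) :
    ∀ k, (∀ i < k, 0 ≤ p i ∧ p i ≤ T) →
      froz P p k t s = (froz P p k t u).comp (froz P p k u s) := by
  intro k
  induction k with
  | zero => intro _; rfl
  | succ k ih =>
    intro hk
    obtain ⟨h0, h1⟩ := hk k (Nat.lt_succ_self k)
    have hk' : ∀ i < k, 0 ≤ p i ∧ p i ≤ T := fun i hi => hk i (by omega)
    simp only [froz]
    rcases le_total u (p k) with h | h
    · rw [cell_le h, cell_le (hsu.trans h), sub_self, hP0 _ h0 h1, ih hk']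
      rfl
    · -- past the node `p k`, the earlier cells contribute nothing to the passage from `u` to `t`
      have hid : froz P p k t u = ContinuousLinearMap.id ℝ E := by
        refine froz_eq_id hP0 k hk' fun i hi => ?_
        have : p (i + 1) ≤ u := (hp (Nat.succ_le_of_lt hi)).trans h
        rw [le_cell hp this, le_cell hp (this.trans hut)]
      rw [ih hk', hid, show cell p k t - cell p k s
        = (cell p k t - cell p k u) + (cell p k u - cell p k s) by ring,
        hPsg _ h0 h1 _ _ (sub_nonneg.2 (cell_mono p k hut)) (sub_nonneg.2 (cell_mono p k hsu))]
      rfl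

lemma froz_local {P : ℝ → ℝ → E →L[ℝ] E} {p : ℕ → ℝ} {T : ℝ} (hp : Monotone p)
    (hP0 : ∀ a, 0 ≤ a → a ≤ T → P a 0 = ContinuousLinearMap.id ℝ E)
    {s t : ℝ} (hst : s ≤ t) {i : ℕ} (hi : p i ≤ s) (hi' : t ≤ p (i + 1)) :
    ∀ k, i < k → (∀ i < k, 0 ≤ p i ∧ p i ≤ T) → froz P p k t s = P (p i) (t - s) := by
  intro k
  induction k with
  | zero => intro h; omega
  | succ k ih =>
    intro hik hk
    obtain ⟨h0, h1⟩ := hk k (Nat.lt_succ_self k)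
    have hk' : ∀ i < k, 0 ≤ p i ∧ p i ≤ T := fun i hi => hk i (by omega)
    rcases Nat.lt_succ_iff_lt_or_eq.1 hik with h | h
    · have h2 : t ≤ p k := hi'.trans (hp h)
      rw [froz, ih h hk', cell_le h2, cell_le (hst.trans h2), sub_self, hP0 _ h0 h1]
      rfl
    · subst h
      rw [froz, cell_mid hi (hst.trans hi'), cell_mid (hi.trans hst) hi',
        froz_eq_id hP0 i hk' fun j hj => ?_]
      · rfl
      · have : p (j + 1) ≤ s := (hp (Nat.succ_le_of_lt hj)).trans hi
        rw [le_cell hp this, le_cell hp (this.trans hst)]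

end Froz

/-! ### The setting -/

lemma IsControl.mono {T : ℝ} {ω : ℝ → ℝ → ℝ} (hω : IsControl 0 T ω) {s s' t' t : ℝ} (h0 : 0 ≤ s)
    (h1 : s ≤ s') (h2 : s' ≤ t') (h3 : t' ≤ t) (h4 : t ≤ T) : ω t' s' ≤ ω t s := by
  have a := hω.superadd s s' t h0 h1 (h2.trans h3) h4
  have b := hω.superadd s' t' t (h0.trans h1) h2 h3 h4
  have c := hω.nonneg s' s
  have d := hω.nonneg t t'
  linarith

/-- The standing hypotheses: frozen semigroups `P s`, `Q s` on `X₀`, `X₁` generated by `L s`,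
with the bounds (i)–(iv). -/
structure Setup {X₀ X₁ : Type*} [NormedAddCommGroup X₀] [NormedSpace ℝ X₀]
    [NormedAddCommGroup X₁] [NormedSpace ℝ X₁]
    (J : X₁ →L[ℝ] X₀) (T : ℝ) (L : ℝ → X₁ →L[ℝ] X₀)
    (P : ℝ → ℝ → X₀ →L[ℝ] X₀) (Q : ℝ → ℝ → X₁ →L[ℝ] X₁)
    (lam C ρ : ℝ) (ω : ℝ → ℝ → ℝ) : Prop where
  refl₁ : Function.Surjective (NormedSpace.inclusionInDoubleDual ℝ X₁)
  inj : Function.Injective J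
  dense : DenseRange J
  T_pos : 0 < T
  C_pos : 0 < C
  rho_pos : 0 < ρ
  ctrl : IsControl 0 T ω
  PQ : ∀ s, 0 ≤ s → s ≤ T → ∀ τ, 0 ≤ τ → (P s τ).comp J = J.comp (Q s τ)
  P0 : ∀ s, 0 ≤ s → s ≤ T → P s 0 = ContinuousLinearMap.id ℝ X₀
  Psg : ∀ s, 0 ≤ s → s ≤ T → ∀ τ σ, 0 ≤ τ → 0 ≤ σ → P s (τ + σ) = (P s τ).comp (P s σ)
  Pcont : ∀ s, 0 ≤ s → s ≤ T → ∀ x : X₀, ContinuousOn (fun τ => P s τ x) (Set.Ici 0)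
  Q0 : ∀ s, 0 ≤ s → s ≤ T → Q s 0 = ContinuousLinearMap.id ℝ X₁
  Qsg : ∀ s, 0 ≤ s → s ≤ T → ∀ τ σ, 0 ≤ τ → 0 ≤ σ → Q s (τ + σ) = (Q s τ).comp (Q s σ)
  gen : ∀ s, 0 ≤ s → s ≤ T → ∀ (x : X₁) (τ : ℝ), 0 ≤ τ →
      HasDerivWithinAt (fun r => P s r (J x)) (L s (Q s τ x)) (Set.Ici 0) τ
  Pbdd : ∀ s, 0 ≤ s → s ≤ T → ∀ τ, 0 ≤ τ → ‖P s τ‖ ≤ Real.exp (lam * τ)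
  Qbdd : ∀ s, 0 ≤ s → s ≤ T → ∀ τ, 0 ≤ τ → ‖Q s τ‖ ≤ Real.exp (lam * τ)
  Pid : ∀ s, 0 ≤ s → s ≤ T → ∀ τ, 0 ≤ τ → ‖(P s τ).comp J - J‖ ≤ C * τ
  Psm : ∀ s, 0 ≤ s → s ≤ T → ∀ τ, 0 < τ → ∃ R : X₀ →L[ℝ] X₁,
      J.comp R = P s τ ∧ ‖R‖ ≤ C / τ
  Ppert : ∀ s u, Mem2 0 T s u → ∀ τ, 0 < τ →
      ‖(P s τ).comp J - (P u τ).comp J‖ ≤ C * τ * ω u s ^ ρ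

/-- A common bound for all the exponentials `e^{λτ}`, `0 ≤ τ ≤ T`. -/
noncomputable def expBd (lam T : ℝ) : ℝ := Real.exp (|lam| * T)

lemma exp_le_expBd {lam T τ : ℝ} (h0 : 0 ≤ τ) (h1 : τ ≤ T) :
    Real.exp (lam * τ) ≤ expBd lam T := by
  unfold expBd
  gcongr
  exact le_abs_self lam

lemma expBd_pos (lam T : ℝ) : 0 < expBd lam T := Real.exp_pos _

lemma one_le_expBd {T : ℝ} (lam : ℝ) (hT : 0 ≤ T) : 1 ≤ expBd lam T :=
  Real.one_le_exp (by positivity)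

namespace Setup

variable {X₀ X₁ : Type*} [NormedAddCommGroup X₀] [NormedSpace ℝ X₀]
  [NormedAddCommGroup X₁] [NormedSpace ℝ X₁]
  {J : X₁ →L[ℝ] X₀} {T : ℝ} {L : ℝ → X₁ →L[ℝ] X₀}
  {P : ℝ → ℝ → X₀ →L[ℝ] X₀} {Q : ℝ → ℝ → X₁ →L[ℝ] X₁}
  {lam C ρ : ℝ} {ω : ℝ → ℝ → ℝ}

lemma PJ (H : Setup J T L P Q lam C ρ ω) {s τ : ℝ} (hs : 0 ≤ s) (hsT : s ≤ T) (hτ : 0 ≤ τ)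
    (x : X₁) : P s τ (J x) = J (Q s τ x) := by
  have := congrArg (fun A => A x) (H.PQ s hs hsT τ hτ)
  simpa using this

lemma P_bd (H : Setup J T L P Q lam C ρ ω) {s τ : ℝ} (hs : 0 ≤ s) (hsT : s ≤ T) (hτ : 0 ≤ τ)
    (hτT : τ ≤ T) (x : X₀) : ‖P s τ x‖ ≤ expBd lam T * ‖x‖ :=
  (P s τ).le_of_opNorm_le ((H.Pbdd s hs hsT τ hτ).trans (exp_le_expBd hτ hτT)) x

lemma Q_bd (H : Setup J T L P Q lam C ρ ω) {s τ : ℝ} (hs : 0 ≤ s) (hsT : s ≤ T) (hτ : 0 ≤ τ)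
    (hτT : τ ≤ T) (x : X₁) : ‖Q s τ x‖ ≤ expBd lam T * ‖x‖ :=
  (Q s τ).le_of_opNorm_le ((H.Qbdd s hs hsT τ hτ).trans (exp_le_expBd hτ hτT)) x

lemma P_lip (H : Setup J T L P Q lam C ρ ω) {s τ : ℝ} (hs : 0 ≤ s) (hsT : s ≤ T) (hτ : 0 ≤ τ)
    (x : X₁) : ‖P s τ (J x) - J x‖ ≤ C * τ * ‖x‖ :=
  ((P s τ).comp J - J).le_of_opNorm_le (H.Pid s hs hsT τ hτ) x

lemma P_add (H : Setup J T L P Q lam C ρ ω) {s τ σ : ℝ} (hs : 0 ≤ s) (hsT : s ≤ T) (hτ : 0 ≤ τ)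
    (hσ : 0 ≤ σ) (x : X₀) : P s (τ + σ) x = P s τ (P s σ x) := by
  rw [H.Psg s hs hsT τ σ hτ hσ]; rfl

lemma omega_pow_nonneg (H : Setup J T L P Q lam C ρ ω) (t s : ℝ) : 0 ≤ ω t s ^ ρ :=
  Real.rpow_nonneg (H.ctrl.nonneg t s) ρ

lemma omega_pow_mono (H : Setup J T L P Q lam C ρ ω) {s s' t' t : ℝ} (h0 : 0 ≤ s) (h1 : s ≤ s')
    (h2 : s' ≤ t') (h3 : t' ≤ t) (h4 : t ≤ T) : ω t' s' ^ ρ ≤ ω t s ^ ρ :=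
  Real.rpow_le_rpow (H.ctrl.nonneg _ _) (H.ctrl.mono h0 h1 h2 h3 h4) H.rho_pos.le

lemma P_pert (H : Setup J T L P Q lam C ρ ω) {s u τ : ℝ} (h : Mem2 0 T s u) (hτ : 0 ≤ τ)
    (x : X₁) : ‖P s τ (J x) - P u τ (J x)‖ ≤ C * τ * ω u s ^ ρ * ‖x‖ := by
  rcases hτ.eq_or_lt with h0 | h0
  · subst h0
    rw [H.P0 s h.1 (h.2.1.trans h.2.2), H.P0 u (h.1.trans h.2.1) h.2.2]
    simp
  · exact ((P s τ).comp J - (P u τ).comp J).le_of_opNorm_le (H.Ppert s u h τ h0) x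

lemma P_pert_symm (H : Setup J T L P Q lam C ρ ω) {a b e τ : ℝ} (ha : 0 ≤ a) (haT : a ≤ T)
    (hb : 0 ≤ b) (hbT : b ≤ T) (hab : ω (max a b) (min a b) ^ ρ ≤ e) (hτ : 0 ≤ τ) (x : X₁) :
    ‖P a τ (J x) - P b τ (J x)‖ ≤ C * e * τ * ‖x‖ := by
  have hC := H.C_pos
  rcases le_total a b with h | h
  · rw [max_eq_right h, min_eq_left h] at hab
    refine (H.P_pert ⟨ha, h, hbT⟩ hτ x).trans ?_
    calc _ ≤ C * τ * e * ‖x‖ := by gcongr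
      _ = _ := by ring
  · rw [max_eq_left h, min_eq_right h] at hab
    rw [norm_sub_rev]
    refine (H.P_pert ⟨hb, h, haT⟩ hτ x).trans ?_
    calc _ ≤ C * τ * e * ‖x‖ := by gcongr
      _ = _ := by ring

/-- The control is uniformly small near the diagonal. -/
lemma modulus (H : Setup J T L P Q lam C ρ ω) {ε : ℝ} (hε : 0 < ε) :
    ∃ δ > 0, ∀ s t, Mem2 0 T s t → t - s ≤ δ → ω t s ^ ρ ≤ ε := by
  have hcomp : IsCompact {q : ℝ × ℝ | Mem2 0 T q.2 q.1} := by
    refine (isCompact_Icc (a := ((0, 0) : ℝ × ℝ)) (b := (T, T))).of_isClosed_subset ?_ ?_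
    · simp only [Mem2, Set.ofPred_and]
      refine (isClosed_le continuous_const continuous_snd).inter
        ((isClosed_le continuous_snd continuous_fst).inter
          (isClosed_le continuous_fst continuous_const))
    · rintro ⟨t, s⟩ ⟨h1, h2, h3⟩
      exact ⟨⟨h1.trans h2, h1⟩, ⟨h3, h2.trans h3⟩⟩
  have huc := hcomp.uniformContinuousOn_of_continuous H.ctrl.cont
  rw [Metric.uniformContinuousOn_iff] at huc
  obtain ⟨δ, hδ, h⟩ := huc (ε ^ (1 / ρ)) (by positivity)
  refine ⟨δ / 2, by positivity, fun s t hst hd => ?_⟩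
  have h1 := h (t, s) hst (s, s) ⟨hst.1, le_rfl, hst.2.1.trans hst.2.2⟩ (by
    rw [Prod.dist_eq, dist_self, max_eq_left dist_nonneg, Real.dist_eq,
      abs_of_nonneg (sub_nonneg.2 hst.2.1)]
    linarith)
  simp only [H.ctrl.diag s hst.1 (hst.2.1.trans hst.2.2), Real.dist_eq, sub_zero,
    abs_of_nonneg (H.ctrl.nonneg t s)] at h1
  calc ω t s ^ ρ ≤ (ε ^ (1 / ρ)) ^ ρ :=
        Real.rpow_le_rpow (H.ctrl.nonneg _ _) h1.le H.rho_pos.le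
    _ = ε := by
      rw [← Real.rpow_mul hε.le, one_div, inv_mul_cancel₀ H.rho_pos.ne', Real.rpow_one]

/-- A single frozen semigroup is an evolution family. -/
lemma evo_P (H : Setup J T L P Q lam C ρ ω) {a : ℝ} (ha : 0 ≤ a) (haT : a ≤ T) :
    IsEvo J T (expBd lam T) (C * expBd lam T) (fun t s => P a (t - s)) (fun t s => Q a (t - s)) where
  inter s t h x := H.PJ ha haT (sub_nonneg.2 h.2.1) x
  bd s t h x := H.P_bd ha haT (sub_nonneg.2 h.2.1) (by linarith [h.1, h.2.2]) x
  bd₁ s t h x := H.Q_bd ha haT (sub_nonneg.2 h.2.1) (by linarith [h.1, h.2.2]) x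
  one t _ _ x := by simp [H.P0 a ha haT]
  mul s u t h x := by
    rw [← H.P_add ha haT (sub_nonneg.2 h.2.2.1) (sub_nonneg.2 h.2.1)]
    congr 2; ring
  lip s t h x := by
    refine (H.P_lip ha haT (sub_nonneg.2 h.2.1) x).trans ?_
    have h1 := one_le_expBd lam H.T_pos.le
    have h2 : 0 ≤ t - s := sub_nonneg.2 h.2.1
    have h3 := H.C_pos
    gcongr
    nlinarith

/-- Intertwining of the frozen products on `X₀` and on `X₁`. -/
lemma froz_inter (H : Setup J T L P Q lam C ρ ω) {p : ℕ → ℝ} {s t : ℝ} (hst : s ≤ t) (x : X₁) :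
    ∀ k, (∀ i < k, 0 ≤ p i ∧ p i ≤ T) → froz P p k t s (J x) = J (froz Q p k t s x) := by
  intro k
  induction k with
  | zero => intro _; rfl
  | succ k ih =>
    intro hk
    obtain ⟨h0, h1⟩ := hk k (Nat.lt_succ_self k)
    simp only [froz, ContinuousLinearMap.comp_apply]
    rw [ih fun i hi => hk i (by omega), H.PJ h0 h1 (sub_nonneg.2 (cell_mono p k hst))]

lemma froz_lip (H : Setup J T L P Q lam C ρ ω) {p : ℕ → ℝ} (hp : Monotone p) {s t B : ℝ}
    (hst : s ≤ t) (x : X₁) :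
    ∀ k, (∀ i < k, 0 ≤ p i ∧ p i ≤ T) → (∀ i < k, ‖froz Q p i t s x‖ ≤ B) →
      ‖froz P p k t s (J x) - J x‖ ≤ C * B * (tot p k t - tot p k s) := by
  intro k
  induction k with
  | zero => intro _ _; simp [froz, tot]
  | succ k ih =>
    intro hk hB
    obtain ⟨h0, h1⟩ := hk k (Nat.lt_succ_self k)
    have hk' : ∀ i < k, 0 ≤ p i ∧ p i ≤ T := fun i hi => hk i (by omega)
    have hc := sub_nonneg.2 (cell_mono p k hst)
    simp only [froz, ContinuousLinearMap.comp_apply]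
    have e1 := ih hk' fun i hi => hB i (by omega)
    have e2 := H.P_lip h0 h1 hc (froz Q p k t s x)
    rw [← H.froz_inter hst x k hk'] at e2
    have hCc : 0 ≤ C * (cell p k t - cell p k s) := mul_nonneg H.C_pos.le hc
    have e3 := mul_le_mul_of_nonneg_left (hB k (Nat.lt_succ_self k)) hCc
    rw [tot_succ hp, tot_succ hp]
    calc _ = ‖(P (p k) (cell p k t - cell p k s) (froz P p k t s (J x)) - froz P p k t s (J x))
          + (froz P p k t s (J x) - J x)‖ := by congr 1; abel
      _ ≤ _ := norm_add_le _ _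
      _ ≤ _ := by linarith

/-- Propagators of the problem frozen on a uniform grid of `n + 1` cells. -/
lemma exists_frozen (H : Setup J T L P Q lam C ρ ω) (n : ℕ) :
    ∃ (U : ℝ → ℝ → X₀ →L[ℝ] X₀) (U₁ : ℝ → ℝ → X₁ →L[ℝ] X₁),
      IsEvo J T (expBd lam T) (C * expBd lam T) U U₁ ∧
      (∀ s t, Mem2 0 T s t →
        ‖U t s‖ ≤ Real.exp (lam * (t - s)) ∧ ‖U₁ t s‖ ≤ Real.exp (lam * (t - s))) ∧
      ∀ r, 0 ≤ r → r < T → ∃ a, 0 ≤ a ∧ a ≤ r ∧ r - a ≤ T / (n + 1) ∧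
        ∀ᶠ z in 𝓝[>] r, U z r = P a (z - r) := by
  have hT := H.T_pos
  have hn : (0 : ℝ) < n + 1 := by positivity
  set d : ℝ := T / (n + 1) with hd
  have hd0 : 0 < d := by positivity
  set p : ℕ → ℝ := fun i => i * d with hp
  have hpm : Monotone p := by
    intro i j hij
    simp only [hp]
    gcongr
  have hpN : p (n + 1) = T := by
    simp only [hp, hd]; push_cast; field_simp
  have hp0 : p 0 = 0 := by simp [hp]
  have hpk : ∀ k ≤ n + 1, ∀ i < k, 0 ≤ p i ∧ p i ≤ T := fun k hk i hi =>
    ⟨by rw [← hp0]; exact hpm (Nat.zero_le i), by rw [← hpN]; exact hpm (by omega)⟩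
  have htot : ∀ t, 0 ≤ t → t ≤ T → tot p (n + 1) t = t := by
    intro t h0 h1
    rw [tot, hp0, hpN, min_eq_left h1, max_eq_right h0]
  have hnorm : ∀ s t, Mem2 0 T s t → ‖froz P p (n + 1) t s‖ ≤ Real.exp (lam * (t - s)) ∧
      ‖froz Q p (n + 1) t s‖ ≤ Real.exp (lam * (t - s)) := by
    intro s t h
    have h1 := froz_norm_le hpm h.2.1 H.Pbdd (n + 1) (hpk _ le_rfl)
    have h2 := froz_norm_le hpm h.2.1 H.Qbdd (n + 1) (hpk _ le_rfl)
    rw [htot t (h.1.trans h.2.1) h.2.2, htot s h.1 (h.2.1.trans h.2.2)] at h1 h2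
    exact ⟨h1, h2⟩
  refine ⟨froz P p (n + 1), froz Q p (n + 1), ?_, hnorm, ?_⟩
  · refine ⟨?_, ?_, ?_, ?_, ?_, ?_⟩
    · exact fun s t h x => H.froz_inter h.2.1 x _ (hpk _ le_rfl)
    · exact fun s t h x => ContinuousLinearMap.le_of_opNorm_le _
        ((hnorm s t h).1.trans (exp_le_expBd (sub_nonneg.2 h.2.1) (by linarith [h.1, h.2.2]))) x
    · exact fun s t h x => ContinuousLinearMap.le_of_opNorm_le _
        ((hnorm s t h).2.trans (exp_le_expBd (sub_nonneg.2 h.2.1) (by linarith [h.1, h.2.2]))) x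
    · intro t _ _ x
      rw [froz_eq_id H.P0 _ (hpk _ le_rfl) fun _ _ => rfl]; rfl
    · intro s u t h x
      rw [froz_mul hpm H.P0 H.Psg h.2.1 h.2.2.1 _ (hpk _ le_rfl)]; rfl
    · intro s t h x
      have := H.froz_lip hpm h.2.1 x (n + 1) (hpk _ le_rfl) (B := expBd lam T * ‖x‖) (by
        intro i hi
        refine ContinuousLinearMap.le_of_opNorm_le _
          ((froz_norm_le hpm h.2.1 H.Qbdd i (hpk i (by omega))).trans (exp_le_expBd ?_ ?_)) x
        · exact sub_nonneg.2 (tot_mono p i h.2.1)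
        · have e1 : tot p i t ≤ T := by
            rw [tot, hp0]; exact max_le hT.le ((min_le_left _ _).trans h.2.2)
          have e2 : 0 ≤ tot p i s := by rw [tot, hp0]; exact le_max_left _ _
          linarith)
      rw [htot t (h.1.trans h.2.1) h.2.2, htot s h.1 (h.2.1.trans h.2.2)] at this
      exact this.trans (le_of_eq (by ring))
  · intro r h0 hrT
    -- the cell containing `r`
    set i := ⌊r / d⌋₊ with hi
    have hi1 : p i ≤ r := by
      simp only [hp]
      rw [← le_div_iff₀ hd0]
      exact Nat.floor_le (by positivity)
    have hi2 : r < p (i + 1) := by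
      simp only [hp]
      rw [← div_lt_iff₀ hd0]
      push_cast
      exact Nat.lt_floor_add_one _
    have hiN : i < n + 1 := by
      by_contra hcon
      have := hpm (not_lt.1 hcon)
      linarith
    refine ⟨p i, (hpk _ le_rfl i hiN).1, hi1, ?_, ?_⟩
    · have : p (i + 1) = p i + d := by simp only [hp]; push_cast; ring
      linarith
    · filter_upwards [Ioc_mem_nhdsGT hi2] with z hz
      exact froz_local hpm H.P0 hz.1.le hi1 hz.2 _ hiN (hpk _ le_rfl)

end Setup

/-! ### Construction of the propagator -/

namespace Setup

variable {X₀ X₁ : Type*} [NormedAddCommGroup X₀] [NormedSpace ℝ X₀] [CompleteSpace X₀]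
  [NormedAddCommGroup X₁] [NormedSpace ℝ X₁]
  {J : X₁ →L[ℝ] X₀} {T : ℝ} {L : ℝ → X₁ →L[ℝ] X₀}
  {P : ℝ → ℝ → X₀ →L[ℝ] X₀} {Q : ℝ → ℝ → X₁ →L[ℝ] X₁}
  {lam C ρ : ℝ} {ω : ℝ → ℝ → ℝ}

/-- A bounded sequence of operators that is pointwise Cauchy on the dense subspace `X₁`
converges strongly. -/
lemma exists_limit (hJ : DenseRange J) (A : ℕ → X₀ →L[ℝ] X₀) (c : ℝ)
    (hA : ∀ n, ‖A n‖ ≤ c) (hc : ∀ x, CauchySeq fun n => A n (J x)) :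
    ∃ B : X₀ →L[ℝ] X₀, (∀ x, Tendsto (fun n => A n x) atTop (𝓝 (B x))) ∧ ‖B‖ ≤ c := by
  have hc0 : 0 ≤ c := (norm_nonneg _).trans (hA 0)
  have hcau : ∀ x, CauchySeq fun n => A n x := by
    intro x
    rw [Metric.cauchySeq_iff']
    intro ε hε
    obtain ⟨y, hy⟩ := hJ.exists_dist_lt x (ε := ε / (4 * (c + 1))) (by positivity)
    obtain ⟨N, hN⟩ := Metric.cauchySeq_iff'.1 (hc y) (ε / 2) (by positivity)
    refine ⟨N, fun n hn => ?_⟩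
    have h1 : ∀ m, ‖A m (x - J y)‖ ≤ ε / 4 := by
      intro m
      refine ((A m).le_of_opNorm_le (hA m) _).trans ?_
      rw [dist_eq_norm] at hy
      calc c * ‖x - J y‖ ≤ (c + 1) * (ε / (4 * (c + 1))) := by gcongr; linarith
        _ = ε / 4 := by field_simp
    have h2 := hN n hn
    rw [dist_eq_norm] at h2 ⊢
    calc ‖A n x - A N x‖ = ‖A n (x - J y) - A N (x - J y) + (A n (J y) - A N (J y))‖ := by
          congr 1; simp only [map_sub]; abel
      _ ≤ ‖A n (x - J y)‖ + ‖A N (x - J y)‖ + ‖A n (J y) - A N (J y)‖ :=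
          (norm_add_le _ _).trans (by gcongr; exact norm_sub_le _ _)
      _ < ε := by linarith [h1 n, h1 N]
  choose f hf using fun x => cauchySeq_tendsto_of_complete (hcau x)
  let B₀ : X₀ →ₗ[ℝ] X₀ :=
    { toFun := f
      map_add' := fun x y => tendsto_nhds_unique (hf (x + y))
        (by simpa only [map_add] using (hf x).add (hf y))
      map_smul' := fun r x => tendsto_nhds_unique (hf (r • x))
        (by simpa only [map_smul, RingHom.id_apply] using (hf x).const_smul r) }
  refine ⟨B₀.mkContinuous c fun x => ?_, fun x => hf x, LinearMap.mkContinuous_norm_le _ hc0 _⟩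
  exact le_of_tendsto (hf x).norm (Eventually.of_forall fun n => (A n).le_of_opNorm_le (hA n) x)

/-- Frozen products along grids of vanishing mesh converge to an evolution family, and it satisfies
the Tanabe approximation property. -/
lemma exists_propagator (H : Setup J T L P Q lam C ρ ω) :
    ∃ (S : ℝ → ℝ → X₀ →L[ℝ] X₀) (S₁ : ℝ → ℝ → X₁ →L[ℝ] X₁),
      IsEvo J T (expBd lam T) (C * expBd lam T) S S₁ ∧
      (∀ s t, Mem2 0 T s t →
        ‖S t s‖ ≤ Real.exp (lam * (t - s)) ∧ ‖S₁ t s‖ ≤ Real.exp (lam * (t - s))) ∧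
      ∀ s t, Mem2 0 T s t → ∀ x, ‖S t s (J x) - P s (t - s) (J x)‖ ≤
        expBd lam T ^ 2 * C * (t - s) * ω t s ^ ρ * ‖x‖ := by
  have hT := H.T_pos
  have hC := H.C_pos
  set M := expBd lam T with hMdef
  have hM : 0 < M := expBd_pos _ _
  choose U U₁ hU hUb hUloc using H.exists_frozen
  have hmesh : ∀ δ > 0, ∀ᶠ n : ℕ in atTop, T / ((n : ℝ) + 1) ≤ δ := by
    intro δ hδ
    have := (tendsto_one_div_add_atTop_nhds_zero_nat (𝕜 := ℝ)).const_mul T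
    rw [mul_zero] at this
    filter_upwards [this.eventually (gt_mem_nhds hδ)] with n hn
    rw [mul_one_div] at hn
    exact hn.le
  -- the frozen propagators form a Cauchy sequence from `X₁` to `X₀`
  have hcau : ∀ s t, Mem2 0 T s t → ∀ x, CauchySeq fun n => U n t s (J x) := by
    intro s t hst x
    rw [Metric.cauchySeq_iff]
    intro ε hε
    set D : ℝ := M ^ 2 * C * T * ‖x‖ + 1 with hD
    have hD0 : 0 < D := by positivity
    obtain ⟨δ, hδ, hmod⟩ := H.modulus (ε := ε / (2 * D)) (by positivity)
    obtain ⟨N, hN⟩ := eventually_atTop.1 (hmesh δ hδ)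
    refine ⟨N, fun m hm n hn => ?_⟩
    rw [dist_eq_norm]
    have hκ : 0 ≤ C * (ε / (2 * D)) := by positivity
    have := (hU n).compare hM.le (by positivity) hκ (hU m) hst (by
      intro r hr
      have hr0 : 0 ≤ r := hst.1.trans hr.1
      have hrT : r < T := hr.2.trans_le hst.2.2
      obtain ⟨a, ha, har, had, hal⟩ := hUloc m r hr0 hrT
      obtain ⟨b, hb, hbr, hbd, hbl⟩ := hUloc n r hr0 hrT
      filter_upwards [hal, hbl, self_mem_nhdsWithin] with z hz1 hz2 hz y
      rw [hz1, hz2]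
      refine H.P_pert_symm ha (by linarith) hb (by linarith) ?_ (sub_nonneg.2 (le_of_lt hz)) y
      refine hmod _ _ ⟨le_min ha hb, min_le_max, max_le (by linarith) (by linarith)⟩ ?_
      have h1 := hN m hm
      have h2 := hN n hn
      rcases le_total a b with h | h
      · rw [max_eq_right h, min_eq_left h]; linarith
      · rw [max_eq_left h, min_eq_right h]; linarith) x
    refine this.trans_lt ?_
    have h3 : t - s ≤ T := by linarith [hst.1, hst.2.2]
    calc M ^ 2 * (C * (ε / (2 * D))) * (t - s) * ‖x‖
        ≤ M ^ 2 * (C * (ε / (2 * D))) * T * ‖x‖ := by gcongr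
      _ = (D - 1) * (ε / (2 * D)) := by rw [hD]; ring
      _ < D * (ε / (2 * D)) := by
          have : 0 < ε / (2 * D) := by positivity
          nlinarith
      _ = ε / 2 := by field_simp
      _ < ε := by linarith
  have hex : ∀ t s, ∃ (A : X₀ →L[ℝ] X₀) (A₁ : X₁ →L[ℝ] X₁), Mem2 0 T s t →
      (∀ x, Tendsto (fun n => U n t s x) atTop (𝓝 (A x))) ∧
      ‖A‖ ≤ Real.exp (lam * (t - s)) ∧ ‖A₁‖ ≤ Real.exp (lam * (t - s)) ∧
      ∀ x, A (J x) = J (A₁ x) := by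
    intro t s
    by_cases hst : Mem2 0 T s t
    · obtain ⟨A, hA, hAb⟩ := exists_limit H.dense (fun n => U n t s) _
        (fun n => (hUb n s t hst).1) (hcau s t hst)
      obtain ⟨A₁, h1, h2⟩ := exists_lift J H.inj (A.comp J) (Real.exp (lam * (t - s)))
        (Real.exp_pos _).le (by
          intro x
          refine exists_preimage_of_tendsto H.refl₁ J (fun n => U₁ n t s x) _
            (fun n => (U₁ n t s).le_of_opNorm_le (hUb n s t hst).2 x) _ ?_
          have := hA (J x)
          simp only [fun n => (hU n).inter s t hst x] at this
          exact this)
      refine ⟨A, A₁, fun _ => ⟨hA, hAb, h2, fun x => ?_⟩⟩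
      have := congrArg (fun B => B x) h1
      simpa using this.symm
    · exact ⟨0, 0, fun h => absurd h hst⟩
  choose S S₁ hS using hex
  refine ⟨S, S₁, ⟨?_, ?_, ?_, ?_, ?_, ?_⟩, ?_, ?_⟩
  · exact fun s t h x => (hS t s h).2.2.2 x
  · exact fun s t h x => ContinuousLinearMap.le_of_opNorm_le _
      ((hS t s h).2.1.trans (exp_le_expBd (sub_nonneg.2 h.2.1) (by linarith [h.1, h.2.2]))) x
  · exact fun s t h x => ContinuousLinearMap.le_of_opNorm_le _
      ((hS t s h).2.2.1.trans (exp_le_expBd (sub_nonneg.2 h.2.1) (by linarith [h.1, h.2.2]))) x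
  · intro t h0 h1 x
    have := (hS t t ⟨h0, le_rfl, h1⟩).1 x
    simp only [fun n => (hU n).one t h0 h1 x] at this
    exact tendsto_nhds_unique this tendsto_const_nhds
  · intro s u t h x
    have m1 : Mem2 0 T s t := ⟨h.1, h.2.1.trans h.2.2.1, h.2.2.2⟩
    have m2 : Mem2 0 T u t := ⟨h.1.trans h.2.1, h.2.2.1, h.2.2.2⟩
    have m3 : Mem2 0 T s u := ⟨h.1, h.2.1, h.2.2.1.trans h.2.2.2⟩
    refine tendsto_nhds_unique ((hS t s m1).1 x) ?_
    have e1 := (hS t u m2).1 (S u s x)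
    have e2 : Tendsto (fun n => U n t u (U n u s x - S u s x)) atTop (𝓝 0) := by
      refine squeeze_zero_norm (fun n => (hU n).bd u t m2 _) ?_
      have := (((hS u s m3).1 x).sub_const (S u s x)).norm.const_mul M
      simpa using this
    have e3 := e1.add e2
    rw [add_zero] at e3
    refine e3.congr fun n => ?_
    rw [(hU n).mul s u t h, map_sub]; abel
  · intro s t h x
    exact le_of_tendsto (((hS t s h).1 (J x)).sub_const (J x)).norm
      (Eventually.of_forall fun n => (hU n).lip s t h x)
  · exact fun s t h => ⟨(hS t s h).2.1, (hS t s h).2.2.1⟩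
  · intro s t hst x
    have hw := H.omega_pow_nonneg t s
    have hts : 0 ≤ t - s := sub_nonneg.2 hst.2.1
    have hsT : s ≤ T := hst.2.1.trans hst.2.2
    -- tags to the left of `s` contribute an error `ε` that vanishes with the mesh
    have hε : ∀ ε > 0, ‖S t s (J x) - P s (t - s) (J x)‖ ≤
        M ^ 2 * (C * (ω t s ^ ρ + ε)) * (t - s) * ‖x‖ := by
      intro ε hε
      obtain ⟨δ, hδ, hmod⟩ := H.modulus hε
      refine le_of_tendsto (((hS t s hst).1 (J x)).sub_const (P s (t - s) (J x))).norm ?_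
      filter_upwards [hmesh δ hδ] with n hn
      refine (H.evo_P hst.1 hsT).compare hM.le (by positivity) (by positivity) (hU n) hst ?_ x
      intro r hr
      have hr0 : 0 ≤ r := hst.1.trans hr.1
      have hrT : r < T := hr.2.trans_le hst.2.2
      obtain ⟨a, ha, har, had, hal⟩ := hUloc n r hr0 hrT
      filter_upwards [hal, self_mem_nhdsWithin] with z hz1 hz y
      rw [hz1]
      refine H.P_pert_symm ha (by linarith) hst.1 hsT ?_ (sub_nonneg.2 (le_of_lt hz)) y
      rcases le_total a s with h | h
      · rw [max_eq_right h, min_eq_left h]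
        have := hmod a s ⟨ha, h, hsT⟩ (by linarith [hr.1])
        linarith
      · rw [max_eq_left h, min_eq_right h]
        have := H.omega_pow_mono hst.1 le_rfl h (har.trans hr.2.le) hst.2.2
        linarith
    have hlim : Tendsto (fun ε : ℝ => M ^ 2 * (C * (ω t s ^ ρ + ε)) * (t - s) * ‖x‖) (𝓝[>] 0)
        (𝓝 (M ^ 2 * (C * (ω t s ^ ρ + 0)) * (t - s) * ‖x‖)) := by
      refine Tendsto.mono_left (Continuous.tendsto ?_ 0) nhdsWithin_le_nhds
      fun_prop
    refine (ge_of_tendsto hlim ?_).trans (le_of_eq (by ring))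
    filter_upwards [self_mem_nhdsWithin] with ε hpos
    exact hε ε hpos

end Setup

/-! ### Strong continuity and differentiability -/

section Evo

variable {X₀ X₁ : Type*} [NormedAddCommGroup X₀] [NormedSpace ℝ X₀]
  [NormedAddCommGroup X₁] [NormedSpace ℝ X₁]

/-- An evolution family is strongly continuous: it is Lipschitz on `X₁`, which is dense. -/
lemma IsEvo.continuousOn {J : X₁ →L[ℝ] X₀} {T M K : ℝ} {S : ℝ → ℝ → X₀ →L[ℝ] X₀}
    {S₁ : ℝ → ℝ → X₁ →L[ℝ] X₁} (hM : 0 < M) (hK : 0 ≤ K) (hJ : DenseRange J)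
    (E : IsEvo J T M K S S₁) (x : X₀) :
    ContinuousOn (fun q : ℝ × ℝ => S q.1 q.2 x) {q : ℝ × ℝ | Mem2 0 T q.2 q.1} := by
  have ht : ∀ y s t t', Mem2 0 T s t → t ≤ t' → t' ≤ T →
      ‖S t' s (J y) - S t s (J y)‖ ≤ K * M * ‖y‖ * (t' - t) := by
    intro y s t t' h h1 h2
    rw [E.mul s t t' ⟨h.1, h.2.1, h1, h2⟩, E.inter s t h]
    refine (E.lip t t' ⟨h.1.trans h.2.1, h1, h2⟩ _).trans ?_
    have h3 := E.bd₁ s t h y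
    have h4 : 0 ≤ K * (t' - t) := mul_nonneg hK (sub_nonneg.2 h1)
    calc _ ≤ K * (t' - t) * (M * ‖y‖) := by gcongr
      _ = _ := by ring
  have hs : ∀ y s s' t, 0 ≤ s → s ≤ s' → s' ≤ t → t ≤ T →
      ‖S t s' (J y) - S t s (J y)‖ ≤ K * M * ‖y‖ * (s' - s) := by
    intro y s s' t h h1 h2 h3
    rw [E.mul s s' t ⟨h, h1, h2, h3⟩, ← map_sub]
    refine (E.bd s' t ⟨h.trans h1, h2, h3⟩ _).trans ?_
    rw [norm_sub_rev]
    calc _ ≤ M * (K * (s' - s) * ‖y‖) := by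
          gcongr
          exact E.lip s s' ⟨h, h1, h2.trans h3⟩ y
      _ = _ := by ring
  have hy : ∀ y, ContinuousOn (fun q : ℝ × ℝ => S q.1 q.2 (J y))
      {q : ℝ × ℝ | Mem2 0 T q.2 q.1} := by
    intro y
    have hG : 0 ≤ K * M * ‖y‖ := by positivity
    refine LipschitzOnWith.continuousOn (K := Real.toNNReal (3 * (K * M * ‖y‖)))
      (LipschitzOnWith.of_dist_le_mul ?_)
    rintro ⟨t, s⟩ h ⟨t', s'⟩ h'
    simp only [Set.mem_ofPred_eq] at h h'
    rw [Real.coe_toNNReal _ (by positivity), dist_eq_norm]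
    -- move both end times up to the larger one, then compare the initial times
    set m := max t t' with hm
    have hmT : m ≤ T := max_le h.2.2 h'.2.2
    have d1 : |t - t'| ≤ dist (t, s) (t', s') := by
      rw [← Real.dist_eq, Prod.dist_eq]; exact le_max_left _ _
    have d2 : |s - s'| ≤ dist (t, s) (t', s') := by
      rw [← Real.dist_eq, Prod.dist_eq]; exact le_max_right _ _
    have e1 := ht y s t m h (le_max_left _ _) hmT
    have e2 := ht y s' t' m h' (le_max_right _ _) hmT
    have e3 : ‖S m s (J y) - S m s' (J y)‖ ≤ K * M * ‖y‖ * |s - s'| := by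
      rcases le_total s s' with k | k
      · rw [norm_sub_rev, abs_sub_comm, abs_of_nonneg (sub_nonneg.2 k)]
        exact hs y s s' m h.1 k (h'.2.1.trans (le_max_right _ _)) hmT
      · rw [abs_of_nonneg (sub_nonneg.2 k)]
        exact hs y s' s m h'.1 k (h.2.1.trans (le_max_left _ _)) hmT
    have f1 : m - t ≤ |t - t'| := by
      rcases max_cases t t' with ⟨k, _⟩ | ⟨k, _⟩ <;> rw [hm, k]
      · simp
      · rw [abs_sub_comm]; exact le_abs_self _
    have f2 : m - t' ≤ |t - t'| := by
      rcases max_cases t t' with ⟨k, _⟩ | ⟨k, _⟩ <;> rw [hm, k]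
      · exact le_abs_self _
      · simp
    have g1 := mul_le_mul_of_nonneg_left (f1.trans d1) hG
    have g2 := mul_le_mul_of_nonneg_left (f2.trans d1) hG
    have g3 := mul_le_mul_of_nonneg_left d2 hG
    calc ‖S t s (J y) - S t' s' (J y)‖
        = ‖-(S m s (J y) - S t s (J y)) + (S m s (J y) - S m s' (J y))
          + (S m s' (J y) - S t' s' (J y))‖ := by congr 1; abel
      _ ≤ ‖-(S m s (J y) - S t s (J y))‖ + ‖S m s (J y) - S m s' (J y)‖
          + ‖S m s' (J y) - S t' s' (J y)‖ := norm_add₃_le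
      _ ≤ _ := by rw [norm_neg]; linarith
  refine continuousOn_of_uniform_approx_of_continuousOn fun u hu => ?_
  obtain ⟨ε, hε, hsub⟩ := Metric.mem_uniformity_dist.1 hu
  obtain ⟨y, hyx⟩ := hJ.exists_dist_lt x (ε := ε / M) (by positivity)
  refine ⟨_, hy y, fun q hq => hsub ?_⟩
  rw [dist_eq_norm, ← map_sub]
  refine (E.bd q.2 q.1 hq _).trans_lt ?_
  rw [dist_eq_norm] at hyx
  calc M * ‖x - J y‖ < M * (ε / M) := by gcongr
    _ = ε := by field_simp

end Evo

lemma hasDerivWithinAt_iff_eps {F : Type*} [NormedAddCommGroup F] [NormedSpace ℝ F]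
    {f : ℝ → F} {f' : F} {A : Set ℝ} {x : ℝ} :
    HasDerivWithinAt f f' A x ↔ ∀ ε > 0, ∃ δ > 0, ∀ r ∈ A, |r - x| < δ →
      ‖f r - f x - (r - x) • f'‖ ≤ ε * |r - x| := by
  rw [hasDerivWithinAt_iff_isLittleO, Asymptotics.isLittleO_iff]
  refine forall₂_congr fun ε _ => ?_
  rw [Metric.nhdsWithin_basis_ball.eventually_iff]
  refine exists_congr fun δ => and_congr Iff.rfl ?_
  constructor
  · intro h r hr hd
    exact h ⟨by simpa [Real.dist_eq] using hd, hr⟩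
  · intro h r hr
    exact h r hr.2 (by simpa [Real.dist_eq] using hr.1)

namespace Setup

variable {X₀ X₁ : Type*} [NormedAddCommGroup X₀] [NormedSpace ℝ X₀]
  [NormedAddCommGroup X₁] [NormedSpace ℝ X₁]
  {J : X₁ →L[ℝ] X₀} {T : ℝ} {L : ℝ → X₁ →L[ℝ] X₀}
  {P : ℝ → ℝ → X₀ →L[ℝ] X₀} {Q : ℝ → ℝ → X₁ →L[ℝ] X₁}
  {lam C ρ D K : ℝ} {ω : ℝ → ℝ → ℝ} {S : ℝ → ℝ → X₀ →L[ℝ] X₀} {S₁ : ℝ → ℝ → X₁ →L[ℝ] X₁}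

/-- Tanabe approximation with the coefficients frozen at a later time `c`. -/
lemma approx_later (H : Setup J T L P Q lam C ρ ω) (hD : 0 ≤ D)
    (hS : ∀ s t, Mem2 0 T s t → ∀ x, ‖S t s (J x) - P s (t - s) (J x)‖ ≤
        D * (t - s) * ω t s ^ ρ * ‖x‖)
    {a b c : ℝ} (ha : 0 ≤ a) (hab : a ≤ b) (hbc : b ≤ c) (hc : c ≤ T) (x : X₁) :
    ‖S b a (J x) - P c (b - a) (J x)‖ ≤ (D + C) * (b - a) * ω c a ^ ρ * ‖x‖ := by
  have h1 := hS a b ⟨ha, hab, hbc.trans hc⟩ x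
  have h2 := H.P_pert (τ := b - a) ⟨ha, hab.trans hbc, hc⟩ (sub_nonneg.2 hab) x
  have h3 : D * (b - a) * ω b a ^ ρ * ‖x‖ ≤ D * (b - a) * ω c a ^ ρ * ‖x‖ := by
    have := H.omega_pow_mono ha le_rfl hab hbc hc
    have h4 := sub_nonneg.2 hab
    gcongr
  calc _ = ‖(S b a (J x) - P a (b - a) (J x)) + (P a (b - a) (J x) - P c (b - a) (J x))‖ := by
        congr 1; abel
    _ ≤ _ := norm_add_le _ _
    _ ≤ _ := by linarith

/-- First-order expansion of `S b a` on `X₁` when one of the end points is the fixed time `c`. -/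
lemma expansion (H : Setup J T L P Q lam C ρ ω) (hD : 0 ≤ D)
    (hS : ∀ s t, Mem2 0 T s t → ∀ x, ‖S t s (J x) - P s (t - s) (J x)‖ ≤
        D * (t - s) * ω t s ^ ρ * ‖x‖)
    {c : ℝ} (hc : 0 ≤ c) (hcT : c ≤ T) (y : X₁) {ε : ℝ} (hε : 0 < ε) :
    ∃ δ > 0, ∀ a b, Mem2 0 T a b → (a = c ∨ b = c) → b - a < δ →
      ‖S b a (J y) - J y - (b - a) • L c y‖ ≤ ε * (b - a) := by
  have hC := H.C_pos
  have hg := hasDerivWithinAt_iff_eps.1 (H.gen c hc hcT y 0 le_rfl)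
  obtain ⟨δ₁, hδ₁, h1⟩ := hg (ε / 2) (by positivity)
  have hGpos : 0 < 2 * ((D + C) * ‖y‖ + 1) := by positivity
  obtain ⟨δ₂, hδ₂, h2⟩ := H.modulus (ε := ε / (2 * ((D + C) * ‖y‖ + 1))) (by positivity)
  refine ⟨min δ₁ δ₂, lt_min hδ₁ hδ₂, fun a b hab hor hlt => ?_⟩
  have hba : 0 ≤ b - a := sub_nonneg.2 hab.2.1
  have e1 := h1 (b - a) hba (by
    rw [sub_zero, abs_of_nonneg hba]; exact hlt.trans_le (min_le_left _ _))
  rw [sub_zero, abs_of_nonneg hba, H.P0 c hc hcT, H.Q0 c hc hcT] at e1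
  simp only [ContinuousLinearMap.id_apply] at e1
  have e2 : ‖S b a (J y) - P c (b - a) (J y)‖ ≤ (D + C) * (b - a) * ω b a ^ ρ * ‖y‖ := by
    rcases hor with rfl | rfl
    · refine (hS a b hab y).trans ?_
      have := H.omega_pow_nonneg b a
      gcongr
      linarith
    · exact H.approx_later hD hS hab.1 hab.2.1 le_rfl hab.2.2 y
  have e3 := h2 a b hab (hlt.le.trans (min_le_right _ _))
  have e4 : (D + C) * (b - a) * ω b a ^ ρ * ‖y‖ ≤ ε / 2 * (b - a) := by
    calc (D + C) * (b - a) * ω b a ^ ρ * ‖y‖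
        = ((D + C) * ‖y‖) * ω b a ^ ρ * (b - a) := by ring
      _ ≤ ((D + C) * ‖y‖ + 1) * (ε / (2 * ((D + C) * ‖y‖ + 1))) * (b - a) := by
          have := H.omega_pow_nonneg b a
          gcongr
          linarith
      _ = ε / 2 * (b - a) := by field_simp
  calc _ = ‖(S b a (J y) - P c (b - a) (J y)) + (P c (b - a) (J y) - J y - (b - a) • L c y)‖ := by
        congr 1; abel
    _ ≤ _ := norm_add_le _ _
    _ ≤ _ := by linarith

/-- Quantitative form of the left regularity of `r ↦ S₁ r s x` at `t`. The parameter `α` fixes the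
smoothing time `α h`, and `k` the number of steps of length `h` one goes back in time, beyond which
the frozen semigroup has already regularized. -/
lemma left_est (H : Setup J T L P Q lam C ρ ω) (hD : 0 ≤ D)
    (E : IsEvo J T (expBd lam T) K S S₁)
    (hS : ∀ s t, Mem2 0 T s t → ∀ x, ‖S t s (J x) - P s (t - s) (J x)‖ ≤
        D * (t - s) * ω t s ^ ρ * ‖x‖)
    {s t h α k η : ℝ} (hst : Mem2 0 T s t) (x : X₁) (hα : 0 < α) (hα1 : α ≤ 1) (hk : 0 < k)
    (hh : 0 < h) (hkh : (k + 1) * h ≤ t - s) (hη : ω t (t - (k + 1) * h) ^ ρ ≤ η) :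
    ‖P t h (J (S₁ (t - h) s x - S₁ t s x)) - J (S₁ (t - h) s x - S₁ t s x)‖ ≤
      h * (C * (expBd lam T * ‖x‖) * (expBd lam T * C ^ 2 / k
        + 2 * C * (D + C) * (k + 1) * η / α + 2 * (expBd lam T + 1) * α)) := by
  have hC := H.C_pos
  set M := expBd lam T with hMdef
  have hM : 0 < M := expBd_pos _ _
  have hs := hst.1
  have htT := hst.2.2
  have hkh0 : 0 < k * h := by positivity
  have hexp : (k + 1) * h = k * h + h := by ring
  have ht0 : 0 ≤ t := hs.trans hst.2.1
  have hhT : h ≤ T := by linarith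
  have hαh : α * h ≤ h := by nlinarith
  have hαh0 : 0 < α * h := by positivity
  set B := M * ‖x‖ with hB
  have hB0 : 0 ≤ B := by positivity
  set v := S₁ (t - h) s x - S₁ t s x with hv
  set t₀ := t - (k + 1) * h with ht₀
  set w := S₁ t₀ s x with hw
  have m0 : Mem2 0 T s t₀ := ⟨hs, by linarith, by linarith⟩
  have m1 : Mem2 0 T s (t - h) := ⟨hs, by linarith, by linarith⟩
  have hwB : ‖w‖ ≤ B := E.bd₁ _ _ m0 x
  have hvB : ‖v‖ ≤ 2 * B := by
    refine (norm_sub_le _ _).trans ?_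
    linarith [E.bd₁ _ _ m1 x, E.bd₁ _ _ hst x]
  have hη0 : 0 ≤ η := (H.omega_pow_nonneg _ _).trans hη
  -- both states are compared with the frozen evolution of the common ancestor `w`
  have e1 : ‖J (S₁ (t - h) s x) - P t (k * h) (J w)‖ ≤ (D + C) * (k * h) * η * ‖w‖ := by
    rw [← E.inter _ _ m1, E.mul s t₀ (t - h) ⟨hs, by linarith, by linarith, by linarith⟩,
      E.inter _ _ m0, show k * h = (t - h) - t₀ by rw [ht₀]; ring]
    refine (H.approx_later (c := t) hD hS (by linarith) (by linarith) (by linarith) htT _).trans ?_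
    have : 0 ≤ t - h - t₀ := by linarith
    gcongr
  have e2 : ‖J (S₁ t s x) - P t (k * h + h) (J w)‖ ≤ (D + C) * (k * h + h) * η * ‖w‖ := by
    rw [← E.inter _ _ hst, E.mul s t₀ t ⟨hs, by linarith, by linarith, by linarith⟩,
      E.inter _ _ m0, show k * h + h = t - t₀ by rw [ht₀]; ring]
    refine (H.approx_later (c := t) hD hS (by linarith) (by linarith) (by linarith) htT _).trans ?_
    have : 0 ≤ t - t₀ := by linarith
    gcongr
  obtain ⟨R, hR, hRb⟩ := H.Psm t ht0 htT (α * h) hαh0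
  obtain ⟨R', hR', hRb'⟩ := H.Psm t ht0 htT (k * h) hkh0
  have hRa : ∀ z, J (R z) = P t (α * h) z := fun z => by rw [← hR]; rfl
  have hRa' : ∀ z, J (R' z) = P t (k * h) z := fun z => by rw [← hR']; rfl
  have hRJ : ∀ z, R (J z) = Q t (α * h) z := fun z => H.inj (by
    rw [hRa, H.PJ ht0 htT hαh0.le])
  have hQv : Q t (α * h) v = R ((J (S₁ (t - h) s x) - P t (k * h) (J w))
      - (J (S₁ t s x) - P t (k * h + h) (J w))) + Q t (α * h) (R' (J w - P t h (J w))) := by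
    rw [← hRJ, ← hRJ, hRa', ← map_add, hv, H.P_add ht0 htT hkh0.le hh.le]
    congr 1
    simp only [map_sub]
    abel
  have e3 : ‖Q t (α * h) v‖ ≤ (M * C ^ 2 / k + 2 * C * (D + C) * (k + 1) * η / α) * B := by
    rw [hQv]
    refine (norm_add_le _ _).trans ?_
    have a1 := (R.le_of_opNorm_le hRb ((J (S₁ (t - h) s x) - P t (k * h) (J w))
      - (J (S₁ t s x) - P t (k * h + h) (J w))))
    have a2 : ‖(J (S₁ (t - h) s x) - P t (k * h) (J w))
      - (J (S₁ t s x) - P t (k * h + h) (J w))‖ ≤ 2 * (D + C) * ((k + 1) * h) * η * B := by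
      refine (norm_sub_le _ _).trans ?_
      have b1 : (D + C) * (k * h) * η * ‖w‖ ≤ (D + C) * ((k + 1) * h) * η * B := by
        gcongr; linarith
      have b2 : (D + C) * (k * h + h) * η * ‖w‖ ≤ (D + C) * ((k + 1) * h) * η * B := by
        rw [hexp]; gcongr
      linarith
    have a3 : C / (α * h) * ‖(J (S₁ (t - h) s x) - P t (k * h) (J w))
      - (J (S₁ t s x) - P t (k * h + h) (J w))‖ ≤
        C / (α * h) * (2 * (D + C) * ((k + 1) * h) * η * B) := by gcongr
    have a4 : C / (α * h) * (2 * (D + C) * ((k + 1) * h) * η * B)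
        = 2 * C * (D + C) * (k + 1) * η / α * B := by field_simp
    have a5 := H.Q_bd ht0 htT hαh0.le (hαh.trans hhT) (R' (J w - P t h (J w)))
    have a6 := R'.le_of_opNorm_le hRb' (J w - P t h (J w))
    have a7 : ‖J w - P t h (J w)‖ ≤ C * h * B := by
      rw [norm_sub_rev]
      refine (H.P_lip ht0 htT hh.le w).trans (by gcongr)
    have a8 : M * ‖R' (J w - P t h (J w))‖ ≤ M * (C / (k * h) * (C * h * B)) := by
      gcongr
      exact a6.trans (by gcongr)
    have a9 : M * (C / (k * h) * (C * h * B)) = M * C ^ 2 / k * B := by field_simp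
    linarith
  -- split off a smoothing over time `α h`
  have e4 := H.P_lip ht0 htT hh.le (Q t (α * h) v)
  rw [← H.PJ ht0 htT hαh0.le] at e4
  have e5 := H.P_lip ht0 htT hαh0.le v
  have e6 := H.P_bd ht0 htT hh.le hhT (P t (α * h) (J v) - J v)
  have e7 : C * (α * h) * ‖v‖ ≤ C * (α * h) * (2 * B) := by gcongr
  have e8 : C * h * ‖Q t (α * h) v‖ ≤
      C * h * ((M * C ^ 2 / k + 2 * C * (D + C) * (k + 1) * η / α) * B) := by gcongr
  calc ‖P t h (J v) - J v‖ = ‖(P t h (P t (α * h) (J v)) - P t (α * h) (J v))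
        + ((P t (α * h) (J v) - J v) - P t h (P t (α * h) (J v) - J v))‖ := by
        congr 1; simp only [map_sub]; abel
    _ ≤ C * h * ‖Q t (α * h) v‖ + (C * (α * h) * (2 * B) + M * (C * (α * h) * (2 * B))) := by
        refine (norm_add_le _ _).trans (add_le_add e4 ((norm_sub_le _ _).trans
          (add_le_add (e5.trans e7) (e6.trans ?_))))
        gcongr
        exact e5.trans e7
    _ ≤ _ := by
        refine (add_le_add_left e8 _).trans (le_of_eq ?_)
        ring

/-- `r ↦ S₁ r s x` is left-continuous at `t` in the averaged sense needed for the left derivative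
(strong left-continuity in `X₁` is not claimed). -/
lemma left_small (H : Setup J T L P Q lam C ρ ω) (hD : 0 ≤ D)
    (E : IsEvo J T (expBd lam T) K S S₁)
    (hS : ∀ s t, Mem2 0 T s t → ∀ x, ‖S t s (J x) - P s (t - s) (J x)‖ ≤
        D * (t - s) * ω t s ^ ρ * ‖x‖)
    {s t : ℝ} (hst : Mem2 0 T s t) (hlt : s < t) (x : X₁) {ε : ℝ} (hε : 0 < ε) :
    ∃ δ > 0, ∀ h, 0 < h → h < δ →
      ‖P t h (J (S₁ (t - h) s x - S₁ t s x)) - J (S₁ (t - h) s x - S₁ t s x)‖ ≤ ε * h := by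
  have hC := H.C_pos
  have hM : 0 < expBd lam T := expBd_pos _ _
  set M := expBd lam T with hMdef
  set G := C * (M * ‖x‖) + 1 with hG
  have hG0 : 0 < G := by positivity
  set α := min 1 (ε / (6 * G * (M + 1))) with hα
  have hα0 : 0 < α := by positivity
  have hα2 : α ≤ ε / (6 * G * (M + 1)) := min_le_right _ _
  set k := 3 * G * M * C ^ 2 / ε with hk
  have hk0 : 0 < k := by positivity
  set η := ε * α / (6 * G * C * (D + C) * (k + 1)) with hη
  have hη0 : 0 < η := by positivity
  obtain ⟨δ₀, hδ₀, hmod⟩ := H.modulus hη0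
  refine ⟨min δ₀ (t - s) / (k + 1), div_pos (lt_min hδ₀ (by linarith)) (by linarith), ?_⟩
  intro h h0 h1
  have h2 : (k + 1) * h < min δ₀ (t - s) := by
    rw [lt_div_iff₀ (by positivity)] at h1; linarith
  have h3 : (k + 1) * h ≤ t - s := h2.le.trans (min_le_right _ _)
  have h4 : 0 < (k + 1) * h := by positivity
  have h5 := hmod (t - (k + 1) * h) t ⟨by linarith [hst.1], by linarith, hst.2.2⟩
    (by rw [sub_sub_cancel]; exact h2.le.trans (min_le_left _ _))
  refine (H.left_est hD E hS hst x hα0 (min_le_left _ _) hk0 h0 h3 h5).trans ?_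
  rw [mul_comm ε h]
  gcongr
  have a1 : M * C ^ 2 / k = ε / (3 * G) := by rw [hk]; field_simp
  have a2 : 2 * C * (D + C) * (k + 1) * η / α = ε / (3 * G) := by
    have : 0 < D + C := by positivity
    rw [hη]; field_simp; norm_num
  have a3 : 2 * (M + 1) * α ≤ ε / (3 * G) := by
    calc 2 * (M + 1) * α ≤ 2 * (M + 1) * (ε / (6 * G * (M + 1))) := by gcongr
      _ = ε / (3 * G) := by field_simp; norm_num
  rw [← hMdef, a1, a2]
  calc _ ≤ G * (ε / (3 * G) + ε / (3 * G) + ε / (3 * G)) := by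
        gcongr
        linarith
    _ = ε := by field_simp; norm_num

lemma deriv_t (H : Setup J T L P Q lam C ρ ω) (hD : 0 ≤ D)
    (E : IsEvo J T (expBd lam T) K S S₁)
    (hS : ∀ s t, Mem2 0 T s t → ∀ x, ‖S t s (J x) - P s (t - s) (J x)‖ ≤
        D * (t - s) * ω t s ^ ρ * ‖x‖)
    {s t : ℝ} (hst : Mem2 0 T s t) (x : X₁) :
    HasDerivWithinAt (fun r => S r s (J x)) (L t (S₁ t s x)) (Set.Icc s T) t := by
  rw [hasDerivWithinAt_iff_eps]
  intro ε hε
  have hC := H.C_pos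
  have hM : 0 < expBd lam T := expBd_pos _ _
  set M := expBd lam T with hMdef
  set y := S₁ t s x with hy
  have ht0 : 0 ≤ t := hst.1.trans hst.2.1
  obtain ⟨δ₁, hδ₁, h1⟩ := H.expansion hD hS ht0 hst.2.2 y (ε := ε / 3) (by positivity)
  set G := (D + C) * (2 * (M * ‖x‖)) + 1 with hG
  have hG0 : 0 < G := by positivity
  obtain ⟨δ₂, hδ₂, h2⟩ := H.modulus (ε := ε / (3 * G)) (by positivity)
  obtain ⟨δ₃, hδ₃, h3⟩ : ∃ δ > 0, s < t → ∀ h, 0 < h → h < δ →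
      ‖P t h (J (S₁ (t - h) s x - S₁ t s x)) - J (S₁ (t - h) s x - S₁ t s x)‖ ≤ ε / 3 * h := by
    by_cases hlt : s < t
    · obtain ⟨δ, hδ, h⟩ := H.left_small hD E hS hst hlt x (ε := ε / 3) (by positivity)
      exact ⟨δ, hδ, fun _ => h⟩
    · exact ⟨1, one_pos, fun h => absurd h hlt⟩
  refine ⟨min δ₁ (min δ₂ δ₃), by positivity, fun r hr hd => ?_⟩
  have d1 := hd.trans_le (min_le_left _ _)
  have d2 := hd.trans_le ((min_le_right _ _).trans (min_le_left _ _))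
  have d3 := hd.trans_le ((min_le_right _ _).trans (min_le_right _ _))
  rcases le_or_gt t r with htr | htr
  · rw [abs_of_nonneg (sub_nonneg.2 htr)] at *
    rw [E.mul s t r ⟨hst.1, hst.2.1, htr, hr.2⟩, E.inter s t hst]
    refine (h1 t r ⟨ht0, htr, hr.2⟩ (Or.inl rfl) d1).trans ?_
    have := sub_nonneg.2 htr
    nlinarith
  · have hrt : 0 < t - r := sub_pos.2 htr
    rw [abs_sub_comm, abs_of_pos hrt] at *
    have mr : Mem2 0 T s r := ⟨hst.1, hr.1, hr.2⟩
    have mrt : Mem2 0 T r t := ⟨hst.1.trans hr.1, htr.le, hst.2.2⟩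
    have e1 := h1 r t mrt (Or.inr rfl) d1
    have e3 := h3 (hr.1.trans_lt htr) (t - r) hrt d3
    rw [sub_sub_cancel] at e3
    set v := S₁ r s x - S₁ t s x with hv
    have e2 := H.approx_later hD hS mrt.1 htr.le le_rfl hst.2.2 v
    have hvB : ‖v‖ ≤ 2 * (M * ‖x‖) := by
      refine (norm_sub_le _ _).trans ?_
      linarith [E.bd₁ _ _ mr x, E.bd₁ _ _ hst x]
    have e4 : (D + C) * (t - r) * ω t r ^ ρ * ‖v‖ ≤ ε / 3 * (t - r) := by
      have h5 := h2 r t mrt d2.le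
      have h6 := H.omega_pow_nonneg t r
      calc _ = (D + C) * ‖v‖ * ω t r ^ ρ * (t - r) := by ring
        _ ≤ G * (ε / (3 * G)) * (t - r) := by
            gcongr
            have : (D + C) * ‖v‖ ≤ (D + C) * (2 * (M * ‖x‖)) := by gcongr
            linarith
        _ = ε / 3 * (t - r) := by field_simp
    have e5 : S t s (J x) = S t r (J (S₁ r s x)) := by
      rw [E.mul s r t ⟨hst.1, hr.1, htr.le, hst.2.2⟩, E.inter s r mr]
    have e6 : J (S₁ r s x) = J y + J v := by rw [hv, map_sub]; abel
    calc ‖S r s (J x) - S t s (J x) - (r - t) • L t y‖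
        = ‖-((S t r (J y) - J y - (t - r) • L t y) + (S t r (J v) - P t (t - r) (J v))
            + (P t (t - r) (J v) - J v))‖ := by
          congr 1
          rw [e5, E.inter s r mr, e6, map_add, show r - t = -(t - r) by ring, neg_smul]
          abel
      _ ≤ ‖S t r (J y) - J y - (t - r) • L t y‖ + ‖S t r (J v) - P t (t - r) (J v)‖
            + ‖P t (t - r) (J v) - J v‖ := by rw [norm_neg]; exact norm_add₃_le
      _ ≤ ε * (t - r) := by linarith

lemma deriv_s (H : Setup J T L P Q lam C ρ ω) (hD : 0 ≤ D) (hK : 0 ≤ K)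
    (E : IsEvo J T (expBd lam T) K S S₁)
    (hS : ∀ s t, Mem2 0 T s t → ∀ x, ‖S t s (J x) - P s (t - s) (J x)‖ ≤
        D * (t - s) * ω t s ^ ρ * ‖x‖)
    {s t : ℝ} (hst : Mem2 0 T s t) (x : X₁) :
    HasDerivWithinAt (fun r => S t r (J x)) (-(S t s (L s x))) (Set.Icc 0 t) s := by
  rw [hasDerivWithinAt_iff_eps]
  intro ε hε
  have hM : 0 < expBd lam T := expBd_pos _ _
  set M := expBd lam T with hMdef
  have hsT : s ≤ T := hst.2.1.trans hst.2.2
  obtain ⟨δ₁, hδ₁, h1⟩ := H.expansion hD hS hst.1 hsT x (ε := ε / (2 * M)) (by positivity)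
  have hcont := E.continuousOn hM hK H.dense (L s x) (t, s) hst
  obtain ⟨δ₂, hδ₂, h2⟩ := Metric.continuousWithinAt_iff.1 hcont (ε / 2) (by positivity)
  refine ⟨min δ₁ δ₂, lt_min hδ₁ hδ₂, fun r hr hd => ?_⟩
  have d1 := hd.trans_le (min_le_left _ _)
  have d2 := hd.trans_le (min_le_right _ _)
  rcases le_or_gt s r with hsr | hsr
  · have m1 : Mem2 0 T r t := ⟨hr.1, hr.2, hst.2.2⟩
    have h0 : 0 ≤ r - s := sub_nonneg.2 hsr
    have e2 := h2 (x := (t, r)) m1 (by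
      rw [Prod.dist_eq, dist_self, max_eq_right dist_nonneg, Real.dist_eq]; exact d2)
    rw [dist_eq_norm] at e2
    rw [abs_of_nonneg h0] at *
    have e1 := h1 s r ⟨hst.1, hsr, hr.2.trans hst.2.2⟩ (Or.inl rfl) d1
    have e3 := E.bd _ _ m1 (S r s (J x) - J x - (r - s) • L s x)
    have e4 : M * ‖S r s (J x) - J x - (r - s) • L s x‖ ≤ ε / 2 * (r - s) := by
      calc _ ≤ M * (ε / (2 * M) * (r - s)) := by gcongr
        _ = _ := by field_simp
    calc _ = ‖-(S t r (S r s (J x) - J x - (r - s) • L s x))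
          - (r - s) • (S t r (L s x) - S t s (L s x))‖ := by
          congr 1
          rw [E.mul s r t ⟨hst.1, hsr, hr.2, hst.2.2⟩ (J x)]
          simp only [map_sub, map_smul, smul_sub, smul_neg]
          abel
      _ ≤ ‖S t r (S r s (J x) - J x - (r - s) • L s x)‖
          + (r - s) * ‖S t r (L s x) - S t s (L s x)‖ := by
          refine (norm_sub_le _ _).trans ?_
          rw [norm_neg, norm_smul, Real.norm_of_nonneg h0]
      _ ≤ ε / 2 * (r - s) + (r - s) * (ε / 2) := by
          gcongr
          exact e3.trans e4
      _ = _ := by ring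
  · have h0 : 0 < s - r := sub_pos.2 hsr
    rw [abs_sub_comm, abs_of_pos h0] at *
    have e1 := h1 r s ⟨hr.1, hsr.le, hsT⟩ (Or.inr rfl) d1
    have e3 := E.bd _ _ hst (S s r (J x) - J x - (s - r) • L s x)
    calc _ = ‖S t s (S s r (J x) - J x - (s - r) • L s x)‖ := by
          congr 1
          rw [E.mul r s t ⟨hr.1, hsr.le, hst.2.1, hst.2.2⟩ (J x),
            show r - s = -(s - r) by ring]
          simp only [map_sub, map_smul, smul_neg, neg_smul]
          abel
      _ ≤ M * (ε / (2 * M) * (s - r)) := e3.trans (by gcongr)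
      _ = ε / 2 * (s - r) := by field_simp
      _ ≤ _ := by nlinarith

end Setup

/-! ### Good starting points for the control -/

/-- Every interval `[s,t]` contains, in its left half, a time `u` to the right of which the control
decays geometrically along geometric scales. Among the first quarter of an interval and the quarter
following it, one carries at most half of the control by superadditivity; `u` is the common point of
the resulting nested intervals. This makes an integrability condition at `u` automatic. -/
lemma IsControl.good_point {T : ℝ} {ω : ℝ → ℝ → ℝ} (hω : IsControl 0 T ω) {s t : ℝ}
    (hst : Mem2 0 T s t) :
    ∃ u, s ≤ u ∧ u ≤ s + (t - s) / 2 ∧ ∀ k : ℕ, u + (t - s) / 2 / 4 ^ k ≤ t ∧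
      ω (u + (t - s) / 2 / 4 ^ k) u ≤ ω t s / 2 ^ k := by
  classical
  obtain ⟨hs, hst', htT⟩ := hst
  have hh : 0 ≤ t - s := sub_nonneg.2 hst'
  set l : ℕ → ℝ := fun k => (t - s) / 4 ^ k with hl
  have hl0 : ∀ k, 0 ≤ l k := fun k => by positivity
  have hls : ∀ k, l (k + 1) = l k / 4 := fun k => by simp only [hl, pow_succ]; ring
  let a : ℕ → ℝ := fun k => Nat.rec s
    (fun k x => if ω (x + l k / 4) x ≤ ω (x + l k) x / 2 then x else x + l k / 4) k
  have ha0 : a 0 = s := rfl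
  have has : ∀ k, a (k + 1) =
      if ω (a k + l k / 4) (a k) ≤ ω (a k + l k) (a k) / 2 then a k else a k + l k / 4 :=
    fun k => rfl
  have hstep : ∀ k, a k ≤ a (k + 1) ∧ a (k + 1) ≤ a k + l k / 4 := by
    intro k
    rw [has]
    have := hl0 k
    split_ifs <;> constructor <;> linarith
  have inv : ∀ k, s ≤ a k ∧ a k + l k ≤ t ∧ ω (a k + l k) (a k) ≤ ω t s / 2 ^ k := by
    intro k
    induction k with
    | zero => simp [ha0, hl]
    | succ k ih =>
      obtain ⟨i1, i2, i3⟩ := ih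
      have h1 := hstep k
      have h2 := hl0 k
      refine ⟨i1.trans h1.1, by rw [hls]; linarith, ?_⟩
      have : ω (a (k + 1) + l (k + 1)) (a (k + 1)) ≤ ω (a k + l k) (a k) / 2 := by
        rw [hls, has]
        split_ifs with hc
        · exact hc
        · have := hω.superadd (a k) (a k + l k / 4) (a k + l k) (by linarith) (by linarith)
            (by linarith) (by linarith)
          have h3 := hω.mono (s := a k + l k / 4) (s' := a k + l k / 4)
            (t' := a k + l k / 4 + l k / 4) (t := a k + l k) (by linarith) le_rfl (by linarith)
            (by linarith) (by linarith)
          push Not at hc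
          linarith
      calc _ ≤ _ := this
        _ ≤ ω t s / 2 ^ k / 2 := by linarith
        _ = _ := by rw [pow_succ]; ring
  have hmem := Monotone.ciSup_mem_iInter_Icc_of_antitone
    (f := a) (g := fun k => a k + l k / 2) (monotone_nat_of_le_succ fun k => (hstep k).1)
    (antitone_nat_of_succ_le fun k => by
      have := hl0 k; have := hstep k; rw [hls]; linarith)
    (fun k => by have := hl0 k; simp only; linarith)
  rw [Set.mem_iInter] at hmem
  generalize (⨆ n, a n) = u at hmem
  have hl2 : ∀ k, (t - s) / 2 / 4 ^ k = l k / 2 := fun k => by simp only [hl]; ring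
  refine ⟨u, (hmem 0).1, ?_, fun k => ?_⟩
  · simpa [hl, ha0] using (hmem 0).2
  · have h1 : a k ≤ u := (hmem k).1
    have h2 : u ≤ a k + l k / 2 := (hmem k).2
    obtain ⟨i1, i2, i3⟩ := inv k
    have := hl0 k
    rw [hl2]
    exact ⟨by linarith, (hω.mono (by linarith) h1 (by linarith) (by linarith)
      (by linarith)).trans i3⟩

/-! ### Parabolic smoothing -/

namespace Setup

variable {X₀ X₁ : Type*} [NormedAddCommGroup X₀] [NormedSpace ℝ X₀]
  [NormedAddCommGroup X₁] [NormedSpace ℝ X₁]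
  {J : X₁ →L[ℝ] X₀} {T : ℝ} {L : ℝ → X₁ →L[ℝ] X₀}
  {P : ℝ → ℝ → X₀ →L[ℝ] X₀} {Q : ℝ → ℝ → X₁ →L[ℝ] X₁}
  {lam C ρ D K : ℝ} {ω : ℝ → ℝ → ℝ} {S : ℝ → ℝ → X₀ →L[ℝ] X₀} {S₁ : ℝ → ℝ → X₁ →L[ℝ] X₁}

/-- Tanabe approximation of `S b a` with the coefficients frozen at an earlier time `u`. -/
lemma approx_earlier (H : Setup J T L P Q lam C ρ ω) (hD : 0 ≤ D)
    (hS : ∀ s t, Mem2 0 T s t → ∀ x, ‖S t s (J x) - P s (t - s) (J x)‖ ≤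
        D * (t - s) * ω t s ^ ρ * ‖x‖)
    {u a b : ℝ} (hu : 0 ≤ u) (hua : u ≤ a) (hab : a ≤ b) (hb : b ≤ T) (x : X₁) :
    ‖S b a (J x) - P u (b - a) (J x)‖ ≤ (D + C) * (b - a) * ω b u ^ ρ * ‖x‖ := by
  have h1 := hS a b ⟨hu.trans hua, hab, hb⟩ x
  have h2 := H.P_pert (τ := b - a) ⟨hu, hua, hab.trans hb⟩ (sub_nonneg.2 hab) x
  rw [norm_sub_rev] at h2
  have h4 := sub_nonneg.2 hab
  have hC := H.C_pos
  have h3 : D * (b - a) * ω b a ^ ρ * ‖x‖ ≤ D * (b - a) * ω b u ^ ρ * ‖x‖ := by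
    have := H.omega_pow_mono hu hua hab le_rfl hb
    gcongr
  have h5 : C * (b - a) * ω a u ^ ρ * ‖x‖ ≤ C * (b - a) * ω b u ^ ρ * ‖x‖ := by
    have := H.omega_pow_mono hu le_rfl hua hab hb
    gcongr
  calc _ = ‖(S b a (J x) - P a (b - a) (J x)) + (P a (b - a) (J x) - P u (b - a) (J x))‖ := by
        congr 1; abel
    _ ≤ _ := norm_add_le _ _
    _ ≤ _ := by linarith

/-- The bootstrap step for smoothing. Here `R : X₀ → X₁` is a regularized identity, `J R = e^{ε L_t}`.
A bound `B / (t - r)` for the norms of `R S t r` improves to `(4 M³ C + B / 2) / (t - r)`: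
starting from a good point `u`, one compares `S t u` with `S t r (e^{(r-u) L_u})` for `r`
decreasing geometrically to `u`. -/
lemma smoothing_step (H : Setup J T L P Q lam C ρ ω) (hD : 0 ≤ D) (hK : 0 ≤ K)
    (E : IsEvo J T (expBd lam T) K S S₁)
    (hS : ∀ s t, Mem2 0 T s t → ∀ x, ‖S t s (J x) - P s (t - s) (J x)‖ ≤
        D * (t - s) * ω t s ^ ρ * ‖x‖)
    {δ : ℝ} (hδ : ∀ s t, Mem2 0 T s t → t - s ≤ δ →
      ω t s ^ ρ ≤ (1 - (1 / 2) ^ ρ) / (12 * expBd lam T * C * (D + C)))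
    {t ε : ℝ} (htT : t ≤ T) (hε : 0 ≤ ε) (hεT : ε ≤ T) {R : X₀ →L[ℝ] X₁}
    (hR : J.comp R = P t ε) {B : ℝ} (hB : 0 ≤ B)
    (hb : ∀ r, 0 ≤ r → r < t → t - r ≤ δ → ∀ x, ‖R (S t r x)‖ ≤ B / (t - r) * ‖x‖) :
    ∀ s, 0 ≤ s → s < t → t - s ≤ δ → ∀ x, ‖R (S t s x)‖ ≤
      (4 * expBd lam T ^ 3 * C + B / 2) / (t - s) * ‖x‖ := by
  intro s hs hst hsδ
  have hC := H.C_pos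
  set M := expBd lam T with hM'
  have hM : 0 < M := expBd_pos _ _
  have h0 : 0 < t - s := sub_pos.2 hst
  have ht0 : 0 ≤ t := by linarith
  set q : ℝ := (1 / 2) ^ ρ with hq
  have hq0 : 0 < q := by positivity
  have hq1 : q < 1 := Real.rpow_lt_one (by norm_num) (by norm_num) H.rho_pos
  set η := (1 - q) / (12 * M * C * (D + C)) with hη
  have hη0 : 0 < η := div_pos (by linarith) (by positivity)
  have hm : Mem2 0 T s ((s + t) / 2) := ⟨hs, by linarith, by linarith⟩
  obtain ⟨u, hsu, hu2, hk⟩ := H.ctrl.good_point hm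
  set c := (t - s) / 4 with hc
  have hc0 : 0 < c := by positivity
  have hcc : ((s + t) / 2 - s) / 2 = c := by rw [hc]; ring
  rw [hcc] at hu2 hk
  set r : ℕ → ℝ := fun k => u + c / 4 ^ k with hr
  have hru : ∀ k, u < r k := fun k => by
    have : 0 < c / 4 ^ k := by positivity
    simp only [hr]; linarith
  have hrm : ∀ k, r k ≤ (s + t) / 2 := fun k => (hk k).1
  have hrs : ∀ k, r k - u = c / 4 ^ k := fun k => by simp [hr]
  have hrr : ∀ k, r k - r (k + 1) = 3 * (c / 4 ^ (k + 1)) := fun k => by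
    simp only [hr, pow_succ]; ring
  have hpos : ∀ k : ℕ, 0 < c / 4 ^ k := fun k => by positivity
  have hωk : ∀ k, ω (r k) u ^ ρ ≤ η * q ^ k := by
    intro k
    have h1 : ω (r k) u ^ ρ ≤ (ω ((s + t) / 2) s / 2 ^ k) ^ ρ :=
      Real.rpow_le_rpow (H.ctrl.nonneg _ _) (hk k).2 H.rho_pos.le
    have h2 : (ω ((s + t) / 2) s / 2 ^ k) ^ ρ = ω ((s + t) / 2) s ^ ρ * q ^ k := by
      rw [div_eq_mul_one_div, Real.mul_rpow (H.ctrl.nonneg _ _) (by positivity), hq,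
        ← Real.rpow_natCast ((1 / 2 : ℝ) ^ ρ), ← Real.rpow_mul (by norm_num), mul_comm ρ,
        Real.rpow_mul (by norm_num), Real.rpow_natCast, one_div_pow]
    have h3 := hδ s ((s + t) / 2) hm (by linarith)
    rw [h2] at h1
    exact h1.trans (by gcongr)
  have hsT : s ≤ T := by linarith
  have hu0 : 0 ≤ u := hs.trans hsu
  have hut : u < t := by linarith
  have hRJ : ∀ y, R (J y) = Q t ε y := fun y => H.inj (by
    rw [← H.PJ ht0 htT hε, ← hR]; rfl)
  have main : ∀ x, ‖R (S t u x)‖ ≤ (4 * M ^ 2 * C + B / (2 * M)) / (t - s) * ‖x‖ := by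
    intro x
    set z : ℕ → X₁ := fun k => R (S t (r k) (P u (r k - u) x)) with hz
    have hz0 : ‖z 0‖ ≤ 4 * M ^ 2 * C / (t - s) * ‖x‖ := by
      obtain ⟨R₀, hR₀, hR₀b⟩ := H.Psm u hu0 (by linarith) (r 0 - u) (by linarith [hru 0])
      have m : Mem2 0 T (r 0) t := ⟨by linarith [hru 0], by linarith [hrm 0], htT⟩
      have e : z 0 = Q t ε (S₁ t (r 0) (R₀ x)) := by
        simp only [hz]
        rw [← hR₀, ContinuousLinearMap.comp_apply, E.inter _ _ m, hRJ]
      rw [hrs, pow_zero, div_one] at hR₀b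
      rw [e]
      calc _ ≤ M * ‖S₁ t (r 0) (R₀ x)‖ := H.Q_bd ht0 htT hε hεT _
        _ ≤ M * (M * (C / c * ‖x‖)) := by
          gcongr
          exact (E.bd₁ _ _ m _).trans (by gcongr; exact R₀.le_of_opNorm_le hR₀b x)
        _ = _ := by rw [hc]; field_simp
    have hzs : ∀ k, dist (z k) (z (k + 1)) ≤ (6 * B * C * (D + C) * η / (t - s) * ‖x‖) * q ^ k := by
      intro k
      obtain ⟨R₀, hR₀, hR₀b⟩ := H.Psm u hu0 (by linarith) (r (k + 1) - u) (by linarith [hru (k + 1)])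
      have hle : r (k + 1) ≤ r k := by linarith [hrr k, hpos (k + 1)]
      have hkt : r k < t := by linarith [hrm k]
      have e : z (k + 1) - z k = R (S t (r k) (S (r k) (r (k + 1)) (J (R₀ x))
          - P u (r k - r (k + 1)) (J (R₀ x)))) := by
        simp only [hz]
        have e1 : J (R₀ x) = P u (r (k + 1) - u) x := by rw [← hR₀]; rfl
        rw [e1, ← H.P_add hu0 (by linarith) (by linarith) (by linarith [hru (k + 1)]),
          map_sub, map_sub, E.mul (r (k + 1)) (r k) t
            ⟨by linarith [hru (k + 1)], hle, hkt.le, htT⟩]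
        congr 5
        ring
      rw [dist_comm, dist_eq_norm, e]
      have h1 := hb (r k) (by linarith [hru k]) hkt (by linarith [hru k])
        (S (r k) (r (k + 1)) (J (R₀ x)) - P u (r k - r (k + 1)) (J (R₀ x)))
      have h2 := H.approx_earlier hD hS hu0 (hru (k + 1)).le hle (by linarith) (R₀ x)
      have h3 : ‖R₀ x‖ ≤ C / (c / 4 ^ (k + 1)) * ‖x‖ := by
        rw [hrs] at hR₀b; exact R₀.le_of_opNorm_le hR₀b x
      have h4 : B / (t - r k) ≤ B / ((t - s) / 2) := by
        gcongr; linarith [hrm k]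
      have h5 := hωk k
      have hp := hpos (k + 1)
      generalize P u (r k - r (k + 1)) (J (R₀ x)) = v at h1 h2
      rw [hrr] at h2
      calc _ ≤ _ := h1
        _ ≤ B / ((t - s) / 2) * ((D + C) * (3 * (c / 4 ^ (k + 1))) * (η * q ^ k) *
              (C / (c / 4 ^ (k + 1)) * ‖x‖)) := by
          have h6 : 0 ≤ B / ((t - s) / 2) := by positivity
          refine mul_le_mul h4 (h2.trans ?_) (norm_nonneg _) h6
          gcongr
        _ = _ := by field_simp; ring
    have hrlim : Tendsto r atTop (𝓝 u) := by
      have := ((tendsto_pow_atTop_nhds_zero_of_lt_one (r := (1 / 4 : ℝ)) (by norm_num)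
        (by norm_num)).const_mul c).const_add u
      simp only [mul_zero, add_zero] at this
      refine this.congr fun k => ?_
      simp only [hr, one_div, inv_pow]; ring
    have hlim : Tendsto z atTop (𝓝 (R (S t u x))) := by
      refine (R.continuous.tendsto _).comp ?_
      have a1 : Tendsto (fun k => S t (r k) x) atTop (𝓝 (S t u x)) := by
        have h1 := E.continuousOn hM hK H.dense x (t, u) ⟨hu0, hut.le, htT⟩
        refine Tendsto.comp (f := fun k => (t, r k)) h1 (tendsto_nhdsWithin_iff.2 ⟨?_, ?_⟩)
        · exact tendsto_const_nhds.prodMk_nhds hrlim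
        · exact Eventually.of_forall fun k =>
            ⟨by simp only; linarith [hru k], by simp only; linarith [hrm k], htT⟩
      have a2 : Tendsto (fun k => P u (r k - u) x) atTop (𝓝 x) := by
        have h1 := H.Pcont u hu0 (by linarith) x 0 (Set.mem_Ici.2 le_rfl)
        have h2 : Tendsto (fun k => r k - u) atTop (𝓝[Set.Ici 0] 0) := by
          refine tendsto_nhdsWithin_iff.2 ⟨?_, Eventually.of_forall fun k => ?_⟩
          · simpa using hrlim.sub_const u
          · exact Set.mem_Ici.2 (by linarith [hru k])
        have h3 := Tendsto.comp h1 h2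
        simp only [H.P0 u hu0 (hut.le.trans htT)] at h3
        exact h3
      have a3 : Tendsto (fun k => S t (r k) (P u (r k - u) x - x)) atTop (𝓝 0) := by
        refine squeeze_zero_norm (a := fun k => M * ‖P u (r k - u) x - x‖) (fun k => ?_) ?_
        · exact E.bd _ _ ⟨by linarith [hru k], by linarith [hrm k], htT⟩ _
        · simpa using ((a2.sub_const x).norm).const_mul M
      have := a3.add a1
      rw [zero_add] at this
      refine this.congr fun k => ?_
      simp
    have hd := dist_le_of_le_geometric_of_tendsto₀ q _ hq1 hzs hlim
    have e1 : 6 * B * C * (D + C) * η / (t - s) * ‖x‖ / (1 - q) = B / (2 * M) / (t - s) * ‖x‖ := by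
      have h6 : 1 - q ≠ 0 := by linarith
      have h7 : D + C ≠ 0 := by positivity
      rw [hη]; field_simp; ring
    rw [e1, dist_comm, dist_eq_norm] at hd
    calc ‖R (S t u x)‖ = ‖(R (S t u x) - z 0) + z 0‖ := by rw [sub_add_cancel]
      _ ≤ _ := norm_add_le _ _
      _ ≤ B / (2 * M) / (t - s) * ‖x‖ + 4 * M ^ 2 * C / (t - s) * ‖x‖ := add_le_add hd hz0
      _ = _ := by ring
  intro x
  rw [E.mul s u t ⟨hs, hsu, hut.le, htT⟩]
  refine (main _).trans ?_
  have := E.bd s u ⟨hs, hsu, by linarith⟩ x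
  calc _ ≤ (4 * M ^ 2 * C + B / (2 * M)) / (t - s) * (M * ‖x‖) := by gcongr
    _ = _ := by field_simp

/-- `S t s` maps `X₀` to `X₁`, with norm of order `(t - s)⁻¹`. Iterating the bootstrap step bounds
`e^{ε L_t} S t s : X₀ → X₁` uniformly in `ε`; reflexivity allows one to let `ε → 0`. -/
lemma smoothing (H : Setup J T L P Q lam C ρ ω) (hD : 0 ≤ D) (hK : 0 ≤ K)
    (E : IsEvo J T (expBd lam T) K S S₁)
    (hS : ∀ s t, Mem2 0 T s t → ∀ x, ‖S t s (J x) - P s (t - s) (J x)‖ ≤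
        D * (t - s) * ω t s ^ ρ * ‖x‖) :
    ∃ N : ℝ, ∀ s t, Mem2 0 T s t → s < t →
      ∃ R : X₀ →L[ℝ] X₁, J.comp R = S t s ∧ ‖R‖ ≤ N / (t - s) := by
  have hC := H.C_pos
  have hT := H.T_pos
  have hM : 0 < expBd lam T := expBd_pos _ _
  have hη : 0 < (1 - (1 / 2 : ℝ) ^ ρ) / (12 * expBd lam T * C * (D + C)) :=
    div_pos (sub_pos.2 (Real.rpow_lt_one (by norm_num) (by norm_num) H.rho_pos)) (by positivity)
  obtain ⟨δ, hδ0, hδ⟩ := H.modulus hη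
  set M := expBd lam T with hMdef
  set A := 4 * M ^ 3 * C with hA
  have hA0 : 0 < A := by positivity
  -- the uniform bound for short times
  have short : ∀ t ε, t ≤ T → 0 ≤ ε → ε ≤ T → ∀ R : X₀ →L[ℝ] X₁, J.comp R = P t ε →
      ∀ s, 0 ≤ s → s < t → t - s ≤ δ → ∀ x, ‖R (S t s x)‖ ≤ 2 * A / (t - s) * ‖x‖ := by
    intro t ε htT hε hεT R hR
    have iter : ∀ n : ℕ, ∀ s, 0 ≤ s → s < t → t - s ≤ δ → ∀ x,
        ‖R (S t s x)‖ ≤ (2 * A + ‖R‖ * M * T / 2 ^ n) / (t - s) * ‖x‖ := by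
      intro n
      induction n with
      | zero =>
        intro s hs hst _ x
        have h1 := E.bd s t ⟨hs, hst.le, htT⟩ x
        have h2 : 0 < t - s := sub_pos.2 hst
        have h3 : ‖R‖ * M ≤ (2 * A + ‖R‖ * M * T / 2 ^ 0) / (t - s) := by
          rw [le_div_iff₀ h2, pow_zero, div_one]
          have h4 : ‖R‖ * M * (t - s) ≤ ‖R‖ * M * T := by gcongr; linarith
          linarith
        calc _ ≤ ‖R‖ * ‖S t s x‖ := R.le_opNorm _
          _ ≤ ‖R‖ * (M * ‖x‖) := by gcongr
          _ = ‖R‖ * M * ‖x‖ := by ring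
          _ ≤ _ := by gcongr
      | succ n ih =>
        intro s hs hst hsδ x
        have := H.smoothing_step hD hK E hS hδ htT hε hεT hR
          (B := 2 * A + ‖R‖ * M * T / 2 ^ n) (by positivity) ih s hs hst hsδ x
        refine this.trans (le_of_eq ?_)
        rw [← hMdef, ← hA, pow_succ]
        congr 2
        field_simp
        ring
    intro s hs hst hsδ x
    have hlim : Tendsto (fun n : ℕ => (2 * A + ‖R‖ * M * T / 2 ^ n) / (t - s) * ‖x‖) atTop
        (𝓝 ((2 * A + 0) / (t - s) * ‖x‖)) := by
      refine ((Tendsto.const_add _ ?_).div_const _).mul_const _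
      exact tendsto_const_nhds.div_atTop (tendsto_pow_atTop_atTop_of_one_lt (by norm_num))
    rw [add_zero] at hlim
    exact ge_of_tendsto' hlim fun n => iter n s hs hst hsδ x
  set N := 2 * A + 2 * A * M * T / δ with hN
  have hN0 : 0 ≤ N := by positivity
  -- longer times are reduced to the last stretch of length `δ`
  have all : ∀ t ε, t ≤ T → 0 ≤ ε → ε ≤ T → ∀ R : X₀ →L[ℝ] X₁, J.comp R = P t ε →
      ∀ s, 0 ≤ s → s < t → ∀ x, ‖R (S t s x)‖ ≤ N / (t - s) * ‖x‖ := by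
    intro t ε htT hε hεT R hR s hs hst x
    have h2 : 0 < t - s := sub_pos.2 hst
    rcases le_total (t - s) δ with h | h
    · refine (short t ε htT hε hεT R hR s hs hst h x).trans ?_
      gcongr
      rw [hN]
      have : 0 ≤ 2 * A * M * T / δ := by positivity
      linarith
    · rw [E.mul s (t - δ) t ⟨hs, by linarith, by linarith, htT⟩]
      have h3 := short t ε htT hε hεT R hR (t - δ) (by linarith) (by linarith) (by linarith)
        (S (t - δ) s x)
      have h4 := E.bd s (t - δ) ⟨hs, by linarith, by linarith⟩ x
      rw [sub_sub_cancel] at h3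
      have h5 : 2 * A / δ * M ≤ N / (t - s) := by
        rw [le_div_iff₀ h2, hN]
        have h6 : 2 * A / δ * M * (t - s) ≤ 2 * A / δ * M * T := by gcongr; linarith
        have h7 : 2 * A / δ * M * T = 2 * A * M * T / δ := by ring
        linarith
      calc _ ≤ _ := h3
        _ ≤ 2 * A / δ * (M * ‖x‖) := by gcongr
        _ = 2 * A / δ * M * ‖x‖ := by ring
        _ ≤ _ := by gcongr
  refine ⟨N, fun s t hst hlt => ?_⟩
  have ht0 : 0 ≤ t := hst.1.trans hst.2.1
  have h2 : 0 < t - s := sub_pos.2 hlt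
  refine exists_lift J H.inj (S t s) (N / (t - s)) (by positivity) fun x => ?_
  have hε : ∀ n : ℕ, 0 < T / ((n : ℝ) + 1) := fun n => by positivity
  have hεT : ∀ n : ℕ, T / ((n : ℝ) + 1) ≤ T := fun n =>
    div_le_self hT.le (by have : (0 : ℝ) ≤ n := Nat.cast_nonneg n; linarith)
  choose R hR _ using fun n : ℕ => H.Psm t ht0 hst.2.2 (T / ((n : ℝ) + 1)) (hε n)
  refine exists_preimage_of_tendsto H.refl₁ J (fun n => R n (S t s x)) _
    (fun n => all t _ hst.2.2 (hε n).le (hεT n) (R n) (hR n) s hst.1 hlt x) _ ?_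
  have h1 := H.Pcont t ht0 hst.2.2 (S t s x) 0 (Set.mem_Ici.2 le_rfl)
  have h3 : Tendsto (fun n : ℕ => T / ((n : ℝ) + 1)) atTop (𝓝[Set.Ici 0] 0) := by
    refine tendsto_nhdsWithin_iff.2 ⟨?_, Eventually.of_forall fun n => (hε n).le⟩
    exact tendsto_const_nhds.div_atTop
      (tendsto_atTop_add_const_right _ _ tendsto_natCast_atTop_atTop)
  have h4 := Tendsto.comp h1 h3
  simp only [H.P0 t ht0 hst.2.2] at h4
  refine h4.congr fun n => ?_
  simp only [Function.comp]
  rw [← hR n]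
  rfl

/-! ### Uniqueness -/

/-- Two evolution families with the Tanabe approximation property agree on `X₁`: they differ
locally by an arbitrarily small multiple of the time step. -/
lemma unique_on (H : Setup J T L P Q lam C ρ ω) {D' : ℝ} (hK : 0 ≤ K)
    {S' : ℝ → ℝ → X₀ →L[ℝ] X₀} {S₁' : ℝ → ℝ → X₁ →L[ℝ] X₁} (hD : 0 ≤ D) (hD' : 0 ≤ D')
    (E : IsEvo J T (expBd lam T) K S S₁) (E' : IsEvo J T (expBd lam T) K S' S₁')
    (hS : ∀ s t, Mem2 0 T s t → ∀ x, ‖S t s (J x) - P s (t - s) (J x)‖ ≤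
        D * (t - s) * ω t s ^ ρ * ‖x‖)
    (hS' : ∀ s t, Mem2 0 T s t → ∀ x, ‖S' t s (J x) - P s (t - s) (J x)‖ ≤
        D' * (t - s) * ω t s ^ ρ * ‖x‖)
    {s t : ℝ} (hst : Mem2 0 T s t) (x : X₁) : S' t s (J x) = S t s (J x) := by
  have hM : 0 < expBd lam T := expBd_pos _ _
  have key : ∀ ε > 0, ‖S' t s (J x) - S t s (J x)‖ ≤
      expBd lam T ^ 2 * ((D + D') * ε) * (t - s) * ‖x‖ := by
    intro ε hε
    obtain ⟨δ, hδ, hmod⟩ := H.modulus hε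
    refine E.compare hM.le hK (by positivity) E' hst ?_ x
    intro r hr
    filter_upwards [Ioo_mem_nhdsGT (lt_min hr.2 (by linarith : r < r + δ))] with z hz y
    have hz1 : z < t := hz.2.trans_le (min_le_left _ _)
    have hz2 : z < r + δ := hz.2.trans_le (min_le_right _ _)
    have m : Mem2 0 T r z := ⟨hst.1.trans hr.1, hz.1.le, by linarith [hst.2.2]⟩
    have h1 := hmod r z m (by linarith)
    have h0 : 0 ≤ z - r := sub_nonneg.2 hz.1.le
    calc _ = ‖(S' z r (J y) - P r (z - r) (J y)) - (S z r (J y) - P r (z - r) (J y))‖ := by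
          congr 1; abel
      _ ≤ _ := norm_sub_le _ _
      _ ≤ D' * (z - r) * ω z r ^ ρ * ‖y‖ + D * (z - r) * ω z r ^ ρ * ‖y‖ :=
          add_le_add (hS' r z m y) (hS r z m y)
      _ = (D + D') * ω z r ^ ρ * (z - r) * ‖y‖ := by ring
      _ ≤ _ := by gcongr
  have hlim : Tendsto (fun ε : ℝ => expBd lam T ^ 2 * ((D + D') * ε) * (t - s) * ‖x‖) (𝓝[>] 0)
      (𝓝 (expBd lam T ^ 2 * ((D + D') * 0) * (t - s) * ‖x‖)) := by
    refine Tendsto.mono_left (Continuous.tendsto ?_ 0) nhdsWithin_le_nhds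
    fun_prop
  have h := ge_of_tendsto hlim (by
    filter_upwards [self_mem_nhdsWithin] with ε hpos
    exact key ε hpos)
  rw [mul_zero, mul_zero, zero_mul, zero_mul] at h
  exact sub_eq_zero.1 (norm_le_zero_iff.1 h)

end Setup

/-- **Theorem 2.8 (Tanabe/Sobolevskii)**, construction of the propagator.
`X₁ ⊆ X₀` are reflexive Banach spaces (embedding `J`, dense, `‖Jx‖₀ ≤ ‖x‖₁`).
`L t : X₁ → X₀` generates, for each frozen time `s`, a semigroup `e^{τ L_s}` acting on `X₀`
(as `P s τ`) and on `X₁` (as `Q s τ`), satisfying the bounds (i)–(iv).  Then there is a unique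
two-parameter family `S` (on `X₀`, restricting to `S₁` on `X₁`) satisfying (P1)–(P4) together
with the Tanabe approximation property (P0); if moreover `∫_s^t ω(r,s)^ρ/(r-s) dr < ∞`
then `S_{t,s}` maps `X₀` into `X₁` with `|S_{t,s}|_{L(X₀,X₁)} ≤ N_T (t-s)⁻¹`. -/
theorem tanabe_sobolevskii_propagator
    {X₀ X₁ : Type*}
    [NormedAddCommGroup X₀] [NormedSpace ℝ X₀] [CompleteSpace X₀]
    [NormedAddCommGroup X₁] [NormedSpace ℝ X₁] [CompleteSpace X₁]
    (hrefl₀ : Function.Surjective (NormedSpace.inclusionInDoubleDual ℝ X₀))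
    (hrefl₁ : Function.Surjective (NormedSpace.inclusionInDoubleDual ℝ X₁))
    (J : X₁ →L[ℝ] X₀) (hJinj : Function.Injective J) (hJdense : DenseRange J)
    (hJle : ∀ x : X₁, ‖J x‖ ≤ ‖x‖)
    (T : ℝ) (hT : 0 < T)
    (L : ℝ → X₁ →L[ℝ] X₀)
    -- the frozen-coefficient semigroups `e^{τ L_s}`, on `X₀` and on `X₁`
    (P : ℝ → ℝ → X₀ →L[ℝ] X₀) (Q : ℝ → ℝ → X₁ →L[ℝ] X₁)
    (hPQ : ∀ s, 0 ≤ s → s ≤ T → ∀ τ, 0 ≤ τ → (P s τ).comp J = J.comp (Q s τ))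
    (hP0 : ∀ s, 0 ≤ s → s ≤ T → P s 0 = ContinuousLinearMap.id ℝ X₀)
    (hPsg : ∀ s, 0 ≤ s → s ≤ T → ∀ τ σ, 0 ≤ τ → 0 ≤ σ → P s (τ + σ) = (P s τ).comp (P s σ))
    (hPcont : ∀ s, 0 ≤ s → s ≤ T → ∀ x : X₀, ContinuousOn (fun τ => P s τ x) (Set.Ici 0))
    (hQ0 : ∀ s, 0 ≤ s → s ≤ T → Q s 0 = ContinuousLinearMap.id ℝ X₁)
    (hQsg : ∀ s, 0 ≤ s → s ≤ T → ∀ τ σ, 0 ≤ τ → 0 ≤ σ → Q s (τ + σ) = (Q s τ).comp (Q s σ))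
    (hQcont : ∀ s, 0 ≤ s → s ≤ T → ∀ x : X₁, ContinuousOn (fun τ => Q s τ x) (Set.Ici 0))
    -- the generator of `e^{τ L_s}` restricts to `L s` on `X₁`
    (hgen : ∀ s, 0 ≤ s → s ≤ T → ∀ (x : X₁) (τ : ℝ), 0 ≤ τ →
      HasDerivWithinAt (fun r => P s r (J x)) (L s (Q s τ x)) (Set.Ici 0) τ)
    (lam C ρ : ℝ) (hC : 0 < C) (hρ₀ : 0 < ρ) (hρ₁ : ρ ≤ 1)
    (ω : ℝ → ℝ → ℝ) (hω : IsControl 0 T ω)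
    -- (i) exponential bounds on `X₀` and `X₁`
    (hPbdd : ∀ s, 0 ≤ s → s ≤ T → ∀ τ, 0 ≤ τ → ‖P s τ‖ ≤ Real.exp (lam * τ))
    (hQbdd : ∀ s, 0 ≤ s → s ≤ T → ∀ τ, 0 ≤ τ → ‖Q s τ‖ ≤ Real.exp (lam * τ))
    -- (ii) `|e^{τL_s} - id|_{L(X₁,X₀)} ≤ Cτ` and `|e^{τL_s}|_{L(X₀,X₁)} ≤ C τ⁻¹`
    (hPid : ∀ s, 0 ≤ s → s ≤ T → ∀ τ, 0 ≤ τ → ‖(P s τ).comp J - J‖ ≤ C * τ)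
    (hPsm : ∀ s, 0 ≤ s → s ≤ T → ∀ τ, 0 < τ → ∃ R : X₀ →L[ℝ] X₁,
      J.comp R = P s τ ∧ ‖R‖ ≤ C / τ)
    -- (iii) `|L t - L s|_{L(X₁,X₀)} ≤ ω(t,s)^ρ`
    (hLdiff : ∀ s t, Mem2 0 T s t → ‖L t - L s‖ ≤ ω t s ^ ρ)
    -- (iv) perturbation estimate for the frozen semigroups
    (hPpert : ∀ s u, Mem2 0 T s u → ∀ τ, 0 < τ →
      ‖(P s τ).comp J - (P u τ).comp J‖ ≤ C * τ * ω u s ^ ρ) :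
    ∃ (S : ℝ → ℝ → X₀ →L[ℝ] X₀) (S₁ : ℝ → ℝ → X₁ →L[ℝ] X₁),
      -- `S` restricts to `S₁` on `X₁`
      (∀ s t, Mem2 0 T s t → (S t s).comp J = J.comp (S₁ t s)) ∧
      -- (P1) strong continuity and exponential bounds
      (∀ x : X₀, ContinuousOn (fun q : ℝ × ℝ => S q.1 q.2 x) {q : ℝ × ℝ | Mem2 0 T q.2 q.1}) ∧
      (∀ s t, Mem2 0 T s t →
        ‖S t s‖ ≤ Real.exp (lam * (t - s)) ∧ ‖S₁ t s‖ ≤ Real.exp (lam * (t - s))) ∧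
      -- (P2) identity and multiplicativity
      (∀ t, 0 ≤ t → t ≤ T → S t t = ContinuousLinearMap.id ℝ X₀) ∧
      (∀ s u t, Mem3 0 T s u t → S t s = (S t u).comp (S u s)) ∧
      -- (P3)
      (∃ CT : ℝ, ∀ s t, Mem2 0 T s t → ‖(S t s).comp J - J‖ ≤ CT * (t - s)) ∧
      -- (P4) differentiability in `t` and in `s`
      (∀ (x : X₁) (s t : ℝ), Mem2 0 T s t →
        HasDerivWithinAt (fun r => S r s (J x)) (L t (S₁ t s x)) (Set.Icc s T) t ∧
        HasDerivWithinAt (fun r => S t r (J x)) (-(S t s (L s x))) (Set.Icc 0 t) s) ∧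
      -- (P0) Tanabe approximation by the frozen semigroup
      (∃ C' : ℝ, ∀ s t, Mem2 0 T s t →
        ‖(S t s).comp J - (P s (t - s)).comp J‖ ≤ C' * (t - s) * ω t s ^ ρ) ∧
      -- uniqueness: any map satisfying (P1), (P2) and (P0) agrees with `S`
      (∀ (S' : ℝ → ℝ → X₀ →L[ℝ] X₀) (S₁' : ℝ → ℝ → X₁ →L[ℝ] X₁),
        (∀ s t, Mem2 0 T s t → (S' t s).comp J = J.comp (S₁' t s)) →
        (∀ x : X₀, ContinuousOn (fun q : ℝ × ℝ => S' q.1 q.2 x)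
          {q : ℝ × ℝ | Mem2 0 T q.2 q.1}) →
        (∀ s t, Mem2 0 T s t →
          ‖S' t s‖ ≤ Real.exp (lam * (t - s)) ∧ ‖S₁' t s‖ ≤ Real.exp (lam * (t - s))) →
        (∀ t, 0 ≤ t → t ≤ T → S' t t = ContinuousLinearMap.id ℝ X₀) →
        (∀ s u t, Mem3 0 T s u t → S' t s = (S' t u).comp (S' u s)) →
        (∃ C' : ℝ, ∀ s t, Mem2 0 T s t →
          ‖(S' t s).comp J - (P s (t - s)).comp J‖ ≤ C' * (t - s) * ω t s ^ ρ) →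
        ∀ s t, Mem2 0 T s t → S' t s = S t s ∧ S₁' t s = S₁ t s) ∧
      -- parabolic smoothing under the Kato condition (L4)
      ((∀ s t, Mem2 0 T s t →
          MeasureTheory.IntegrableOn (fun r => ω r s ^ ρ / (r - s)) (Set.Ioc s t)) →
        ∃ NT : ℝ, ∀ s t, Mem2 0 T s t → s < t →
          ∃ R : X₀ →L[ℝ] X₁, J.comp R = S t s ∧ ‖R‖ ≤ NT / (t - s)) := by
  have H : Setup J T L P Q lam C ρ ω :=
    ⟨hrefl₁, hJinj, hJdense, hT, hC, hρ₀, hω, hPQ, hP0, hPsg, hPcont, hQ0, hQsg, hgen, hPbdd,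
      hQbdd, hPid, hPsm, hPpert⟩
  obtain ⟨S, S₁, E, hexp, hS⟩ := H.exists_propagator
  have hM : 0 < expBd lam T := expBd_pos _ _
  have hK : 0 ≤ C * expBd lam T := by positivity
  have hD : 0 ≤ expBd lam T ^ 2 * C := by positivity
  refine ⟨S, S₁, ?_, E.continuousOn hM hK hJdense, hexp, ?_, ?_, ⟨C * expBd lam T, ?_⟩, ?_,
    ⟨expBd lam T ^ 2 * C, ?_⟩, ?_, fun _ => H.smoothing hD hK E hS⟩
  · intro s t h
    ext x
    exact E.inter s t h x
  · intro t h0 h1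
    ext x
    exact E.one t h0 h1 x
  · intro s u t h
    ext x
    exact E.mul s u t h x
  · intro s t h
    exact ContinuousLinearMap.opNorm_le_bound _ (mul_nonneg hK (sub_nonneg.2 h.2.1))
      fun x => E.lip s t h x
  · intro x s t h
    exact ⟨H.deriv_t hD E hS h x, H.deriv_s hD hK E hS h x⟩
  · intro s t h
    exact ContinuousLinearMap.opNorm_le_bound _
      (mul_nonneg (mul_nonneg hD (sub_nonneg.2 h.2.1)) (H.omega_pow_nonneg t s))
      fun x => hS s t h x
  · intro S' S₁' hrestr _ hbd hone hmul ⟨C', hC'⟩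
    have hrestr' : ∀ s t, Mem2 0 T s t → ∀ x, S' t s (J x) = J (S₁' t s x) := fun s t h x =>
      congrArg (fun A : X₁ →L[ℝ] X₀ => A x) (hrestr s t h)
    have hS' : ∀ s t, Mem2 0 T s t → ∀ x, ‖S' t s (J x) - P s (t - s) (J x)‖ ≤
        |C'| * (t - s) * ω t s ^ ρ * ‖x‖ := by
      intro s t h x
      have h0 : 0 ≤ t - s := sub_nonneg.2 h.2.1
      have h1 := H.omega_pow_nonneg t s
      refine (((S' t s).comp J - (P s (t - s)).comp J).le_of_opNorm_le (hC' s t h) x).trans ?_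
      gcongr
      exact le_abs_self _
    -- a Lipschitz constant common to both families
    set K := C * expBd lam T + C + |C'| * ω T 0 ^ ρ with hKdef
    have hω0 := H.omega_pow_nonneg T 0
    have hK' : 0 ≤ K := by positivity
    have E1 : IsEvo J T (expBd lam T) K S S₁ :=
      ⟨E.inter, E.bd, E.bd₁, E.one, E.mul, fun s t h x => (E.lip s t h x).trans (by
        have h0 : 0 ≤ t - s := sub_nonneg.2 h.2.1
        have h1 : 0 ≤ |C'| * ω T 0 ^ ρ := by positivity
        gcongr
        linarith)⟩
    have E2 : IsEvo J T (expBd lam T) K S' S₁' := by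
      refine ⟨hrestr', ?_, ?_, ?_, ?_, ?_⟩
      · intro s t h x
        exact (S' t s).le_of_opNorm_le ((hbd s t h).1.trans
          (exp_le_expBd (sub_nonneg.2 h.2.1) (by linarith [h.1, h.2.2]))) x
      · intro s t h x
        exact (S₁' t s).le_of_opNorm_le ((hbd s t h).2.trans
          (exp_le_expBd (sub_nonneg.2 h.2.1) (by linarith [h.1, h.2.2]))) x
      · intro t h0 h1 x
        rw [hone t h0 h1]
        rfl
      · intro s u t h x
        rw [hmul s u t h]
        rfl
      · intro s t h x
        have h0 : 0 ≤ t - s := sub_nonneg.2 h.2.1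
        have h1 := hS' s t h x
        have h2 := H.P_lip h.1 (h.2.1.trans h.2.2) h0 x
        have h3 := H.omega_pow_mono le_rfl h.1 h.2.1 h.2.2 le_rfl
        calc _ = ‖(S' t s (J x) - P s (t - s) (J x)) + (P s (t - s) (J x) - J x)‖ := by
              congr 1; abel
          _ ≤ _ := norm_add_le _ _
          _ ≤ |C'| * (t - s) * ω T 0 ^ ρ * ‖x‖ + C * (t - s) * ‖x‖ :=
              add_le_add (h1.trans (by gcongr)) h2
          _ = (C + |C'| * ω T 0 ^ ρ) * (t - s) * ‖x‖ := by ring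
          _ ≤ _ := by
              gcongr
              linarith
    intro s t hst
    have heq : ∀ x, S' t s (J x) = S t s (J x) :=
      H.unique_on hK' hD (abs_nonneg C') E1 E2 hS hS' hst
    constructor
    · have := hJdense.equalizer (S' t s).continuous (S t s).continuous (funext heq)
      exact DFunLike.coe_injective this
    · ext x
      apply hJinj
      rw [← hrestr' s t hst, ← E.inter s t hst, heq]

end MultSewing
end
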